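/- arXiv:math/0502270 — 4 statements merged into one kernel-verified Lean document; each statement's English description precedes it below -/
import Mathlib

section
/- Let (W,S) and (W',S') be Coxeter systems, and suppose there exists a group isomorphism φ : W → W' and that (W',S') satisfies: (2') there is no three-element subset {s',t',u'} ⊆ S' such that m'(s',t') and m'(t',u') are both odd. Let {s,t} and T be maximal spherical subsets of S with m(s,t) odd, and let {s',t'} and T' be maximal spherical subsets of S' such that φ(W_{{s,t}}) is conjugate in W' to W'_{{s',t'}} and φ(W_T) is conjugate in W' to W'_{T'}. If {s,t} ∩ T ≠ ∅, then {s',t'} ∩ T' ≠ ∅. -/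
/-- The standard parabolic subgroup `W_T` of a Coxeter system, generated by the
simple reflections indexed by `T`. -/
def CoxeterSystem.parabolic {B W : Type*} [Group W] {M : CoxeterMatrix B}
    (cs : CoxeterSystem M W) (T : Set B) : Subgroup W :=
  Subgroup.closure (cs.simple '' T)

/-- `T` is a spherical subset: the parabolic subgroup `W_T` is finite. -/
def CoxeterSystem.IsSpherical {B W : Type*} [Group W] {M : CoxeterMatrix B}
    (cs : CoxeterSystem M W) (T : Set B) : Prop :=
  Finite (cs.parabolic T)

/-- `T` is a maximal spherical subset: spherical and maximal under inclusion
among spherical subsets. -/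
def CoxeterSystem.IsMaxSpherical {B W : Type*} [Group W] {M : CoxeterMatrix B}
    (cs : CoxeterSystem M W) (T : Set B) : Prop :=
  cs.IsSpherical T ∧ ∀ U : Set B, cs.IsSpherical U → T ⊆ U → U = T

/-- The conjugate subgroup `g H g⁻¹`. -/
def conjSubgroup {G : Type*} [Group G] (g : G) (H : Subgroup G) : Subgroup G :=
  Subgroup.map (MulAut.conj g).toMonoidHom H

/-!
Let `C = {s', t'}`. If no odd label joins `C` to its complement, there is a character
`χ : W' → {±1}` sending the simple reflections in `C` to `-1` and all others to `1`. As `st` has odd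
order, `χ ∘ φ` agrees on `s` and `t`; as `χ` is nontrivial on `W'_C`, the common value is `-1`. If
`T` meets `{s, t}`, it follows that `χ` is nontrivial on a conjugate of `W'_{T'}`, hence on
`W'_{T'}`, so that `T'` meets `C`.

That no odd label leaves `C` is the maximality of `{s'}` if `s' = t'`, since an odd edge spans a
finite dihedral group. If `s' ≠ t'`, it follows from condition (2'), once `s't'` is known to have
odd order. This holds because `s'` and `t'` are conjugate into the dihedral group `φ(W_{s,t})`,
where the rotations have odd order: an involution there is a reflection, and a product of two
reflections is a rotation.
-/

section Involutions

variable {G : Type*}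

lemma eq_one_of_sq_eq_one_of_odd_orderOf [Monoid G] {x : G} (hx : x ^ 2 = 1)
    (hodd : Odd (orderOf x)) : x = 1 :=
  orderOf_eq_one_iff.1 <|
    (Nat.coprime_two_right.2 hodd).eq_one_of_dvd (orderOf_dvd_of_pow_eq_one hx)

variable [Group G]

lemma map_eq_map_of_odd_orderOf_mul (χ : G →* ℤˣ) {x y : G} (hodd : Odd (orderOf (x * y))) :
    χ x = χ y := by
  have hχ : χ x * χ y = 1 := by
    rw [← map_mul]
    exact eq_one_of_sq_eq_one_of_odd_orderOf (Int.units_sq _)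
      (hodd.of_dvd_nat (orderOf_map_dvd χ _))
  rw [eq_inv_of_mul_eq_one_left hχ, Int.units_inv_eq_self]

variable {a b c d : G}

lemma mem_zpowers_or_mul_mem_zpowers_of_mem_closure_pair (ha : a ^ 2 = 1) (hb : b ^ 2 = 1) {x : G}
    (hx : x ∈ Subgroup.closure {a, b}) :
    x ∈ Subgroup.zpowers (a * b) ∨ a * x ∈ Subgroup.zpowers (a * b) := by
  have ha' : a⁻¹ = a := inv_eq_of_mul_eq_one_left (sq a ▸ ha)
  have hb' : b⁻¹ = b := inv_eq_of_mul_eq_one_left (sq b ▸ hb)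
  have hmul : ∀ g ∈ ({a, b} : Set G), ∀ y : G,
      y ∈ Subgroup.zpowers (a * b) ∨ a * y ∈ Subgroup.zpowers (a * b) →
      g * y ∈ Subgroup.zpowers (a * b) ∨ a * (g * y) ∈ Subgroup.zpowers (a * b) := by
    rintro g (rfl | rfl) y (hy | hy)
    · exact Or.inr (by rwa [← mul_assoc, ← sq, ha, one_mul])
    · exact Or.inl hy
    · exact Or.inr (by simpa only [mul_assoc] using mul_mem (Subgroup.mem_zpowers (a * g)) hy)
    · have hgy : g * y = (a * g)⁻¹ * (a * y) := by
        rw [mul_inv_rev, hb', mul_assoc, inv_mul_cancel_left]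
      exact Or.inl (hgy ▸ mul_mem (inv_mem (Subgroup.mem_zpowers _)) hy)
  induction hx using Subgroup.closure_induction_left with
  | one => exact Or.inl (one_mem _)
  | mul_left g hg y _ ih => exact hmul g hg y ih
  | inv_mul_cancel g hg y _ ih =>
    have hg' : g⁻¹ = g := by rcases hg with rfl | rfl <;> assumption
    rw [hg']
    exact hmul g hg y ih

lemma finite_closure_pair (ha : a ^ 2 = 1) (hb : b ^ 2 = 1) (hab : IsOfFinOrder (a * b)) :
    Finite (Subgroup.closure {a, b}) := by
  have hrot : (Subgroup.zpowers (a * b) : Set G).Finite := hab.finite_zpowers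
  have hrefl : ((a * ·) ⁻¹' (Subgroup.zpowers (a * b) : Set G)).Finite :=
    hrot.preimage (mul_right_injective a).injOn
  exact (hrot.union hrefl).subset fun _ hx =>
    mem_zpowers_or_mul_mem_zpowers_of_mem_closure_pair ha hb hx

lemma mul_mem_zpowers_of_mem_closure_pair (ha : a ^ 2 = 1) (hb : b ^ 2 = 1)
    (hodd : Odd (orderOf (a * b))) (hc : c ^ 2 = 1) (hc1 : c ≠ 1)
    (hcmem : c ∈ Subgroup.closure {a, b}) : a * c ∈ Subgroup.zpowers (a * b) :=
  (mem_zpowers_or_mul_mem_zpowers_of_mem_closure_pair ha hb hcmem).resolve_left fun hrot =>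
    hc1 (eq_one_of_sq_eq_one_of_odd_orderOf hc (hodd.of_dvd_nat (orderOf_dvd_of_mem_zpowers hrot)))

lemma odd_orderOf_mul_of_mem_closure_pair (ha : a ^ 2 = 1) (hb : b ^ 2 = 1)
    (hodd : Odd (orderOf (a * b))) (hc : c ^ 2 = 1) (hc1 : c ≠ 1) (hd : d ^ 2 = 1) (hd1 : d ≠ 1)
    (hcmem : c ∈ Subgroup.closure {a, b}) (hdmem : d ∈ Subgroup.closure {a, b}) :
    Odd (orderOf (c * d)) := by
  have hcd : c * d = (a * c)⁻¹ * (a * d) := by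
    rw [mul_inv_rev, mul_assoc, inv_mul_cancel_left, inv_eq_of_mul_eq_one_left (sq c ▸ hc)]
  have hrot : c * d ∈ Subgroup.zpowers (a * b) :=
    hcd ▸ mul_mem (inv_mem (mul_mem_zpowers_of_mem_closure_pair ha hb hodd hc hc1 hcmem))
      (mul_mem_zpowers_of_mem_closure_pair ha hb hodd hd hd1 hdmem)
  exact hodd.of_dvd_nat (orderOf_dvd_of_mem_zpowers hrot)

end Involutions

lemma conjSubgroup_le_iff_of_normal {G : Type*} [Group G] {g : G} {H N : Subgroup G} [N.Normal] :
    conjSubgroup g H ≤ N ↔ H ≤ N := by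
  have hN : conjSubgroup g N = N := Subgroup.Normal.map_conj_eq N g
  calc conjSubgroup g H ≤ N ↔ conjSubgroup g H ≤ conjSubgroup g N := by rw [hN]
    _ ↔ H ≤ N := Subgroup.map_le_map_iff_of_injective (MulAut.conj g).injective

section Coxeter

variable {B W : Type*} [Group W] {M : CoxeterMatrix B} (cs : CoxeterSystem M W)

lemma simple_ne_one (i : B) : cs.simple i ≠ 1 := fun h => by
  simpa only [h, cs.length_one, zero_ne_one] using cs.length_simple i

lemma orderOf_simple_mul_simple_comm (i j : B) :
    orderOf (cs.simple i * cs.simple j) = orderOf (cs.simple j * cs.simple i) := by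
  rw [← orderOf_inv, mul_inv_rev, cs.inv_simple, cs.inv_simple]

lemma simple_mem_parabolic {T : Set B} {i : B} (hi : i ∈ T) : cs.simple i ∈ cs.parabolic T :=
  Subgroup.subset_closure (Set.mem_image_of_mem _ hi)

lemma parabolic_le_iff {T : Set B} {H : Subgroup W} :
    cs.parabolic T ≤ H ↔ ∀ i ∈ T, cs.simple i ∈ H := by
  rw [CoxeterSystem.parabolic, Subgroup.closure_le, Set.image_subset_iff]
  rfl

lemma parabolic_pair (i j : B) :
    cs.parabolic {i, j} = Subgroup.closure {cs.simple i, cs.simple j} := by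
  rw [CoxeterSystem.parabolic, Set.image_pair]

lemma isSpherical_pair_of_odd_orderOf {i j : B}
    (hodd : Odd (orderOf (cs.simple i * cs.simple j))) : cs.IsSpherical {i, j} := by
  rw [CoxeterSystem.IsSpherical, parabolic_pair]
  exact finite_closure_pair (cs.simple_sq i) (cs.simple_sq j) (orderOf_pos_iff.1 hodd.pos)

/-- `C` is a union of connected components of the odd Coxeter graph, in which two vertices are
joined when the product of the corresponding simple reflections has odd order. -/
def IsOddClosed (C : Set B) : Prop :=
  ∀ i ∈ C, ∀ j, Odd (orderOf (cs.simple i * cs.simple j)) → j ∈ C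

variable {cs}

lemma IsOddClosed.exists_character {C : Set B} (hC : IsOddClosed cs C) :
    ∃ χ : W →* ℤˣ, ∀ i, χ (cs.simple i) = -1 ↔ i ∈ C := by
  classical
  have hlift : M.IsLiftable fun i => if i ∈ C then (-1 : ℤˣ) else 1 := by
    intro i j
    rcases Nat.even_or_odd (M i j) with heven | hodd
    · obtain ⟨m, hm⟩ := heven.two_dvd
      rw [hm, pow_mul, Int.units_sq, one_pow]
    · have hodd' : Odd (orderOf (cs.simple i * cs.simple j)) :=
        hodd.of_dvd_nat (orderOf_dvd_of_pow_eq_one (cs.simple_mul_simple_pow i j))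
      have hij : i ∈ C ↔ j ∈ C :=
        ⟨fun hi => hC i hi j hodd',
          fun hj => hC j hj i (orderOf_simple_mul_simple_comm cs i j ▸ hodd')⟩
      simp only [hij, Int.units_mul_self, one_pow]
  refine ⟨cs.lift ⟨_, hlift⟩, fun i => ?_⟩
  rw [cs.lift_apply_simple hlift]
  by_cases hi : i ∈ C <;> simp [hi]

lemma isOddClosed_singleton {i : B} (hmax : cs.IsMaxSpherical {i}) : IsOddClosed cs {i} := by
  rintro _ rfl j hodd
  rw [← hmax.2 _ (isSpherical_pair_of_odd_orderOf cs hodd) (by simp)]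
  simp

lemma isOddClosed_pair
    (h2 : ¬ ∃ i j k : B, i ≠ j ∧ j ≠ k ∧ i ≠ k ∧
      Odd (orderOf (cs.simple i * cs.simple j)) ∧ Odd (orderOf (cs.simple j * cs.simple k)))
    {s t : B} (hst : s ≠ t) (hodd : Odd (orderOf (cs.simple s * cs.simple t))) :
    IsOddClosed cs {s, t} := by
  intro i hi j hij
  by_contra hj
  obtain ⟨hjs, hjt⟩ : j ≠ s ∧ j ≠ t := by simpa using hj
  rcases hi with rfl | rfl
  · exact h2 ⟨j, i, t, hjs, hst, hjt, orderOf_simple_mul_simple_comm cs i j ▸ hij, hodd⟩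
  · exact h2 ⟨s, i, j, hst, hjt.symm, hjs.symm, hodd, hij⟩

variable (cs) {B' W' : Type*} [Group W'] {M' : CoxeterMatrix B'} {cs' : CoxeterSystem M' W'}

lemma IsOddClosed.inter_nonempty {C : Set B'} (hC : IsOddClosed cs' C) (hCne : C.Nonempty)
    (φ : W →* W') {s t : B} (hodd : Odd (orderOf (cs.simple s * cs.simple t))) {T : Set B}
    {T' : Set B'}
    (hconj1 : ∃ w, conjSubgroup w (cs'.parabolic C) ≤ (cs.parabolic {s, t}).map φ)
    (hconj2 : ∃ w, (cs.parabolic T).map φ ≤ conjSubgroup w (cs'.parabolic T'))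
    (hne : (({s, t} : Set B) ∩ T).Nonempty) : (C ∩ T').Nonempty := by
  obtain ⟨χ, hχ⟩ := hC.exists_character
  obtain ⟨w, hw⟩ := hconj1
  obtain ⟨v, hv⟩ := hconj2
  obtain ⟨x, hx, hxT⟩ := hne
  by_contra hdisj
  have hT' : cs'.parabolic T' ≤ χ.ker := (parabolic_le_iff cs').2 fun i hi =>
    (Int.units_eq_one_or _).resolve_right fun h => hdisj ⟨i, (hχ i).1 h, hi⟩
  have hT : (cs.parabolic T).map φ ≤ χ.ker := hv.trans (conjSubgroup_le_iff_of_normal.2 hT')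
  have hχx : χ (φ (cs.simple x)) = 1 :=
    hT (Subgroup.mem_map_of_mem φ (simple_mem_parabolic cs hxT))
  have hχst : χ (φ (cs.simple s)) = χ (φ (cs.simple t)) :=
    map_eq_map_of_odd_orderOf_mul (χ.comp φ) hodd
  have hst : (cs.parabolic {s, t}).map φ ≤ χ.ker := by
    rw [Subgroup.map_le_iff_le_comap, parabolic_le_iff]
    change ∀ i ∈ ({s, t} : Set B), χ (φ (cs.simple i)) = 1
    rcases hx with rfl | rfl <;> simp [← hχst, hχx, hχst ▸ hχx]
  have hC' : cs'.parabolic C ≤ χ.ker := conjSubgroup_le_iff_of_normal.1 (hw.trans hst)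
  obtain ⟨i, hi⟩ := hCne
  have hχi : χ (cs'.simple i) = 1 := hC' (simple_mem_parabolic cs' hi)
  exact absurd (((hχ i).2 hi).symm.trans hχi) (by decide)

variable (cs')

lemma odd_orderOf_of_conjSubgroup_parabolic_pair_le (φ : W →* W') {s t : B}
    (hodd : Odd (orderOf (cs.simple s * cs.simple t))) {s' t' : B'} {w : W'}
    (hw : conjSubgroup w (cs'.parabolic {s', t'}) ≤ (cs.parabolic {s, t}).map φ) :
    Odd (orderOf (cs'.simple s' * cs'.simple t')) := by
  have hmem : ∀ i ∈ ({s', t'} : Set B'), MulAut.conj w (cs'.simple i) ∈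
      Subgroup.closure {φ (cs.simple s), φ (cs.simple t)} := fun i hi => by
    rw [← Set.image_pair φ, ← MonoidHom.map_closure, ← parabolic_pair]
    exact hw (Subgroup.mem_map_of_mem _ (simple_mem_parabolic cs' hi))
  have hsq : ∀ i, φ (cs.simple i) ^ 2 = 1 := fun i => by rw [← map_pow, cs.simple_sq, map_one]
  have hsq' : ∀ i, MulAut.conj w (cs'.simple i) ^ 2 = 1 := fun i => by
    rw [← map_pow, cs'.simple_sq, map_one]
  have hne' : ∀ i, MulAut.conj w (cs'.simple i) ≠ 1 := fun i =>
    (MulAut.conj w).map_ne_one_iff.2 (simple_ne_one cs' i)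
  have hoddφ : Odd (orderOf (φ (cs.simple s) * φ (cs.simple t))) := by
    rw [← map_mul]
    exact hodd.of_dvd_nat (orderOf_map_dvd φ _)
  rw [← (MulAut.conj w).orderOf_eq, map_mul]
  exact odd_orderOf_mul_of_mem_closure_pair (hsq s) (hsq t) hoddφ (hsq' s') (hne' s') (hsq' t')
    (hne' t') (hmem s' (by simp)) (hmem t' (by simp))

theorem inter_nonempty_of_conj_general (φ : W →* W')
    (h2' : ¬ ∃ i j k : B', i ≠ j ∧ j ≠ k ∧ i ≠ k ∧
      Odd (orderOf (cs'.simple i * cs'.simple j)) ∧ Odd (orderOf (cs'.simple j * cs'.simple k)))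
    {s t : B} (hodd : Odd (orderOf (cs.simple s * cs.simple t))) {T : Set B}
    {s' t' : B'} (hstmax' : cs'.IsMaxSpherical {s', t'}) {T' : Set B'}
    (hconj1 : ∃ w, conjSubgroup w (cs'.parabolic {s', t'}) ≤ (cs.parabolic {s, t}).map φ)
    (hconj2 : ∃ w, (cs.parabolic T).map φ ≤ conjSubgroup w (cs'.parabolic T'))
    (hne : (({s, t} : Set B) ∩ T).Nonempty) :
    (({s', t'} : Set B') ∩ T').Nonempty := by
  have hC : IsOddClosed cs' {s', t'} := by
    by_cases hst' : s' = t'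
    · subst hst'
      rw [Set.pair_eq_singleton] at hstmax' ⊢
      exact isOddClosed_singleton hstmax'
    · obtain ⟨w, hw⟩ := hconj1
      exact isOddClosed_pair h2' hst'
        (odd_orderOf_of_conjSubgroup_parabolic_pair_le cs cs' φ hodd hw)
  exact hC.inter_nonempty cs (Set.insert_nonempty _ _) φ hodd hconj1 hconj2 hne

end Coxeter

/-- Let `φ : W → W'` be an isomorphism of Coxeter groups, where `(W',S')` satisfies
condition (2'). Let `{s,t}` and `T` be maximal spherical subsets of `S` with `m(s,t)` odd,
and let `{s',t'}` and `T'` be maximal spherical subsets of `S'` with `φ(W_{{s,t}})`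
conjugate to `W'_{{s',t'}}` and `φ(W_T)` conjugate to `W'_{T'}`. If `{s,t} ∩ T ≠ ∅`,
then `{s',t'} ∩ T' ≠ ∅`. -/
theorem inter_nonempty_of_conj {B B' : Type*} [Fintype B] [Fintype B']
    {W W' : Type*} [Group W] [Group W']
    {M : CoxeterMatrix B} (cs : CoxeterSystem M W)
    {M' : CoxeterMatrix B'} (cs' : CoxeterSystem M' W')
    (φ : W ≃* W')
    (h2' : ¬ ∃ i j k : B', i ≠ j ∧ j ≠ k ∧ i ≠ k ∧
      Odd (orderOf (cs'.simple i * cs'.simple j)) ∧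
      Odd (orderOf (cs'.simple j * cs'.simple k)))
    (s t : B) (hst : s ≠ t) (hodd : Odd (orderOf (cs.simple s * cs.simple t)))
    (hstmax : cs.IsMaxSpherical {s, t})
    (T : Set B) (hT : cs.IsMaxSpherical T)
    (s' t' : B') (hstmax' : cs'.IsMaxSpherical {s', t'})
    (T' : Set B') (hT' : cs'.IsMaxSpherical T')
    (hconj1 : ∃ w' : W', Subgroup.map φ.toMonoidHom (cs.parabolic {s, t})
      = conjSubgroup w' (cs'.parabolic {s', t'}))
    (hconj2 : ∃ w' : W', Subgroup.map φ.toMonoidHom (cs.parabolic T)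
      = conjSubgroup w' (cs'.parabolic T'))
    (hne : (({s, t} : Set B) ∩ T).Nonempty) :
    (({s', t'} : Set B') ∩ T').Nonempty := by
  exact inter_nonempty_of_conj_general cs cs' φ.toMonoidHom h2' hodd hstmax'
    (hconj1.imp fun _ h => h.ge) (hconj2.imp fun _ h => h.le) hne
end

section
/- Let (W,S) be a Coxeter system satisfying: (0) for all s,t ∈ S with m(s,t) even, m(s,t) = 2; (1) for all s ≠ t ∈ S with m(s,t) odd, {s,t} is a maximal spherical subset of S; (2) there is no three-element subset {s,t,u} ⊆ S such that m(s,t) and m(t,u) are both odd; (3) for all s ≠ t ∈ S with m(s,t) odd, the number of maximal spherical subsets of S intersecting {s,t} is at most two. Let (W',S') be a Coxeter system and suppose there exists a group isomorphism φ : W → W'. Then for each s',t' ∈ S' with m'(s',t') even, m'(s',t') = 2. -/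
open CoxeterSystem Polynomial Polynomial.Chebyshev

section Descents

variable {B W : Type*} [Group W] {M : CoxeterMatrix B} {cs : CoxeterSystem M W}

theorem exists_eq_mul_alternatingWord {w : W} {i : B} (j : B) (hi : ¬cs.IsRightDescent w i) :
    ∃ (v : W) (k : ℕ), w = v * cs.wordProd (alternatingWord i j k) ∧
      cs.length w = cs.length v + k ∧ ¬cs.IsRightDescent v i ∧ ¬cs.IsRightDescent v j := by
  induction hn : cs.length w using Nat.strong_induction_on generalizing w i j with | _ n ih
  by_cases hj : cs.IsRightDescent w j
  · obtain ⟨v, k, hw, hlen, hvj, hvi⟩ :=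
      ih _ (hn ▸ hj) i (cs.isRightDescent_iff_not_isRightDescent_mul.mp hj) rfl
    refine ⟨v, k + 1, ?_, ?_, hvi, hvj⟩
    · rw [alternatingWord_succ, wordProd_concat, ← mul_assoc, ← hw, simple_mul_simple_cancel_right]
    · have := cs.isRightDescent_iff.mp hj
      lia
  · exact ⟨w, 0, by simp [alternatingWord], by simpa using hn.symm, hi, hj⟩

theorem lt_of_length_mul_alternatingWord {v : W} {i j : B} {k : ℕ} (hM : M i j ≠ 0)
    (hlen : cs.length (v * cs.wordProd (alternatingWord i j k)) = cs.length v + k)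
    (hi : ¬cs.IsRightDescent (v * cs.wordProd (alternatingWord i j k)) i) : k < M i j := by
  have hred : cs.IsReduced (alternatingWord i j k) := by
    have hmul := cs.length_mul_le v (cs.wordProd (alternatingWord i j k))
    have hword := cs.length_wordProd_le (alternatingWord i j k)
    rw [CoxeterSystem.IsReduced]
    rw [length_alternatingWord] at hword ⊢
    lia
  have hle : k ≤ M i j := not_lt.mp fun hlt ↦ cs.not_isReduced_alternatingWord i j hM hlt hred
  refine hle.lt_of_ne fun hk ↦ hi ?_
  -- By the braid relation the alternating word of length `m(i, j)` may also be made to end in `i`.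
  obtain ⟨m, hm⟩ := Nat.exists_eq_succ_of_ne_zero hM
  have hbraid : cs.wordProd (alternatingWord i j k) =
      cs.wordProd (alternatingWord i j m) * cs.simple i := by
    rw [hk, cs.wordProd_braidWord_eq, braidWord, M.symmetric, hm, alternatingWord_succ,
      wordProd_concat]
  rw [IsRightDescent, hlen, hbraid, mul_assoc, simple_mul_simple_cancel_right]
  calc cs.length (v * cs.wordProd (alternatingWord i j m))
    _ ≤ cs.length v + cs.length (cs.wordProd (alternatingWord i j m)) := cs.length_mul_le ..
    _ ≤ cs.length v + m := by
      gcongr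
      simpa using cs.length_wordProd_le (alternatingWord i j m)
    _ < cs.length v + k := by lia

end Descents

noncomputable section

namespace GeometricRepresentation

section Reflections

variable {B : Type*} (M : CoxeterMatrix B)

/-- The negative of the Gram matrix of the simple roots, which are normalised to have square `2`.
Since `M i j = 0` encodes `m(i, j) = ∞` and `π / 0 = 0`, it takes the intended value `2` there. -/
def coef (i j : B) : ℝ := 2 * Real.cos (Real.pi / M i j)

/-- The simple root `α_i`, a basis vector of the space `B →₀ ℝ` of the geometric representation. -/
def root (i : B) : B →₀ ℝ := Finsupp.single i 1

/-- The linear form `⟨α_i, ·⟩`, which is the coroot of `α_i` because `⟨α_i, α_i⟩ = 2`. -/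
def coroot (i : B) : Module.Dual ℝ (B →₀ ℝ) :=
  Finsupp.linearCombination ℝ fun j ↦ -coef M i j

/-- The reflection in the simple root `α_i`. -/
def refl (i : B) : Module.End ℝ (B →₀ ℝ) := Module.preReflection (root i) (coroot M i)

/-- The invariant symmetric bilinear form `⟨·, ·⟩`. -/
def form : (B →₀ ℝ) →ₗ[ℝ] Module.Dual ℝ (B →₀ ℝ) := Finsupp.linearCombination ℝ (coroot M)

theorem coef_self (i : B) : coef M i i = -2 := by simp [coef]

theorem coef_comm (i j : B) : coef M i j = coef M j i := by rw [coef, coef, M.symmetric]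

theorem coroot_root (i j : B) : coroot M i (root j) = -coef M i j := by simp [coroot, root]

theorem coroot_root_self (i : B) : coroot M i (root i) = 2 := by
  rw [coroot_root, coef_self, neg_neg]

theorem form_root (i : B) : form M (root i) = coroot M i := by simp [form, root]

theorem form_comm (u v : B →₀ ℝ) : form M u v = form M v u := by
  suffices form M = (form M).flip from DFunLike.congr_fun (DFunLike.congr_fun this u) v
  ext i j
  simpa [form, coroot] using coef_comm M i j

theorem refl_apply (i : B) (v : B →₀ ℝ) : refl M i v = v - coroot M i v • root i :=
  Module.preReflection_apply ..

theorem refl_root (i j : B) : refl M i (root j) = root j + coef M i j • root i := by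
  rw [refl_apply, coroot_root, neg_smul, sub_neg_eq_add]

theorem refl_root_self (i : B) : refl M i (root i) = -root i :=
  Module.preReflection_apply_self (coroot_root_self M i)

theorem refl_refl (i : B) (v : B →₀ ℝ) : refl M i (refl M i v) = v :=
  Module.involutive_preReflection (coroot_root_self M i) v

theorem refl_mul_refl (i : B) : refl M i * refl M i = 1 := LinearMap.ext (refl_refl M i)

theorem form_refl_refl (i : B) (u v : B →₀ ℝ) :
    form M (refl M i u) (refl M i v) = form M u v := by
  have hu : form M u (root i) = coroot M i u := by rw [form_comm, form_root]
  simp only [refl_apply, map_sub, map_smul, LinearMap.sub_apply, LinearMap.smul_apply, form_root,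
    coroot_root_self, hu, smul_eq_mul]
  ring

theorem prod_map_refl_alternatingWord_root (i j : B) (k : ℕ) :
    ((alternatingWord i j k).map (refl M)).prod (root i) =
      (S ℝ k).eval (coef M i j) • root (if Even k then i else j) +
        (S ℝ (k - 1)).eval (coef M i j) • root (if Even k then j else i) := by
  induction k with
  | zero => simp [alternatingWord]
  | succ k ih =>
    rw [alternatingWord_succ', List.map_cons, List.prod_cons, Module.End.mul_apply, ih]
    push_cast
    rw [add_sub_cancel_right, S_add_one]
    by_cases hk : Even k <;>
    · simp only [hk, if_true, if_false, Nat.even_add_one, not_true, not_false_iff, map_add,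
        map_smul, refl_root, coef_self, coef_comm M j i, eval_sub, eval_mul, eval_X]
      module

theorem two_le_of_ne {i j : B} (hij : i ≠ j) (hM : M i j ≠ 0) : 2 ≤ M i j := by
  have := M.off_diagonal i j hij
  lia

theorem sin_pi_div_pos {i j : B} (hij : i ≠ j) (hM : M i j ≠ 0) :
    0 < Real.sin (Real.pi / M i j) := by
  have hM : (2 : ℝ) ≤ M i j := mod_cast two_le_of_ne M hij hM
  apply Real.sin_pos_of_pos_of_lt_pi (by positivity)
  exact div_lt_self Real.pi_pos (by linarith)

theorem mul_pi_div {i j : B} (hM : M i j ≠ 0) : M i j * (Real.pi / M i j) = Real.pi :=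
  mul_div_cancel₀ _ (Nat.cast_ne_zero.mpr hM)

theorem eval_coef_S_mul_sin (i j : B) (n : ℤ) :
    (S ℝ n).eval (coef M i j) * Real.sin (Real.pi / M i j) =
      Real.sin ((n + 1) * (Real.pi / M i j)) :=
  S_two_mul_real_cos ..

theorem eval_coef_S_nonneg {i j : B} (hij : i ≠ j) {k : ℕ} (hk : M i j = 0 ∨ k ≤ M i j) :
    0 ≤ (S ℝ (k - 1)).eval (coef M i j) := by
  by_cases hM : M i j = 0
  · simp [coef, hM, S_eval_two]
  have hkM : (k : ℝ) ≤ M i j := mod_cast hk.resolve_left hM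
  refine nonneg_of_mul_nonneg_left (b := Real.sin (Real.pi / M i j)) ?_ (sin_pi_div_pos M hij hM)
  rw [eval_coef_S_mul_sin]
  push_cast
  rw [sub_add_cancel]
  apply Real.sin_nonneg_of_nonneg_of_le_pi (by positivity)
  calc k * (Real.pi / M i j) ≤ M i j * (Real.pi / M i j) := by gcongr
    _ = Real.pi := mul_pi_div M hM

theorem eval_coef_S_two_mul {i j : B} (hij : i ≠ j) (hM : M i j ≠ 0) :
    (S ℝ (2 * M i j)).eval (coef M i j) = 1 := by
  refine mul_right_cancel₀ (sin_pi_div_pos M hij hM).ne' ?_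
  rw [eval_coef_S_mul_sin, one_mul]
  push_cast
  rw [add_one_mul, mul_assoc, mul_pi_div M hM, add_comm, Real.sin_add_two_pi]

theorem eval_coef_S_two_mul_sub_one {i j : B} (hij : i ≠ j) (hM : M i j ≠ 0) :
    (S ℝ (2 * M i j - 1)).eval (coef M i j) = 0 := by
  refine mul_right_cancel₀ (sin_pi_div_pos M hij hM).ne' ?_
  rw [eval_coef_S_mul_sin, zero_mul]
  push_cast
  rw [sub_add_cancel, mul_assoc, mul_pi_div M hM, Real.sin_two_pi]

theorem prod_map_refl_alternatingWord_two_mul (i j : B) (k : ℕ) :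
    ((alternatingWord i j (2 * k)).map (refl M)).prod = (refl M i * refl M j) ^ k := by
  induction k with
  | zero => simp [alternatingWord]
  | succ k ih => simp [Nat.mul_succ, alternatingWord_succ', ih, pow_succ', mul_assoc]

theorem refl_mul_refl_pow_root_left {i j : B} (hij : i ≠ j) (hM : M i j ≠ 0) :
    ((refl M i * refl M j) ^ M i j) (root i) = root i := by
  rw [← prod_map_refl_alternatingWord_two_mul, prod_map_refl_alternatingWord_root]
  push_cast
  simp [eval_coef_S_two_mul M hij hM, eval_coef_S_two_mul_sub_one M hij hM]

theorem refl_mul_refl_pow_mul_swap (i j : B) (k : ℕ) :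
    (refl M i * refl M j) ^ k * (refl M j * refl M i) ^ k = 1 := by
  have h₁ : refl M i * refl M j * (refl M j * refl M i) = 1 := by
    rw [mul_assoc, ← mul_assoc (refl M j), refl_mul_refl, one_mul, refl_mul_refl]
  have h₂ : refl M j * refl M i * (refl M i * refl M j) = 1 := by
    rw [mul_assoc, ← mul_assoc (refl M i), refl_mul_refl, one_mul, refl_mul_refl]
  rw [← (show Commute _ _ from h₁.trans h₂.symm).mul_pow, h₁, one_pow]

theorem refl_mul_refl_pow_root_right {i j : B} (hij : i ≠ j) (hM : M i j ≠ 0) :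
    ((refl M i * refl M j) ^ M i j) (root j) = root j := by
  have h := refl_mul_refl_pow_root_left M hij.symm (M.symmetric i j ▸ hM)
  rw [M.symmetric j i] at h
  rw [← h, ← Module.End.mul_apply, refl_mul_refl_pow_mul_swap, h, Module.End.one_apply]

/-- When `m(i, j)` is finite, the form is nondegenerate on the plane of `α_i` and `α_j`. -/
theorem exists_coroot_eq_zero {i j : B} (hij : i ≠ j) (hM : M i j ≠ 0) (v : B →₀ ℝ) :
    ∃ (a b : ℝ) (q : B →₀ ℝ), v = a • root i + b • root j + q ∧ coroot M i q = 0 ∧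
      coroot M j q = 0 := by
  have hdet : 4 - coef M i j ^ 2 ≠ 0 := by
    rw [coef, mul_pow, Real.cos_sq']
    nlinarith [pow_pos (sin_pi_div_pos M hij hM) 2]
  set c := coef M i j with hc
  set x := coroot M i v
  set y := coroot M j v
  refine ⟨(2 * x + c * y) / (4 - c ^ 2), (c * x + 2 * y) / (4 - c ^ 2), _,
    (add_sub_cancel _ v).symm, ?_, ?_⟩ <;>
  · simp only [map_sub, map_add, map_smul, coroot_root, coef_self, coef_comm M j i, smul_eq_mul,
      ← hc]
    field_simp
    ring

theorem isLiftable_refl : M.IsLiftable (refl M) := by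
  intro i j
  by_cases hij : i = j
  · simp [hij, refl_mul_refl]
  by_cases hM : M i j = 0
  · rw [hM, pow_zero]
  refine LinearMap.ext fun v ↦ ?_
  obtain ⟨a, b, q, rfl, hi, hj⟩ := exists_coroot_eq_zero M hij hM v
  have hq : ((refl M i * refl M j) ^ M i j) q = q := by
    rw [Module.End.pow_apply]
    exact Function.iterate_fixed (by simp [refl_apply, hi, hj]) _
  simp only [map_add, map_smul, refl_mul_refl_pow_root_left M hij hM,
    refl_mul_refl_pow_root_right M hij hM, hq, Module.End.one_apply]

end Reflections

section Positivity

variable {B W : Type*} [Group W] {M : CoxeterMatrix B} (cs : CoxeterSystem M W)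

/-- The geometric representation of a Coxeter group. -/
def rep : Representation ℝ W (B →₀ ℝ) := cs.lift ⟨refl M, isLiftable_refl M⟩

theorem rep_simple (i : B) : rep cs (cs.simple i) = refl M i :=
  cs.lift_apply_simple (isLiftable_refl M) i

theorem rep_wordProd (ω : List B) : rep cs (cs.wordProd ω) = (ω.map (refl M)).prod := by
  rw [wordProd, map_list_prod, List.map_map]
  exact congrArg List.prod (List.map_congr_left fun i _ ↦ rep_simple cs i)

theorem form_rep_rep (w : W) (u v : B →₀ ℝ) : form M (rep cs w u) (rep cs w v) = form M u v := by
  induction w using cs.simple_induction_left with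
  | one => simp
  | mul_simple_left w i ih =>
    simp only [map_mul, Module.End.mul_apply, rep_simple, form_refl_refl, ih]

variable {cs}

theorem rep_mul_alternatingWord_root (v : W) (i j : B) (k : ℕ) :
    rep cs (v * cs.wordProd (alternatingWord i j k)) (root i) =
      (S ℝ k).eval (coef M i j) • rep cs v (root (if Even k then i else j)) +
        (S ℝ (k - 1)).eval (coef M i j) • rep cs v (root (if Even k then j else i)) := by
  rw [map_mul, Module.End.mul_apply, rep_wordProd, prod_map_refl_alternatingWord_root, map_add,
    map_smul, map_smul]

theorem root_nonneg (i : B) : 0 ≤ root i := Finsupp.single_nonneg.mpr zero_le_one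

theorem rep_root_nonneg {w : W} {i : B} (hi : ¬cs.IsRightDescent w i) :
    0 ≤ rep cs w (root i) := by
  induction hn : cs.length w using Nat.strong_induction_on generalizing w i with | _ n ih
  obtain rfl | hw := eq_or_ne w 1
  · simpa using root_nonneg i
  obtain ⟨j, hj⟩ := cs.exists_rightDescent_of_ne_one hw
  have hij : i ≠ j := fun h ↦ hi (h ▸ hj)
  obtain ⟨v, k, rfl, hlen, hvi, hvj⟩ := exists_eq_mul_alternatingWord j hi
  have hkM : M i j = 0 ∨ k < M i j :=
    or_iff_not_imp_left.mpr fun hM ↦ lt_of_length_mul_alternatingWord hM hlen hi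
  have hk : k ≠ 0 := by
    rintro rfl
    exact hvj (by simpa [alternatingWord] using hj)
  have hroot (l : B) (hl : ¬cs.IsRightDescent v l) : 0 ≤ rep cs v (root l) :=
    ih _ (by lia) hl rfl
  have hS : 0 ≤ (S ℝ k).eval (coef M i j) := by
    simpa using eval_coef_S_nonneg M hij (k := k + 1) hkM
  have hS' : 0 ≤ (S ℝ (k - 1)).eval (coef M i j) :=
    eval_coef_S_nonneg M hij (hkM.imp_right le_of_lt)
  rw [rep_mul_alternatingWord_root]
  refine add_nonneg (smul_nonneg hS (hroot _ ?_)) (smul_nonneg hS' (hroot _ ?_)) <;>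
  · split_ifs <;> assumption

theorem rep_root_nonpos {w : W} {i : B} (hi : cs.IsRightDescent w i) :
    rep cs w (root i) ≤ 0 := by
  have h := rep_root_nonneg (cs.isRightDescent_iff_not_isRightDescent_mul.mp hi)
  rwa [map_mul, Module.End.mul_apply, rep_simple, refl_root_self, map_neg, neg_nonneg] at h

end Positivity

section Roots

variable {B W : Type*} [Group W] {M : CoxeterMatrix B} (cs : CoxeterSystem M W)

/-- The roots of the geometric representation: the translates of the simple roots. -/
def roots : Set (B →₀ ℝ) := {β | ∃ w i, rep cs w (root i) = β}

/-- The positive roots: the roots with nonnegative coordinates. -/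
def posRoots : Set (B →₀ ℝ) := {β ∈ roots cs | 0 ≤ β}

/-- The inversions of `w`: the positive roots that `w` makes negative. -/
def inversions (w : W) : Set (B →₀ ℝ) := {β ∈ posRoots cs | rep cs w β ≤ 0}

variable {cs}

theorem root_mem_posRoots (i : B) : root i ∈ posRoots cs :=
  ⟨⟨1, i, by simp⟩, root_nonneg i⟩

theorem rep_mem_roots {β : B →₀ ℝ} (hβ : β ∈ roots cs) (w : W) : rep cs w β ∈ roots cs := by
  obtain ⟨v, i, rfl⟩ := hβ
  exact ⟨w * v, i, by simp⟩

theorem neg_mem_roots {β : B →₀ ℝ} (hβ : β ∈ roots cs) : -β ∈ roots cs := by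
  obtain ⟨w, i, rfl⟩ := hβ
  exact ⟨w * cs.simple i, i, by simp [rep_simple, refl_root_self]⟩

theorem nonneg_or_nonpos_of_mem_roots {β : B →₀ ℝ} (hβ : β ∈ roots cs) : 0 ≤ β ∨ β ≤ 0 := by
  obtain ⟨w, i, rfl⟩ := hβ
  by_cases hi : cs.IsRightDescent w i
  · exact .inr (rep_root_nonpos hi)
  · exact .inl (rep_root_nonneg hi)

theorem form_self_of_mem_roots {β : B →₀ ℝ} (hβ : β ∈ roots cs) : form M β β = 2 := by
  obtain ⟨w, i, rfl⟩ := hβ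
  rw [form_rep_rep, form_root, coroot_root_self]

theorem ne_zero_of_mem_roots {β : B →₀ ℝ} (hβ : β ∈ roots cs) : β ≠ 0 := by
  rintro rfl
  simpa using form_self_of_mem_roots hβ

theorem not_nonpos_of_mem_posRoots {β : B →₀ ℝ} (hβ : β ∈ posRoots cs) : ¬β ≤ 0 :=
  fun h ↦ ne_zero_of_mem_roots hβ.1 (h.antisymm hβ.2)

theorem eq_root_of_refl_nonpos {β : B →₀ ℝ} (hβ : β ∈ posRoots cs) {i : B}
    (h : refl M i β ≤ 0) : β = root i := by
  have hsingle : β = β i • root i := by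
    ext j
    obtain rfl | hij := eq_or_ne i j
    · simp [root]
    · have hj : β j ≤ 0 := by simpa [refl_apply, root, hij] using h j
      simpa [root, hij] using hj.antisymm (hβ.2 j)
  have hsq : β i * β i = 1 := by
    have := form_self_of_mem_roots hβ.1
    rw [hsingle, map_smul, map_smul, LinearMap.smul_apply, form_root, coroot_root_self,
      smul_eq_mul, smul_eq_mul] at this
    linarith
  have hnonneg : 0 ≤ β i := hβ.2 i
  have hone : β i = 1 := by nlinarith
  rw [hsingle, hone, one_smul]

theorem refl_mem_posRoots {β : B →₀ ℝ} (hβ : β ∈ posRoots cs) {i : B} (hi : β ≠ root i) :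
    refl M i β ∈ posRoots cs := by
  have hroot : refl M i β ∈ roots cs := rep_simple cs i ▸ rep_mem_roots hβ.1 (cs.simple i)
  exact ⟨hroot, (nonneg_or_nonpos_of_mem_roots hroot).resolve_right
    fun h ↦ hi (eq_root_of_refl_nonpos hβ h)⟩

theorem inversions_finite (w : W) : (inversions cs w).Finite := by
  induction w using cs.simple_induction_left with
  | one =>
    convert Set.finite_empty
    refine Set.eq_empty_of_forall_notMem fun β hβ ↦ not_nonpos_of_mem_posRoots hβ.1 ?_
    simpa using hβ.2
  | mul_simple_left w i ih =>
    refine (ih.insert (rep cs w⁻¹ (root i))).subset fun β ⟨hβ, hneg⟩ ↦ ?_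
    rw [map_mul, Module.End.mul_apply, rep_simple] at hneg
    have hwβ := rep_mem_roots hβ.1 w
    refine (nonneg_or_nonpos_of_mem_roots hwβ).imp (fun hpos ↦ ?_) fun hnonpos ↦ ⟨hβ, hnonpos⟩
    rw [← eq_root_of_refl_nonpos ⟨hwβ, hpos⟩ hneg, Representation.inv_self_apply]

theorem inversions_injective : Function.Injective (inversions cs) := by
  intro v w h
  by_contra hvw
  obtain ⟨i, hi⟩ := cs.exists_rightDescent_of_ne_one (w := v * w⁻¹) (mt mul_inv_eq_one.mp hvw)
  have hv : rep cs v (rep cs w⁻¹ (root i)) ≤ 0 := by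
    simpa using rep_root_nonpos hi
  have hw : rep cs w (rep cs w⁻¹ (root i)) = root i := Representation.self_inv_apply ..
  have hroot : rep cs w⁻¹ (root i) ∈ roots cs := ⟨w⁻¹, i, rfl⟩
  rcases nonneg_or_nonpos_of_mem_roots hroot with hpos | hneg
  · have hmem : rep cs w⁻¹ (root i) ∈ inversions cs w := h ▸ ⟨⟨hroot, hpos⟩, hv⟩
    exact not_nonpos_of_mem_posRoots (cs := cs) (root_mem_posRoots i) (hw ▸ hmem.2)
  · have hmem : -rep cs w⁻¹ (root i) ∈ inversions cs v := by
      refine h ▸ ⟨⟨neg_mem_roots hroot, neg_nonneg.mpr hneg⟩, ?_⟩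
      rw [map_neg, hw, neg_nonpos]
      exact root_nonneg i
    refine ne_zero_of_mem_roots (rep_mem_roots hroot v) (hv.antisymm ?_)
    simpa using hmem.2

end Roots

section Stabilizers

variable {B W : Type*} [Group W] {M : CoxeterMatrix B} (cs : CoxeterSystem M W)

/-- The positive roots on which the linear form `x` is nonpositive, one for each reflecting
hyperplane that contains `x` or separates it from the fundamental chamber. -/
def nonposRoots (x : Module.Dual ℝ (B →₀ ℝ)) : Set (B →₀ ℝ) := {β ∈ posRoots cs | x β ≤ 0}

/-- The stabilizer of a linear form under the contragredient action. -/
def stabilizer (x : Module.Dual ℝ (B →₀ ℝ)) : Subgroup W where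
  carrier := {w | ∀ v, x (rep cs w v) = x v}
  one_mem' v := by simp
  mul_mem' hu hw v := by rw [map_mul, Module.End.mul_apply, hu, hw]
  inv_mem' hw v := by rw [← hw, Representation.self_inv_apply]

/-- A linear form is dominant if it lies in the closed fundamental chamber. -/
def Dominant (x : Module.Dual ℝ (B →₀ ℝ)) : Prop := ∀ i, 0 ≤ x (root i)

variable {cs} {x : Module.Dual ℝ (B →₀ ℝ)}

theorem Dominant.apply_nonneg (hx : Dominant x) {v : B →₀ ℝ} (hv : 0 ≤ v) : 0 ≤ x v := by
  have h : x = Finsupp.linearCombination ℝ fun i ↦ x (root i) := by ext i; simp [root]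
  rw [h, Finsupp.linearCombination_apply]
  exact Finsupp.sum_nonneg fun i _ ↦ mul_nonneg (hv i) (hx i)

theorem Dominant.apply_nonpos (hx : Dominant x) {v : B →₀ ℝ} (hv : v ≤ 0) : x v ≤ 0 := by
  simpa using hx.apply_nonneg (neg_nonneg.mpr hv)

theorem simple_mem_stabilizer {i : B} (hi : x (root i) = 0) : cs.simple i ∈ stabilizer cs x :=
  fun v ↦ by simp [rep_simple, refl_apply, hi]

theorem stabilizer_eq_parabolic (hx : Dominant x) :
    stabilizer cs x = cs.parabolic {i | x (root i) = 0} := by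
  refine le_antisymm (fun w hw ↦ ?_) ?_
  · induction hn : cs.length w using Nat.strong_induction_on generalizing w with | _ n ih
    obtain rfl | hw1 := eq_or_ne w 1
    · exact one_mem _
    obtain ⟨i, hi⟩ := cs.exists_rightDescent_of_ne_one hw1
    have hxi : x (root i) = 0 :=
      le_antisymm (hw (root i) ▸ hx.apply_nonpos (rep_root_nonpos hi)) (hx i)
    have hsimple : cs.simple i ∈ cs.parabolic {i | x (root i) = 0} :=
      Subgroup.subset_closure ⟨i, hxi, rfl⟩
    rw [← Subgroup.mul_mem_cancel_right _ hsimple]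
    exact ih _ (hn ▸ hi) _ (mul_mem hw (simple_mem_stabilizer hxi)) rfl
  · rw [parabolic, Subgroup.closure_le]
    rintro _ ⟨i, hi, rfl⟩
    exact simple_mem_stabilizer hi

theorem finite_stabilizer (hx : Dominant x) (hfin : (nonposRoots cs x).Finite) :
    Finite (stabilizer cs x) := by
  refine Set.Finite.to_subtype (.of_finite_image (f := inversions cs) ?_
    inversions_injective.injOn)
  refine hfin.finite_subsets.subset ?_
  rintro _ ⟨w, hw, rfl⟩ β ⟨hβ, hneg⟩
  exact ⟨hβ, hw β ▸ hx.apply_nonpos hneg⟩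

theorem image_refl_nonposRoots_subset {i : B} (hi : x (root i) < 0) :
    refl M i '' nonposRoots cs (x ∘ₗ refl M i) ⊆ nonposRoots cs x \ {root i} := by
  rintro _ ⟨β, ⟨hβ, hxβ⟩, rfl⟩
  refine ⟨⟨refl_mem_posRoots hβ ?_, hxβ⟩, ?_⟩
  · rintro rfl
    rw [LinearMap.comp_apply, refl_root_self, map_neg] at hxβ
    linarith
  · intro h
    rw [Set.mem_singleton_iff] at h
    refine not_nonpos_of_mem_posRoots hβ ?_
    rw [← refl_refl M i β, h, refl_root_self, neg_nonpos]
    exact root_nonneg i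

theorem exists_dominant (hfin : (nonposRoots cs x).Finite) :
    ∃ w, Dominant (x ∘ₗ rep cs w) ∧ (nonposRoots cs (x ∘ₗ rep cs w)).Finite := by
  induction hn : (nonposRoots cs x).ncard using Nat.strong_induction_on generalizing x with | _ n ih
  by_cases hx : Dominant x
  · exact ⟨1, by simpa [Module.End.one_eq_id] using ⟨hx, hfin⟩⟩
  obtain ⟨i, hi⟩ := not_forall.mp hx
  rw [not_le] at hi
  have hinj := (Function.LeftInverse.injective (refl_refl M i)).injOn
    (s := nonposRoots cs (x ∘ₗ refl M i))
  have hsub := image_refl_nonposRoots_subset (cs := cs) hi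
  have hlt : (nonposRoots cs (x ∘ₗ refl M i)).ncard < n := by
    rw [← hn, ← hinj.ncard_image]
    exact (Set.ncard_le_ncard hsub hfin.sdiff).trans_lt
      (Set.ncard_sdiff_singleton_lt_of_mem ⟨root_mem_posRoots i, hi.le⟩ hfin)
  have hfin' : (nonposRoots cs (x ∘ₗ refl M i)).Finite :=
    .of_finite_image (hfin.sdiff.subset hsub) hinj
  obtain ⟨w, hw⟩ := ih _ hlt hfin' rfl
  refine ⟨cs.simple i * w, ?_⟩
  rwa [map_mul, rep_simple, Module.End.mul_eq_comp, ← LinearMap.comp_assoc]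

end Stabilizers

section FiniteSubgroups

variable {B W : Type*} [Group W] {M : CoxeterMatrix B} {cs : CoxeterSystem M W}

/-- The height of a vector: the sum of its coordinates with respect to the simple roots. -/
def height : Module.Dual ℝ (B →₀ ℝ) := Finsupp.linearCombination ℝ fun _ ↦ 1

theorem height_pos {v : B →₀ ℝ} (hv : 0 ≤ v) (hv0 : v ≠ 0) : 0 < height v := by
  simp only [height, Finsupp.linearCombination_apply, smul_eq_mul, mul_one]
  exact Finset.sum_pos (fun i hi ↦ (hv i).lt_of_ne' (Finsupp.mem_support_iff.mp hi))
    (Finsupp.support_nonempty_iff.mpr hv0)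

theorem mem_inversions_of_height_nonpos {β : B →₀ ℝ} (hβ : β ∈ posRoots cs) {w : W}
    (h : height (rep cs w β) ≤ 0) : β ∈ inversions cs w := by
  have hroot := rep_mem_roots hβ.1 w
  exact ⟨hβ, (nonneg_or_nonpos_of_mem_roots hroot).resolve_left
    fun hpos ↦ (height_pos hpos (ne_zero_of_mem_roots hroot)).not_ge h⟩

variable (cs) in
/-- The height averaged over a finite subgroup, up to a scalar. -/
def sumHeight (H : Subgroup W) [Fintype H] : Module.Dual ℝ (B →₀ ℝ) :=
  ∑ h : H, height ∘ₗ rep cs h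

theorem nonposRoots_sumHeight_finite (H : Subgroup W) [Fintype H] :
    (nonposRoots cs (sumHeight cs H)).Finite := by
  refine (Set.finite_iUnion fun h : H ↦ inversions_finite (cs := cs) h).subset fun β ⟨hβ, hsum⟩ ↦ ?_
  rw [sumHeight, LinearMap.sum_apply] at hsum
  obtain ⟨h, -, hh⟩ := Finset.exists_le_of_sum_le (g := fun _ ↦ (0 : ℝ)) Finset.univ_nonempty
    (hsum.trans_eq Finset.sum_const_zero.symm)
  exact Set.mem_iUnion.mpr ⟨h, mem_inversions_of_height_nonpos hβ hh⟩

theorem le_stabilizer_sumHeight (H : Subgroup W) [Fintype H] :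
    H ≤ stabilizer cs (sumHeight cs H) := by
  intro g hg v
  simp only [sumHeight, LinearMap.sum_apply, LinearMap.comp_apply, ← Module.End.mul_apply,
    ← map_mul]
  exact Equiv.sum_comp (Equiv.mulRight ⟨g, hg⟩) fun h : H ↦ height (rep cs h v)

theorem stabilizer_le_conjSubgroup (x : Module.Dual ℝ (B →₀ ℝ)) (w : W) :
    stabilizer cs x ≤ conjSubgroup w (stabilizer cs (x ∘ₗ rep cs w)) := by
  intro g hg
  refine ⟨w⁻¹ * g * w, fun v ↦ ?_, by simp [mul_assoc]⟩
  rw [LinearMap.comp_apply, ← Module.End.mul_apply, ← map_mul, mul_assoc, mul_inv_cancel_left,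
    map_mul, Module.End.mul_apply, hg, LinearMap.comp_apply]

end FiniteSubgroups

end GeometricRepresentation

end

section Involutions

variable {G : Type*} [Group G]

theorem mem_zpowers_or_mul_mem_zpowers_of_mem_closure_pair_s10 {s t g : G} (hs : s⁻¹ = s)
    (ht : t⁻¹ = t) (hg : g ∈ Subgroup.closure {s, t}) :
    g ∈ Subgroup.zpowers (s * t) ∨ s * g ∈ Subgroup.zpowers (s * t) := by
  have hst : s * t ∈ Subgroup.zpowers (s * t) := Subgroup.mem_zpowers _
  have hmul {x y : G} (hx : x ∈ ({s, t} : Set G))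
      (hy : y ∈ Subgroup.zpowers (s * t) ∨ s * y ∈ Subgroup.zpowers (s * t)) :
      x * y ∈ Subgroup.zpowers (s * t) ∨ s * (x * y) ∈ Subgroup.zpowers (s * t) := by
    rcases hx with rfl | rfl
    · have hy' : x * (x * y) = y := by simpa only [hs] using inv_mul_cancel_left x y
      rw [hy']
      exact hy.symm
    · have hxy : x * y = (s * x)⁻¹ * (s * y) := by simp [mul_assoc, ht]
      exact hy.symm.imp (fun h ↦ hxy ▸ mul_mem (inv_mem hst) h)
        fun h ↦ mul_assoc s x y ▸ mul_mem hst h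
  induction hg using Subgroup.closure_induction_left with
  | one => exact .inl (one_mem _)
  | mul_left x hx y _ ih => exact hmul hx ih
  | inv_mul_cancel x hx y _ ih =>
    have hinv : x⁻¹ = x := by rcases hx with rfl | rfl <;> assumption
    rw [hinv]
    exact hmul hx ih

theorem sq_eq_one_or_mem_zpowers_of_mem_closure_pair {s t g : G} (hs : s⁻¹ = s) (ht : t⁻¹ = t)
    (hg : g ∈ Subgroup.closure {s, t}) : g ^ 2 = 1 ∨ g ∈ Subgroup.zpowers (s * t) := by
  refine (mem_zpowers_or_mul_mem_zpowers_of_mem_closure_pair_s10 hs ht hg).symm.imp_left ?_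
  rintro ⟨n, hn : (s * t) ^ n = s * g⟩
  have hconj : s * (s * t) * s⁻¹ = (s * t)⁻¹ := by
    rw [mul_inv_rev, ht, mul_left_inj]
    simpa only [hs] using inv_mul_cancel_left s t
  have hinv : s * (s * g) * s⁻¹ = (s * g)⁻¹ := by rw [← hn, ← conj_zpow, hconj, inv_zpow]
  rw [mul_inv_rev, mul_left_inj] at hinv
  nth_rw 1 [← hs] at hinv
  rw [inv_mul_cancel_left] at hinv
  rw [sq, mul_eq_one_iff_eq_inv, ← hinv]

theorem mul_comm_of_sq_mul_eq_one {s t : G} (hs : s⁻¹ = s) (ht : t⁻¹ = t)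
    (hst : (s * t) ^ 2 = 1) : s * t = t * s := by
  rw [sq, mul_eq_one_iff_eq_inv, mul_inv_rev, hs, ht] at hst
  exact hst

theorem orderOf_eq_two_of_sq_eq_one_of_even {g : G} (hg : g ^ 2 = 1) (heven : Even (orderOf g)) :
    orderOf g = 2 :=
  (orderOf_dvd_of_pow_eq_one hg).antisymm heven.two_dvd

theorem orderOf_eq_two_of_mem_closure_pair {s t g : G} (hs : s⁻¹ = s) (ht : t⁻¹ = t)
    (hst : Odd (orderOf (s * t))) (hg : g ∈ Subgroup.closure {s, t}) (heven : Even (orderOf g)) :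
    orderOf g = 2 := by
  rcases sq_eq_one_or_mem_zpowers_of_mem_closure_pair hs ht hg with hsq | hmem
  · exact orderOf_eq_two_of_sq_eq_one_of_even hsq heven
  · exact absurd heven (Nat.not_even_iff_odd.mpr (hst.of_dvd_nat (orderOf_dvd_of_mem_zpowers hmem)))

theorem sq_eq_one_of_mem_closure {S : Set G} (hsq : ∀ s ∈ S, s ^ 2 = 1)
    (hcomm : ∀ s ∈ S, ∀ t ∈ S, s * t = t * s) {g : G} (hg : g ∈ Subgroup.closure S) :
    g ^ 2 = 1 := by
  have := Subgroup.isMulCommutative_closure hcomm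
  induction hg using Subgroup.closure_induction with
  | mem s hs => exact hsq s hs
  | one => exact one_pow 2
  | mul x y hx hy ihx ihy =>
    rw [(show Commute x y from setLike_mul_comm hx hy).mul_pow, ihx, ihy, one_mul]
  | inv x _ ih => rw [inv_pow, ih, inv_one]

end Involutions

section FiniteOrder

variable {B W : Type*} [Group W] {M : CoxeterMatrix B} {cs : CoxeterSystem M W}

open GeometricRepresentation in
/-- Tits: the height summed over `H` is an `H`-invariant linear form in the interior of the Tits
cone, where stabilizers are conjugate to finite standard parabolic subgroups. -/
theorem exists_isSpherical_le_conjSubgroup_parabolic (cs : CoxeterSystem M W) (H : Subgroup W)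
    [Finite H] : ∃ T w, cs.IsSpherical T ∧ H ≤ conjSubgroup w (cs.parabolic T) := by
  have := Fintype.ofFinite H
  obtain ⟨w, hdom, hfin⟩ := exists_dominant (nonposRoots_sumHeight_finite (cs := cs) H)
  have hpar := stabilizer_eq_parabolic (cs := cs) hdom
  refine ⟨{i | (sumHeight cs H ∘ₗ rep cs w) (root i) = 0}, w, ?_, ?_⟩
  · rw [IsSpherical, ← hpar]
    exact finite_stabilizer hdom hfin
  · rw [← hpar]
    exact (le_stabilizer_sumHeight H).trans (stabilizer_le_conjSubgroup _ w)

theorem orderOf_ne_zero_of_mem_parabolic {T : Set B} (hT : cs.IsSpherical T) {g : W}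
    (hg : g ∈ cs.parabolic T) : orderOf g ≠ 0 := by
  have : Finite (cs.parabolic T) := hT
  rw [← Subgroup.orderOf_mk g hg]
  exact (orderOf_pos _).ne'

theorem orderOf_eq_two_of_mem_parabolic
    (h0 : ∀ i j : B, orderOf (cs.simple i * cs.simple j) ≠ 0 →
      Even (orderOf (cs.simple i * cs.simple j)) → orderOf (cs.simple i * cs.simple j) = 2)
    (h1 : ∀ i j : B, i ≠ j → Odd (orderOf (cs.simple i * cs.simple j)) →
      cs.IsMaxSpherical {i, j})
    {T : Set B} (hT : cs.IsSpherical T) {g : W} (hg : g ∈ cs.parabolic T)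
    (heven : Even (orderOf g)) : orderOf g = 2 := by
  by_cases hodd : ∃ i ∈ T, ∃ j ∈ T, i ≠ j ∧ Odd (orderOf (cs.simple i * cs.simple j))
  · obtain ⟨i, hi, j, hj, hij, hodd⟩ := hodd
    obtain rfl : T = {i, j} :=
      (h1 i j hij hodd).2 T hT (Set.insert_subset hi (Set.singleton_subset_iff.mpr hj))
    rw [parabolic, Set.image_pair] at hg
    exact orderOf_eq_two_of_mem_closure_pair (cs.inv_simple i) (cs.inv_simple j) hodd hg heven
  · push Not at hodd
    refine orderOf_eq_two_of_sq_eq_one_of_even (sq_eq_one_of_mem_closure ?_ ?_ hg) heven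
    · rintro _ ⟨i, -, rfl⟩
      exact cs.simple_sq i
    rintro _ ⟨i, hi, rfl⟩ _ ⟨j, hj, rfl⟩
    obtain rfl | hij := eq_or_ne i j
    · rfl
    have hmem : cs.simple i * cs.simple j ∈ cs.parabolic T :=
      mul_mem (Subgroup.subset_closure ⟨i, hi, rfl⟩) (Subgroup.subset_closure ⟨j, hj, rfl⟩)
    have htwo := h0 i j (orderOf_ne_zero_of_mem_parabolic hT hmem)
      (Nat.not_odd_iff_even.mp (hodd i hi j hj hij))
    exact mul_comm_of_sq_mul_eq_one (cs.inv_simple i) (cs.inv_simple j)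
      (htwo ▸ pow_orderOf_eq_one _)

theorem orderOf_eq_two_of_even
    (h0 : ∀ i j : B, orderOf (cs.simple i * cs.simple j) ≠ 0 →
      Even (orderOf (cs.simple i * cs.simple j)) → orderOf (cs.simple i * cs.simple j) = 2)
    (h1 : ∀ i j : B, i ≠ j → Odd (orderOf (cs.simple i * cs.simple j)) →
      cs.IsMaxSpherical {i, j})
    {g : W} (hg : orderOf g ≠ 0) (heven : Even (orderOf g)) : orderOf g = 2 := by
  have : Finite (Subgroup.zpowers g) := finite_zpowers.mpr (orderOf_ne_zero_iff.mp hg)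
  obtain ⟨T, w, hT, hle⟩ := exists_isSpherical_le_conjSubgroup_parabolic cs (Subgroup.zpowers g)
  obtain ⟨p, hp, rfl⟩ := hle (Subgroup.mem_zpowers g)
  have hconj : orderOf ((MulAut.conj w).toMonoidHom p) = orderOf p := (MulAut.conj w).orderOf_eq p
  rw [hconj] at heven ⊢
  exact orderOf_eq_two_of_mem_parabolic h0 h1 hT hp heven

end FiniteOrder

theorem condition_zero_transfers_general {B B' : Type*}
    {W W' : Type*} [Group W] [Group W']
    {M : CoxeterMatrix B} (cs : CoxeterSystem M W)
    {M' : CoxeterMatrix B'} (cs' : CoxeterSystem M' W')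
    (h0 : ∀ i j : B, orderOf (cs.simple i * cs.simple j) ≠ 0 →
      Even (orderOf (cs.simple i * cs.simple j)) → orderOf (cs.simple i * cs.simple j) = 2)
    (h1 : ∀ i j : B, i ≠ j → Odd (orderOf (cs.simple i * cs.simple j)) →
      cs.IsMaxSpherical {i, j})
    (φ : W ≃* W') :
    ∀ i' j' : B', orderOf (cs'.simple i' * cs'.simple j') ≠ 0 →
      Even (orderOf (cs'.simple i' * cs'.simple j')) →
      orderOf (cs'.simple i' * cs'.simple j') = 2 := by
  intro i' j'
  rw [← φ.symm.orderOf_eq]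
  exact orderOf_eq_two_of_even h0 h1

/-- Conditions (0)–(3) on `(W,S)` transfer through an isomorphism `φ : W → W'`:
the target system satisfies (0'): if `m'(s',t')` is even then `m'(s',t') = 2`. -/
theorem condition_zero_transfers {B B' : Type*} [Fintype B] [Fintype B']
    {W W' : Type*} [Group W] [Group W']
    {M : CoxeterMatrix B} (cs : CoxeterSystem M W)
    {M' : CoxeterMatrix B'} (cs' : CoxeterSystem M' W')
    (h0 : ∀ i j : B, orderOf (cs.simple i * cs.simple j) ≠ 0 →
      Even (orderOf (cs.simple i * cs.simple j)) → orderOf (cs.simple i * cs.simple j) = 2)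
    (h1 : ∀ i j : B, i ≠ j → Odd (orderOf (cs.simple i * cs.simple j)) →
      cs.IsMaxSpherical {i, j})
    (h2 : ¬ ∃ i j k : B, i ≠ j ∧ j ≠ k ∧ i ≠ k ∧
      Odd (orderOf (cs.simple i * cs.simple j)) ∧ Odd (orderOf (cs.simple j * cs.simple k)))
    (h3 : ∀ i j : B, i ≠ j → Odd (orderOf (cs.simple i * cs.simple j)) →
      {T : Set B | cs.IsMaxSpherical T ∧ (T ∩ {i, j}).Nonempty}.ncard ≤ 2)
    (φ : W ≃* W') :
    ∀ i' j' : B', orderOf (cs'.simple i' * cs'.simple j') ≠ 0 →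
      Even (orderOf (cs'.simple i' * cs'.simple j')) →
      orderOf (cs'.simple i' * cs'.simple j') = 2 := by
  exact condition_zero_transfers_general cs cs' h0 h1 φ
end

section
/- Let (W,S) be a Coxeter system satisfying: (0) for all s,t ∈ S with m(s,t) even, m(s,t) = 2; (1) for all s ≠ t ∈ S with m(s,t) odd, {s,t} is a maximal spherical subset of S; (2) there is no three-element subset {s,t,u} ⊆ S such that m(s,t) and m(t,u) are both odd; (3) for all s ≠ t ∈ S with m(s,t) odd, the number of maximal spherical subsets of S intersecting {s,t} is at most two. Let (W',S') be a Coxeter system and suppose there exists a group isomorphism φ : W → W'. Then for each s' ≠ t' ∈ S' with m'(s',t') odd, {s',t'} is a maximal spherical subset of S'. -/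
namespace TitsRepresentation

open Real
open CoxeterSystem (alternatingWord alternatingWord_succ length_alternatingWord)
open Polynomial.Chebyshev (S S_one S_add_one S_eval_two S_two_mul_real_cos)

/-! ### Values of Chebyshev polynomials -/

lemma sin_pi_div_pos {m : ℕ} (hm : 2 ≤ m) : 0 < sin (π / m) := by
  have hm' : (1 : ℝ) < m := by exact_mod_cast hm
  exact sin_pos_of_pos_of_lt_pi (by positivity) (div_lt_self pi_pos hm')

lemma eval_S_two_mul_cos_pi_div_nonneg {m n : ℕ} (hm : m ≠ 1) (hn : m = 0 ∨ n ≤ m) :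
    0 ≤ (S ℝ (n - 1)).eval (2 * cos (π / m)) := by
  rcases eq_or_ne m 0 with rfl | hm0
  · simp [S_eval_two]
  have hm_pos : (0 : ℝ) < m := by positivity
  have hnm : (n : ℝ) ≤ m := by exact_mod_cast hn.resolve_left hm0
  have hle : n * (π / m) ≤ π := by
    rw [mul_div_assoc', div_le_iff₀ hm_pos, mul_comm]
    exact mul_le_mul_of_nonneg_left hnm pi_pos.le
  have hsin := S_two_mul_real_cos (π / m) (n - 1)
  push_cast at hsin
  rw [sub_add_cancel] at hsin
  refine nonneg_of_mul_nonneg_left ?_ (sin_pi_div_pos (m := m) (by lia))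
  exact hsin ▸ sin_nonneg_of_nonneg_of_le_pi (by positivity) hle

lemma eval_S_two_mul_self_two_mul_cos_pi_div {m : ℕ} (hm : 2 ≤ m) :
    (S ℝ (2 * m)).eval (2 * cos (π / m)) = 1 := by
  have hm0 : (m : ℝ) ≠ 0 := by positivity
  have hsin := S_two_mul_real_cos (π / m) (2 * m)
  push_cast at hsin
  rw [show (2 * (m : ℝ) + 1) * (π / m) = π / m + 2 * π by field_simp; ring, sin_add_two_pi] at hsin
  exact (mul_eq_right₀ (sin_pi_div_pos hm).ne').1 hsin

lemma eval_S_two_mul_self_sub_one_two_mul_cos_pi_div {m : ℕ} (hm : 2 ≤ m) :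
    (S ℝ (2 * m - 1)).eval (2 * cos (π / m)) = 0 := by
  have hm0 : (m : ℝ) ≠ 0 := by positivity
  have hsin := S_two_mul_real_cos (π / m) (2 * m - 1)
  push_cast at hsin
  rw [show (2 * (m : ℝ) - 1 + 1) * (π / m) = 2 * π by field_simp; ring, sin_two_pi] at hsin
  exact (mul_eq_zero.1 hsin).resolve_right (sin_pi_div_pos hm).ne'

/-! ### The geometric representation -/

section Representation

variable {B : Type*}

/-- The simple root `αᵢ`, as a basis vector of the space of the geometric representation. Taking
this space to be `B →₀ ℝ` allows `B` to be infinite. -/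
noncomputable abbrev simpleRoot (i : B) : B →₀ ℝ := Finsupp.single i 1

lemma simpleRoot_nonneg (i : B) : 0 ≤ simpleRoot i := Finsupp.single_nonneg.2 zero_le_one

variable (M : CoxeterMatrix B)

/-- The entry `2⟨αᵢ, αⱼ⟩ = -2 cos (π / m(i,j))` of the Gram matrix of the canonical form.
An infinite `m(i,j)` is encoded as `0`, and then `π / 0 = 0` gives the required value `-2`. -/
noncomputable def gram (i j : B) : ℝ := -(2 * cos (π / M i j))

lemma gram_self (i : B) : gram M i i = 2 := by simp [gram]

lemma gram_comm (i j : B) : gram M i j = gram M j i := by rw [gram, gram, M.symmetric]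

variable {M} in
lemma gram_nonpos {i j : B} (h : i ≠ j) : gram M i j ≤ 0 := by
  have hM := M.off_diagonal i j h
  have hcos : 0 ≤ (S ℝ ((2 : ℕ) - 1)).eval (2 * cos (π / M i j)) :=
    eval_S_two_mul_cos_pi_div_nonneg hM (by lia)
  rw [show ((2 : ℕ) - 1 : ℤ) = 1 from rfl, S_one, Polynomial.eval_X] at hcos
  exact neg_nonpos.2 hcos

variable {M} in
lemma gram_neg {i j : B} (h : i ≠ j) (h2 : M i j ≠ 2) : gram M i j < 0 := by
  have hM := M.off_diagonal i j h
  suffices 0 < cos (π / M i j) by rw [gram]; linarith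
  rcases eq_or_ne (M i j) 0 with h0 | h0
  · simp [h0]
  have h3 : (2 : ℝ) < M i j := by exact_mod_cast (show 2 < M i j by lia)
  have hpos : 0 < π / M i j := by positivity
  exact cos_pos_of_mem_Ioo ⟨by linarith [pi_pos], div_lt_div_of_pos_left pi_pos two_pos h3⟩

/-- Twice the canonical bilinear form of a Coxeter matrix, so that all roots have square `2`. -/
noncomputable def form : LinearMap.BilinForm ℝ (B →₀ ℝ) :=
  Finsupp.linearCombination ℝ fun i => Finsupp.linearCombination ℝ (gram M i)

@[simp]
lemma form_simpleRoot_simpleRoot (i j : B) : form M (simpleRoot i) (simpleRoot j) = gram M i j := by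
  simp [form]

lemma form_comm (v w : B →₀ ℝ) : form M v w = form M w v := by
  suffices form M = (form M).flip from LinearMap.congr_fun₂ this v w
  ext i j
  simpa using gram_comm M i j

/-- The simple reflection `σᵢ : v ↦ v - 2⟨αᵢ, v⟩ αᵢ` of the geometric representation. -/
noncomputable def reflect (i : B) : (B →₀ ℝ) ≃ₗ[ℝ] (B →₀ ℝ) :=
  Module.reflection (x := simpleRoot i) (f := form M (simpleRoot i)) (by simp [gram_self])

lemma reflect_apply (i : B) (v : B →₀ ℝ) :
    reflect M i v = v - form M (simpleRoot i) v • simpleRoot i :=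
  Module.reflection_apply ..

lemma reflect_simpleRoot (i j : B) :
    reflect M i (simpleRoot j) = simpleRoot j - gram M i j • simpleRoot i := by
  rw [reflect_apply, form_simpleRoot_simpleRoot]

lemma reflect_simpleRoot_self (i : B) : reflect M i (simpleRoot i) = -simpleRoot i :=
  Module.reflection_apply_self _

lemma reflect_reflect (i : B) (v : B →₀ ℝ) : reflect M i (reflect M i v) = v :=
  Module.involutive_reflection _ v

lemma reflect_inv (i : B) : (reflect M i)⁻¹ = reflect M i := Module.reflection_inv _

lemma form_reflect_reflect (i : B) (v w : B →₀ ℝ) :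
    form M (reflect M i v) (reflect M i w) = form M v w := by
  simp only [reflect_apply, map_sub, map_smul, LinearMap.sub_apply, LinearMap.smul_apply,
    smul_eq_mul, form_simpleRoot_simpleRoot, gram_self, form_comm M v (simpleRoot i)]
  ring

lemma reflect_mul_reflect_pow_simpleRoot (i j : B) (n : ℕ) :
    ((reflect M i * reflect M j) ^ n) (simpleRoot i) =
      (S ℝ (2 * n)).eval (-gram M i j) • simpleRoot i +
        (S ℝ (2 * n - 1)).eval (-gram M i j) • simpleRoot j := by
  induction n with
  | zero => simp
  | succ n ih =>
    have h₁ : S ℝ (2 * ((n + 1 : ℕ) : ℤ) - 1) = .X * S ℝ (2 * n) - S ℝ (2 * n - 1) := by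
      rw [← S_add_one]; congr 1; push_cast; ring
    have h₂ : S ℝ (2 * ((n + 1 : ℕ) : ℤ)) =
        .X * S ℝ (2 * ((n + 1 : ℕ) : ℤ) - 1) - S ℝ (2 * n) := by
      rw [← sub_add_cancel (2 * ((n + 1 : ℕ) : ℤ)) 1, S_add_one]
      congr 2 <;> push_cast <;> ring_nf
    rw [pow_succ', LinearEquiv.mul_apply, ih, h₂, h₁]
    simp only [LinearEquiv.mul_apply, map_add, map_sub, map_smul, reflect_simpleRoot, gram_self,
      gram_comm M j i, Polynomial.eval_sub, Polynomial.eval_mul, Polynomial.eval_X]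
    module

lemma reflect_mul_reflect_pow_coxeter_simpleRoot {i j : B} (hij : i ≠ j) (h0 : M i j ≠ 0) :
    ((reflect M i * reflect M j) ^ M i j) (simpleRoot i) = simpleRoot i := by
  have hm : 2 ≤ M i j := by have := M.off_diagonal i j hij; lia
  rw [reflect_mul_reflect_pow_simpleRoot, gram, neg_neg, eval_S_two_mul_self_two_mul_cos_pi_div hm,
    eval_S_two_mul_self_sub_one_two_mul_cos_pi_div hm, one_smul, zero_smul, add_zero]

lemma reflect_mul_reflect_pow_apply_of_form_eq_zero {i j : B} {v : B →₀ ℝ}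
    (hi : form M (simpleRoot i) v = 0) (hj : form M (simpleRoot j) v = 0) (n : ℕ) :
    ((reflect M i * reflect M j) ^ n) v = v := by
  induction n with
  | zero => simp
  | succ n ih => simp [pow_succ, LinearEquiv.mul_apply, reflect_apply, hi, hj, ih]

lemma exists_form_sub_eq_zero {i j : B} (hij : i ≠ j) (h0 : M i j ≠ 0) (v : B →₀ ℝ) :
    ∃ a b : ℝ, form M (simpleRoot i) (v - (a • simpleRoot i + b • simpleRoot j)) = 0 ∧
      form M (simpleRoot j) (v - (a • simpleRoot i + b • simpleRoot j)) = 0 := by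
  have hm : 2 ≤ M i j := by have := M.off_diagonal i j hij; lia
  set c := gram M i j with hc
  -- the form is nondegenerate on the span of `αᵢ` and `αⱼ`
  have hdet : 4 - c ^ 2 ≠ 0 := by
    have hsq : 4 - c ^ 2 = 4 * sin (π / M i j) ^ 2 := by rw [hc, gram, sin_sq]; ring
    have := sin_pi_div_pos hm
    rw [hsq]
    positivity
  set p := form M (simpleRoot i) v
  set q := form M (simpleRoot j) v
  refine ⟨(2 * p - c * q) / (4 - c ^ 2), (2 * q - c * p) / (4 - c ^ 2), ?_, ?_⟩ <;>
  · simp only [map_sub, map_add, map_smul, smul_eq_mul, form_simpleRoot_simpleRoot, gram_self,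
      gram_comm M j i, ← hc]
    field_simp
    ring

lemma reflect_isLiftable : M.IsLiftable (reflect M) := by
  intro i j
  rcases eq_or_ne i j with rfl | hij
  · nth_rw 1 [← reflect_inv, inv_mul_cancel, one_pow]
  rcases eq_or_ne (M i j) 0 with h0 | h0
  · rw [h0, pow_zero]
  have hi := reflect_mul_reflect_pow_coxeter_simpleRoot M hij h0
  have hj : ((reflect M i * reflect M j) ^ M i j) (simpleRoot j) = simpleRoot j := by
    have h := reflect_mul_reflect_pow_coxeter_simpleRoot M hij.symm (M.symmetric i j ▸ h0)
    have hinv : (reflect M j * reflect M i) ^ M j i = ((reflect M i * reflect M j) ^ M i j)⁻¹ := by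
      rw [← inv_pow, mul_inv_rev, reflect_inv, reflect_inv, M.symmetric]
    rw [hinv] at h
    exact ((LinearEquiv.symm_apply_eq _).1 h).symm
  ext1 v
  obtain ⟨a, b, hva, hvb⟩ := exists_form_sub_eq_zero M hij h0 v
  have hv := reflect_mul_reflect_pow_apply_of_form_eq_zero M hva hvb (M i j)
  rwa [map_sub, map_add, map_smul, map_smul, hi, hj, sub_left_inj] at hv

end Representation

/-! ### Positivity of roots -/

section Positivity

variable {B W : Type*} [Group W] {M : CoxeterMatrix B} (cs : CoxeterSystem M W)

lemma exists_eq_mul_wordProd_alternatingWord {w : W} {i : B} (j : B)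
    (hi : ¬cs.IsRightDescent w i) :
    ∃ (v : W) (k : ℕ), w = v * cs.wordProd (alternatingWord i j k) ∧
      cs.length w = cs.length v + k ∧ ¬cs.IsRightDescent v i ∧ ¬cs.IsRightDescent v j := by
  induction hn : cs.length w generalizing w i j with
  | zero =>
    obtain rfl := cs.length_eq_zero_iff.1 hn
    exact ⟨1, 0, by simp [alternatingWord], by simp, hi, cs.not_isRightDescent_one j⟩
  | succ n ih =>
    by_cases hj : cs.IsRightDescent w j
    · have hlen := cs.isRightDescent_iff.1 hj
      obtain ⟨v, k, hv, hk, hvj, hvi⟩ :=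
        ih i (cs.isRightDescent_iff_not_isRightDescent_mul.1 hj) (by lia)
      refine ⟨v, k + 1, ?_, by lia, hvi, hvj⟩
      rw [alternatingWord_succ, cs.wordProd_concat, ← mul_assoc, ← hv,
        cs.simple_mul_simple_cancel_right]
    · exact ⟨w, 0, by simp [alternatingWord], hn.symm, hi, hj⟩

variable {cs} in
lemma add_one_le_of_not_isRightDescent {v w : W} {i j : B} {k : ℕ}
    (hw : w = v * cs.wordProd (alternatingWord i j k)) (hlen : cs.length w = cs.length v + k)
    (hi : ¬cs.IsRightDescent w i) : M i j = 0 ∨ k + 1 ≤ M i j := by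
  by_contra! hM
  rw [M.symmetric] at hM
  refine cs.not_isReduced_alternatingWord j i (m := k + 1) hM.1 hM.2 ?_
  have hwi : w * cs.simple i = v * cs.wordProd (alternatingWord j i (k + 1)) := by
    rw [alternatingWord_succ, cs.wordProd_concat, ← mul_assoc, ← hw]
  have hlen' := cs.not_isRightDescent_iff.1 hi
  rw [hwi] at hlen'
  have hmul := cs.length_mul_le v (cs.wordProd (alternatingWord j i (k + 1)))
  have hword := cs.length_wordProd_le (alternatingWord j i (k + 1))
  rw [length_alternatingWord] at hword
  rw [CoxeterSystem.IsReduced, length_alternatingWord]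
  lia

/-- The geometric representation of a Coxeter group. -/
noncomputable def rep : W →* ((B →₀ ℝ) ≃ₗ[ℝ] (B →₀ ℝ)) := cs.lift ⟨reflect M, reflect_isLiftable M⟩

lemma rep_simple (i : B) : rep cs (cs.simple i) = reflect M i :=
  cs.lift_apply_simple (reflect_isLiftable M) i

lemma rep_mul_apply (g h : W) (v : B →₀ ℝ) : rep cs (g * h) v = rep cs g (rep cs h v) := by
  rw [map_mul, LinearEquiv.mul_apply]

lemma rep_inv_apply_rep_apply (g : W) (v : B →₀ ℝ) : rep cs g⁻¹ (rep cs g v) = v := by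
  rw [← rep_mul_apply, inv_mul_cancel, map_one, LinearEquiv.coe_one, id]

lemma rep_mul_simple_simpleRoot (g : W) (i : B) :
    rep cs (g * cs.simple i) (simpleRoot i) = -rep cs g (simpleRoot i) := by
  rw [rep_mul_apply, rep_simple, reflect_simpleRoot_self, map_neg]

lemma form_rep_rep (g : W) (v w : B →₀ ℝ) : form M (rep cs g v) (rep cs g w) = form M v w := by
  induction g using cs.simple_induction_left with
  | one => simp
  | mul_simple_left g i ih =>
    rw [rep_mul_apply, rep_mul_apply, rep_simple, form_reflect_reflect, ih]

lemma rep_wordProd_alternatingWord_simpleRoot (i j : B) (k : ℕ) :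
    rep cs (cs.wordProd (alternatingWord i j k)) (simpleRoot i) =
      (S ℝ k).eval (-gram M i j) • simpleRoot (if Even k then i else j) +
        (S ℝ (k - 1)).eval (-gram M i j) • simpleRoot (if Even k then j else i) := by
  rw [cs.prod_alternatingWord_eq_mul_pow, rep_mul_apply, map_pow, map_mul, rep_simple, rep_simple,
    reflect_mul_reflect_pow_simpleRoot]
  obtain ⟨n, rfl | rfl⟩ := Nat.even_or_odd' k
  · simp
  · have hS : S ℝ (2 * n + 1) = .X * S ℝ (2 * n) - S ℝ (2 * n - 1) := S_add_one ..
    simp only [Nat.not_even_bit1, if_false, Nat.mul_add_div two_pos, Nat.reduceDiv, add_zero,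
      rep_simple, map_add, map_smul, reflect_simpleRoot, gram_self, gram_comm M j i, Nat.cast_add,
      Nat.cast_mul, Nat.cast_ofNat, Nat.cast_one, add_sub_cancel_right, hS, Polynomial.eval_sub,
      Polynomial.eval_mul, Polynomial.eval_X]
    module

lemma rep_simpleRoot_nonneg {w : W} {i : B} (hi : ¬cs.IsRightDescent w i) :
    0 ≤ rep cs w (simpleRoot i) := by
  induction hn : cs.length w using Nat.strong_induction_on generalizing w i with
  | _ n ih =>
    rcases eq_or_ne w 1 with rfl | hw
    · simp
    obtain ⟨j, hj⟩ := cs.exists_rightDescent_of_ne_one hw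
    have hij : i ≠ j := by rintro rfl; exact hi hj
    obtain ⟨v, k, hv, hlen, hvi, hvj⟩ := exists_eq_mul_wordProd_alternatingWord cs j hi
    have hk : k ≠ 0 := by
      rintro rfl
      rw [alternatingWord, cs.wordProd_nil, mul_one] at hv
      exact hvj (hv ▸ hj)
    have hkM := add_one_le_of_not_isRightDescent hv hlen hi
    have hMij := M.off_diagonal i j hij
    have hS : 0 ≤ (S ℝ k).eval (-gram M i j) := by
      have := eval_S_two_mul_cos_pi_div_nonneg hMij hkM
      push_cast at this
      rwa [add_sub_cancel_right, ← neg_neg (2 * cos _), ← gram] at this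
    have hS' : 0 ≤ (S ℝ (k - 1)).eval (-gram M i j) := by
      have := eval_S_two_mul_cos_pi_div_nonneg hMij (n := k) (hkM.imp_right (by lia))
      rwa [← neg_neg (2 * cos _), ← gram] at this
    have hpos (l : B) (hl : l = i ∨ l = j) : 0 ≤ rep cs v (simpleRoot l) :=
      ih _ (by lia) (by rcases hl with rfl | rfl <;> assumption) rfl
    rw [hv, rep_mul_apply, rep_wordProd_alternatingWord_simpleRoot, map_add, map_smul, map_smul]
    refine add_nonneg (smul_nonneg hS (hpos _ ?_)) (smul_nonneg hS' (hpos _ ?_)) <;>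
      split_ifs <;> simp

lemma rep_simpleRoot_nonpos {w : W} {i : B} (hi : cs.IsRightDescent w i) :
    rep cs w (simpleRoot i) ≤ 0 := by
  have := rep_simpleRoot_nonneg cs (cs.isRightDescent_iff_not_isRightDescent_mul.1 hi)
  rwa [rep_mul_simple_simpleRoot, neg_nonneg] at this

/-- The root system of a Coxeter system: the orbit of the simple roots under the group. -/
def IsRoot (β : B →₀ ℝ) : Prop := ∃ w i, rep cs w (simpleRoot i) = β

variable {cs} {β : B →₀ ℝ}

lemma isRoot_simpleRoot (i : B) : IsRoot cs (simpleRoot i) := ⟨1, i, by simp⟩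

lemma IsRoot.rep (hβ : IsRoot cs β) (g : W) : IsRoot cs (rep cs g β) := by
  obtain ⟨w, i, rfl⟩ := hβ
  exact ⟨g * w, i, rep_mul_apply ..⟩

lemma IsRoot.reflect (hβ : IsRoot cs β) (i : B) : IsRoot cs (reflect M i β) :=
  rep_simple cs i ▸ hβ.rep (cs.simple i)

lemma IsRoot.neg (hβ : IsRoot cs β) : IsRoot cs (-β) := by
  obtain ⟨w, i, rfl⟩ := hβ
  exact ⟨w * cs.simple i, i, rep_mul_simple_simpleRoot ..⟩

lemma IsRoot.form_self (hβ : IsRoot cs β) : form M β β = 2 := by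
  obtain ⟨w, i, rfl⟩ := hβ
  rw [form_rep_rep, form_simpleRoot_simpleRoot, gram_self]

lemma IsRoot.ne_zero (hβ : IsRoot cs β) : β ≠ 0 := by
  rintro rfl
  have := hβ.form_self
  simp at this

lemma IsRoot.nonneg_or_nonpos (hβ : IsRoot cs β) : 0 ≤ β ∨ β ≤ 0 := by
  obtain ⟨w, i, rfl⟩ := hβ
  by_cases hi : cs.IsRightDescent w i
  · exact .inr (rep_simpleRoot_nonpos cs hi)
  · exact .inl (rep_simpleRoot_nonneg cs hi)

lemma IsRoot.eq_one_of_smul_simpleRoot {c : ℝ} {i : B} (hc : 0 ≤ c)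
    (h : IsRoot cs (c • simpleRoot i)) : c = 1 := by
  have := h.form_self
  simp only [map_smul, LinearMap.smul_apply, form_simpleRoot_simpleRoot, gram_self,
    smul_eq_mul] at this
  nlinarith

lemma IsRoot.reflect_nonneg (hβ : IsRoot cs β) (hβ0 : 0 ≤ β) {i : B} (hi : β ≠ simpleRoot i) :
    0 ≤ TitsRepresentation.reflect M i β := by
  obtain ⟨k, hki, hk⟩ : ∃ k, k ≠ i ∧ β k ≠ 0 := by
    by_contra! hk
    have hsmul : β = β i • simpleRoot i := by
      ext k
      rcases eq_or_ne k i with rfl | hki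
      · simp
      · simp [hki.symm, hk k hki]
    have hone := IsRoot.eq_one_of_smul_simpleRoot (hβ0 i) (hsmul ▸ hβ)
    exact hi (by rw [hsmul, hone, one_smul])
  refine (hβ.reflect i).nonneg_or_nonpos.resolve_right fun hneg => hk (le_antisymm ?_ (hβ0 k))
  simpa [reflect_apply, hki.symm] using hneg k

/-- The positive roots that a group element makes negative. -/
def inversions (cs : CoxeterSystem M W) (w : W) : Set (B →₀ ℝ) :=
  {β | IsRoot cs β ∧ 0 ≤ β ∧ ¬0 ≤ rep cs w β}

lemma finite_inversions (cs : CoxeterSystem M W) (w : W) : (inversions cs w).Finite := by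
  induction w using cs.simple_induction_right with
  | one => simp +contextual [inversions]
  | mul_simple_right w i ih =>
    refine ((ih.image (reflect M i)).insert (simpleRoot i)).subset ?_
    rintro β ⟨hβ, hβ0, hneg⟩
    rw [rep_mul_apply, rep_simple] at hneg
    refine or_iff_not_imp_left.2 fun hi => ⟨reflect M i β, ?_, reflect_reflect M i β⟩
    exact ⟨hβ.reflect i, hβ.reflect_nonneg hβ0 hi, hneg⟩

end Positivity

/-! ### Finite subgroups -/

section FixedPoint

open Module (Dual)

variable {B W : Type*} [Group W] {M : CoxeterMatrix B} (cs : CoxeterSystem M W)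

/-- The positive roots on which a linear form is negative. -/
def negRoots (y : Dual ℝ (B →₀ ℝ)) : Set (B →₀ ℝ) := {β | IsRoot cs β ∧ 0 ≤ β ∧ y β < 0}

/-- A linear form is dominant if it lies in the closed fundamental chamber. -/
def IsDominant (z : Dual ℝ (B →₀ ℝ)) : Prop := ∀ i, 0 ≤ z (simpleRoot i)

/-- The walls of the fundamental chamber containing a given linear form. -/
def walls (z : Dual ℝ (B →₀ ℝ)) : Set B := {i | z (simpleRoot i) = 0}

/-- The stabilizer of a linear form in a Coxeter group, for the dual of the geometric
representation. -/
noncomputable def formStabilizer (z : Dual ℝ (B →₀ ℝ)) : Subgroup W where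
  carrier := {g | ∀ v, z (rep cs g v) = z v}
  one_mem' v := by simp
  mul_mem' hg hh v := by rw [rep_mul_apply, hg, hh]
  inv_mem' {g} hg v := by rw [← hg, ← rep_mul_apply, mul_inv_cancel, map_one, LinearEquiv.coe_one,
    id]

lemma conjSubgroup_formStabilizer (y : Dual ℝ (B →₀ ℝ)) (u : W) :
    conjSubgroup u (formStabilizer cs (y ∘ₗ (rep cs u).toLinearMap)) = formStabilizer cs y := by
  ext g
  rw [conjSubgroup, Subgroup.mem_map_equiv, MulAut.conj_symm_apply]
  change (∀ v, y (rep cs u (rep cs (u⁻¹ * g * u) v)) = y (rep cs u v)) ↔ ∀ v, y (rep cs g v) = y v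
  rw [(rep cs u).surjective.forall (p := fun v => y (rep cs g v) = y v)]
  simp only [← rep_mul_apply, mul_assoc, mul_inv_cancel_left]

variable {cs}

lemma negRoots_comp_reflect_subset {y : Dual ℝ (B →₀ ℝ)} {i : B} (hi : y (simpleRoot i) < 0) :
    negRoots cs (y ∘ₗ (reflect M i).toLinearMap) ⊆
      reflect M i '' (negRoots cs y \ {simpleRoot i}) := by
  rintro β ⟨hβ, hβ0, hneg⟩
  have hβi : β ≠ simpleRoot i := by
    rintro rfl
    have : 0 < y (reflect M i (simpleRoot i)) := by rw [reflect_simpleRoot_self, map_neg]; linarith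
    exact this.not_gt hneg
  refine ⟨reflect M i β, ⟨⟨hβ.reflect i, hβ.reflect_nonneg hβ0 hβi, hneg⟩, fun h => ?_⟩,
    reflect_reflect M i β⟩
  have hβ' : β = -simpleRoot i := by rw [← reflect_simpleRoot_self M, ← h, reflect_reflect]
  have := hβ0 i
  norm_num [hβ'] at this

/-- Reflecting in a simple root where the form is negative removes one root from `negRoots`. -/
lemma exists_isDominant {y : Dual ℝ (B →₀ ℝ)} (hy : (negRoots cs y).Finite) :
    ∃ u, IsDominant (y ∘ₗ (rep cs u).toLinearMap) := by
  induction hn : (negRoots cs y).ncard using Nat.strong_induction_on generalizing y with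
  | _ n ih =>
    by_cases hdom : IsDominant y
    · exact ⟨1, fun i => by simpa using hdom i⟩
    obtain ⟨i, hi⟩ : ∃ i, y (simpleRoot i) < 0 := by simpa [IsDominant] using hdom
    have hsub := negRoots_comp_reflect_subset (cs := cs) hi
    have hfin : (negRoots cs y \ {simpleRoot i}).Finite := hy.sdiff
    have hcard : (negRoots cs (y ∘ₗ (reflect M i).toLinearMap)).ncard < n := calc
      _ ≤ (reflect M i '' (negRoots cs y \ {simpleRoot i})).ncard :=
        Set.ncard_le_ncard hsub (hfin.image _)
      _ ≤ (negRoots cs y \ {simpleRoot i}).ncard := Set.ncard_image_le hfin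
      _ < (negRoots cs y).ncard :=
        Set.ncard_sdiff_singleton_lt_of_mem ⟨isRoot_simpleRoot i, simpleRoot_nonneg i, hi⟩ hy
      _ = n := hn
    obtain ⟨u, hu⟩ := ih _ hcard ((hfin.image _).subset hsub) rfl
    refine ⟨cs.simple i * u, fun k => ?_⟩
    have := hu k
    simpa only [LinearMap.comp_apply, LinearEquiv.coe_coe, rep_mul_apply, rep_simple] using this

variable {z : Dual ℝ (B →₀ ℝ)}

lemma IsDominant.nonneg (hz : IsDominant z) {v : B →₀ ℝ} (hv : 0 ≤ v) : 0 ≤ z v := by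
  rw [← v.sum_single, map_finsuppSum]
  refine Finset.sum_nonneg fun i _ => ?_
  change 0 ≤ z (Finsupp.single i (v i))
  rw [← Finsupp.smul_single_one, map_smul]
  exact smul_nonneg (hv i) (hz i)

lemma IsDominant.mem_walls_of_isRightDescent (hz : IsDominant z) {g : W}
    (hg : g ∈ formStabilizer cs z) {i : B} (hi : cs.IsRightDescent g i) : i ∈ walls z := by
  have hnonneg : 0 ≤ z (-rep cs g (simpleRoot i)) :=
    hz.nonneg (neg_nonneg.2 (rep_simpleRoot_nonpos cs hi))
  rw [map_neg, hg, neg_nonneg] at hnonneg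
  exact le_antisymm hnonneg (hz i)

variable (cs) in
lemma parabolic_walls_le_formStabilizer (z : Dual ℝ (B →₀ ℝ)) :
    cs.parabolic (walls z) ≤ formStabilizer cs z := by
  refine (Subgroup.closure_le _).2 (Set.image_subset_iff.2 fun i hi v => ?_)
  have hi : z (simpleRoot i) = 0 := hi
  rw [rep_simple, reflect_apply, map_sub, map_smul, hi, smul_zero, sub_zero]

lemma IsDominant.formStabilizer_eq_parabolic (hz : IsDominant z) :
    formStabilizer cs z = cs.parabolic (walls z) := by
  refine le_antisymm (fun g hg => ?_) (parabolic_walls_le_formStabilizer cs z)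
  induction hn : cs.length g using Nat.strong_induction_on generalizing g with
  | _ n ih =>
    rcases eq_or_ne g 1 with rfl | h1
    · exact one_mem _
    obtain ⟨i, hi⟩ := cs.exists_rightDescent_of_ne_one h1
    have hmem : cs.simple i ∈ cs.parabolic (walls z) :=
      Subgroup.subset_closure ⟨i, hz.mem_walls_of_isRightDescent hg hi, rfl⟩
    have hgi : g * cs.simple i ∈ cs.parabolic (walls z) :=
      ih _ (lt_of_lt_of_eq hi hn) _ (mul_mem hg (parabolic_walls_le_formStabilizer cs z hmem)) rfl
    simpa using mul_mem hgi hmem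

lemma IsDominant.isSpherical_walls (hz : IsDominant z)
    (hfin : {β | IsRoot cs β ∧ z β = 0}.Finite) : cs.IsSpherical (walls z) := by
  have := hfin.to_subtype
  have hrep (g : cs.parabolic (walls z)) (β : {β | IsRoot cs β ∧ z β = 0}) :
      z (rep cs g β) = 0 := (parabolic_walls_le_formStabilizer cs z g.2 β).trans β.2.2
  refine Finite.of_injective (β := {β | IsRoot cs β ∧ z β = 0} → {β | IsRoot cs β ∧ z β = 0})
    (fun g β => ⟨rep cs g β, β.2.1.rep _, hrep g β⟩) fun g h hgh => Subtype.ext ?_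
  rw [← inv_mul_eq_one]
  by_contra hne
  obtain ⟨i, hi⟩ := cs.exists_rightDescent_of_ne_one hne
  have hwall := hz.mem_walls_of_isRightDescent
    (parabolic_walls_le_formStabilizer cs z (mul_mem (inv_mem g.2) h.2)) hi
  have heq : rep cs g (simpleRoot i) = rep cs h (simpleRoot i) :=
    congrArg Subtype.val (congrFun hgh ⟨simpleRoot i, isRoot_simpleRoot i, hwall⟩)
  have hneg := rep_simpleRoot_nonpos cs hi
  rw [rep_mul_apply, ← heq, rep_inv_apply_rep_apply] at hneg
  exact (isRoot_simpleRoot (cs := cs) i).ne_zero (le_antisymm hneg (simpleRoot_nonneg i))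

/-- The height of a vector, the sum of its coordinates in the basis of simple roots. -/
noncomputable def height : Dual ℝ (B →₀ ℝ) := Finsupp.linearCombination ℝ fun _ => 1

lemma height_pos {v : B →₀ ℝ} (hv : 0 ≤ v) (h0 : v ≠ 0) : 0 < height v := by
  simp only [height, Finsupp.linearCombination_apply, smul_eq_mul, mul_one]
  exact Finset.sum_pos (fun i hi => (hv i).lt_of_ne' (Finsupp.mem_support_iff.1 hi))
    (Finsupp.support_nonempty_iff.2 h0)

section OrbitHeight

variable (cs) (F : Subgroup W) [Fintype F]

/-- The sum of the translates of the height under a finite subgroup, an invariant linear form. -/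
noncomputable def orbitHeight : Dual ℝ (B →₀ ℝ) := ∑ f : F, height ∘ₗ (rep cs (f : W)).toLinearMap

lemma orbitHeight_apply (v : B →₀ ℝ) : orbitHeight cs F v = ∑ f : F, height (rep cs (f : W) v) := by
  simp [orbitHeight]

lemma le_formStabilizer_orbitHeight : F ≤ formStabilizer cs (orbitHeight cs F) := by
  intro f hf v
  simp only [orbitHeight_apply, ← rep_mul_apply]
  exact Fintype.sum_equiv (Equiv.mulRight (⟨f, hf⟩ : F)) _ _ fun g => by simp

lemma finite_posRoots_orbitHeight_nonpos :
    {β | IsRoot cs β ∧ 0 ≤ β ∧ orbitHeight cs F β ≤ 0}.Finite := by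
  refine (Set.finite_iUnion fun f : F => finite_inversions cs (f : W)).subset ?_
  rintro β ⟨hβ, hβ0, hle⟩
  by_contra hnot
  have hpos (f : F) : 0 < height (rep cs (f : W) β) := by
    refine height_pos ?_ (hβ.rep _).ne_zero
    by_contra hneg
    exact hnot (Set.mem_iUnion.2 ⟨f, hβ, hβ0, hneg⟩)
  rw [orbitHeight_apply] at hle
  exact hle.not_gt (Finset.sum_pos (fun f _ => hpos f) Finset.univ_nonempty)

end OrbitHeight

lemma finite_roots_eq_zero {y : Dual ℝ (B →₀ ℝ)}
    (hy : {β | IsRoot cs β ∧ 0 ≤ β ∧ y β ≤ 0}.Finite) : {β | IsRoot cs β ∧ y β = 0}.Finite := by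
  refine (hy.union hy.neg).subset ?_
  rintro β ⟨hβ, h0⟩
  refine hβ.nonneg_or_nonpos.imp (fun h => ⟨hβ, h, h0.le⟩) fun h => ⟨hβ.neg, neg_nonneg.2 h, ?_⟩
  rw [map_neg, h0, neg_zero]

variable (cs)

/-- Tits' theorem on finite subgroups of Coxeter groups. -/
theorem exists_le_conjSubgroup_parabolic (F : Subgroup W) [Finite F] :
    ∃ u T, cs.IsSpherical T ∧ F ≤ conjSubgroup u (cs.parabolic T) := by
  have := Fintype.ofFinite F
  have hfin := finite_posRoots_orbitHeight_nonpos cs F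
  obtain ⟨u, hu⟩ := exists_isDominant (hfin.subset fun β h => ⟨h.1, h.2.1, h.2.2.le⟩)
  refine ⟨u, _, hu.isSpherical_walls ?_, ?_⟩
  · refine ((finite_roots_eq_zero hfin).preimage (rep cs u).injective.injOn).subset ?_
    exact fun β hβ => ⟨hβ.1.rep u, hβ.2⟩
  · rw [← hu.formStabilizer_eq_parabolic (cs := cs), conjSubgroup_formStabilizer]
    exact le_formStabilizer_orbitHeight cs F

end FixedPoint

/-! ### Groups generated by two involutions -/

section Dihedral

variable {G : Type*} [Group G]

lemma commute_of_mul_sq_eq_one {a b : G} (ha : a * a = 1) (hb : b * b = 1)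
    (hab : (a * b) ^ 2 = 1) : Commute a b := by
  rw [mul_eq_one_iff_eq_inv] at ha hb
  rwa [sq, mul_eq_one_iff_eq_inv, mul_inv_rev, ← ha, ← hb] at hab

variable {s t : G}

lemma mem_zpowers_or_mul_mem_zpowers_of_mem_closure_pair (hs : s * s = 1) (ht : t * t = 1) {g : G}
    (hg : g ∈ Subgroup.closure {s, t}) :
    g ∈ Subgroup.zpowers (s * t) ∨ s * g ∈ Subgroup.zpowers (s * t) := by
  have hs' : s⁻¹ = s := inv_eq_of_mul_eq_one_left hs
  have ht' : t⁻¹ = t := inv_eq_of_mul_eq_one_left ht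
  have hstep (x : G) (hx : x ∈ ({s, t} : Set G)) (g : G)
      (hg : g ∈ Subgroup.zpowers (s * t) ∨ s * g ∈ Subgroup.zpowers (s * t)) :
      x * g ∈ Subgroup.zpowers (s * t) ∨ s * (x * g) ∈ Subgroup.zpowers (s * t) := by
    have hr := Subgroup.mem_zpowers (s * t)
    rcases hx with rfl | rfl
    · rwa [← mul_assoc, hs, one_mul, or_comm]
    · refine hg.symm.imp (fun hg => ?_) fun hg => ?_
      · simpa [hs', ht', mul_assoc, ← mul_assoc s s, hs] using mul_mem (inv_mem hr) hg
      · simpa [mul_assoc] using mul_mem hr hg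
  induction hg using Subgroup.closure_induction_left with
  | one => exact .inl (one_mem _)
  | mul_left x hx g _ ih => exact hstep x hx g ih
  | inv_mul_cancel x hx g _ ih =>
    have hx' : x⁻¹ = x := by rcases hx with rfl | rfl <;> assumption
    exact hx'.symm ▸ hstep x hx g ih

lemma mul_self_eq_one_of_mul_mem_zpowers (hs : s * s = 1) (ht : t * t = 1) {x : G}
    (hx : s * x ∈ Subgroup.zpowers (s * t)) : x * x = 1 := by
  obtain ⟨n, hn⟩ := hx
  have hs' : s⁻¹ = s := inv_eq_of_mul_eq_one_left hs
  have ht' : t⁻¹ = t := inv_eq_of_mul_eq_one_left ht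
  obtain rfl : x = s * (s * t) ^ n := by 
    rw [show (s * t) ^ n = s * x from hn, ← mul_assoc, hs, one_mul]
  have hconj : s * (s * t) ^ n * s = ((s * t) ^ n)⁻¹ := by
    rw [← inv_zpow, mul_inv_rev, hs', ht']
    simpa [hs', ← mul_assoc, hs] using (conj_zpow (a := s) (b := s * t) (i := n)).symm
  rw [← mul_assoc, hconj, inv_mul_cancel]

lemma mul_mem_zpowers_of_orderOf_eq_two (hs : s * s = 1) (ht : t * t = 1)
    (hodd : Odd (orderOf (s * t))) {x : G} (hx : x ∈ Subgroup.closure {s, t})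
    (hx2 : orderOf x = 2) : s * x ∈ Subgroup.zpowers (s * t) := by
  refine (mem_zpowers_or_mul_mem_zpowers_of_mem_closure_pair hs ht hx).resolve_left fun h => ?_
  exact Nat.not_even_iff_odd.2 hodd (even_iff_two_dvd.2 (hx2 ▸ orderOf_dvd_of_mem_zpowers h))

lemma mul_mul_sq_eq_one_of_mem_closure_pair (hs : s * s = 1) (ht : t * t = 1)
    (hodd : Odd (orderOf (s * t))) {a b c : G} (ha : a ∈ Subgroup.closure {s, t})
    (hb : b ∈ Subgroup.closure {s, t}) (hc : c ∈ Subgroup.closure {s, t}) (ha2 : orderOf a = 2)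
    (hb2 : orderOf b = 2) (hc2 : orderOf c = 2) : (a * b * c) ^ 2 = 1 := by
  have hs' : s⁻¹ = s := inv_eq_of_mul_eq_one_left hs
  have hb' : b⁻¹ = b := inv_eq_of_mul_eq_one_left (by rw [← sq, ← hb2, pow_orderOf_eq_one])
  rw [sq]
  refine mul_self_eq_one_of_mul_mem_zpowers hs ht ?_
  have hprod : s * (a * b * c) = s * a * (s * b)⁻¹ * (s * c) := by
    simp [hs', hb', mul_assoc, ← mul_assoc s s, hs]
  have hmem {x : G} := mul_mem_zpowers_of_orderOf_eq_two hs ht hodd (x := x)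
  rw [hprod]
  exact mul_mem (mul_mem (hmem ha ha2) (inv_mem (hmem hb hb2))) (hmem hc hc2)

end Dihedral

/-! ### Products of three simple reflections -/

section RankThree

variable {B W : Type*} [Group W] {M : CoxeterMatrix B} (cs : CoxeterSystem M W)

lemma simple_injective : Function.Injective cs.simple := by
  intro i j h
  by_contra hij
  have hreflect : reflect M i (simpleRoot i) = reflect M j (simpleRoot i) := by
    rw [← rep_simple cs, h, rep_simple]
  have := DFunLike.congr_fun hreflect i
  norm_num [reflect_simpleRoot, gram_self, hij, Ne.symm hij] at this

lemma orderOf_simple (i : B) : orderOf (cs.simple i) = 2 :=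
  orderOf_eq_prime (cs.simple_sq i) fun h => by simpa [h] using cs.length_simple i

lemma not_commute_simple_of_odd_orderOf {i j : B} (hij : i ≠ j)
    (hodd : Odd (orderOf (cs.simple i * cs.simple j))) :
    ¬Commute (cs.simple i) (cs.simple j) := by
  intro hcomm
  have hsq : (cs.simple i * cs.simple j) ^ 2 = 1 := by
    rw [hcomm.mul_pow, cs.simple_sq, cs.simple_sq, one_mul]
  have hone : cs.simple i * cs.simple j = 1 := orderOf_eq_one_iff.1 <|
    Nat.eq_one_of_dvd_coprimes (Nat.coprime_two_left.2 hodd) (orderOf_dvd_of_pow_eq_one hsq) dvd_rfl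
  rw [mul_eq_one_iff_eq_inv, cs.inv_simple] at hone
  exact hij (simple_injective cs hone)

lemma commute_simple_of_mul_mul_sq_eq_one {i j k : B} (hij : i ≠ j) (hjk : j ≠ k) (hik : i ≠ k)
    (h : (cs.simple i * cs.simple j * cs.simple k) ^ 2 = 1) :
    Commute (cs.simple i) (cs.simple k) := by
  suffices M i k = 2 from commute_of_mul_sq_eq_one (cs.simple_mul_simple_self i)
    (cs.simple_mul_simple_self k) (this ▸ cs.simple_mul_simple_pow i k)
  by_contra h2
  have hrev : cs.simple i * cs.simple j * cs.simple k =
      cs.simple k * cs.simple j * cs.simple i := by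
    rw [sq, mul_eq_one_iff_eq_inv] at h
    simpa [mul_assoc] using h
  have hreflect : reflect M i (reflect M j (reflect M k (simpleRoot i))) =
      reflect M k (reflect M j (reflect M i (simpleRoot i))) := by
    simp only [← rep_simple cs, ← rep_mul_apply, ← mul_assoc, hrev]
  -- comparing the coefficients of `αₖ` gives `2⟨αᵢ, αₖ⟩ = 2⟨αᵢ, αⱼ⟩ ⬝ 2⟨αⱼ, αₖ⟩`
  have hcoeff := DFunLike.congr_fun hreflect k
  simp only [reflect_simpleRoot, map_sub, map_smul, gram_self, Finsupp.sub_apply,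
    Finsupp.smul_apply, smul_eq_mul, Finsupp.single_eq_same, Finsupp.single_eq_of_ne hik.symm,
    Finsupp.single_eq_of_ne hjk.symm, gram_comm M k, gram_comm M j i] at hcoeff
  have := mul_nonneg_of_nonpos_of_nonpos (gram_nonpos (M := M) hij) (gram_nonpos (M := M) hjk)
  have := gram_neg hik h2
  linarith

end RankThree

/-! ### Involutions in finite subgroups -/

section Involutions

variable {B W : Type*} [Group W] {M : CoxeterMatrix B} {cs : CoxeterSystem M W}

lemma isSpherical_pair {i j : B} (h : orderOf (cs.simple i * cs.simple j) ≠ 0) :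
    cs.IsSpherical {i, j} := by
  have hfin : (Subgroup.zpowers (cs.simple i * cs.simple j) : Set W).Finite :=
    finite_zpowers.2 (orderOf_pos_iff.1 (Nat.pos_of_ne_zero h))
  refine (hfin.union (hfin.image (cs.simple i * ·))).subset fun g hg => ?_
  rw [CoxeterSystem.parabolic, Set.image_pair] at hg
  refine (mem_zpowers_or_mul_mem_zpowers_of_mem_closure_pair (cs.simple_mul_simple_self i)
    (cs.simple_mul_simple_self j) hg).imp_right fun hg => ⟨_, hg, ?_⟩
  exact cs.simple_mul_simple_cancel_left i

lemma orderOf_simple_mul_simple_ne_zero {T : Set B} (hT : cs.IsSpherical T) {i j : B} (hi : i ∈ T)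
    (hj : j ∈ T) : orderOf (cs.simple i * cs.simple j) ≠ 0 := by
  have : Finite (cs.parabolic T) := hT
  have hmem : cs.simple i * cs.simple j ∈ cs.parabolic T :=
    mul_mem (Subgroup.subset_closure ⟨i, hi, rfl⟩) (Subgroup.subset_closure ⟨j, hj, rfl⟩)
  rw [← Subgroup.orderOf_mk _ hmem]
  exact (orderOf_pos _).ne'

lemma commute_of_mem_parabolic {T : Set B}
    (hT : ∀ i ∈ T, ∀ j ∈ T, i ≠ j → orderOf (cs.simple i * cs.simple j) = 2) {a b : W}
    (ha : a ∈ cs.parabolic T) (hb : b ∈ cs.parabolic T) : Commute a b := by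
  have : IsMulCommutative (cs.parabolic T) := by
    refine Subgroup.isMulCommutative_closure ?_
    rintro _ ⟨i, hi, rfl⟩ _ ⟨j, hj, rfl⟩
    rcases eq_or_ne i j with rfl | hij
    · rfl
    exact commute_of_mul_sq_eq_one (cs.simple_mul_simple_self i) (cs.simple_mul_simple_self j)
      (hT i hi j hj hij ▸ pow_orderOf_eq_one _)
  exact setLike_mul_comm ha hb

variable
  (h0 : ∀ i j : B, orderOf (cs.simple i * cs.simple j) ≠ 0 →
    Even (orderOf (cs.simple i * cs.simple j)) → orderOf (cs.simple i * cs.simple j) = 2)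
  (h1 : ∀ i j : B, i ≠ j → Odd (orderOf (cs.simple i * cs.simple j)) → cs.IsMaxSpherical {i, j})
include h0 h1

lemma commute_or_mul_mul_sq_eq_one_of_mem_parabolic {T : Set B} (hT : cs.IsSpherical T) {a b c : W}
    (ha : a ∈ cs.parabolic T) (hb : b ∈ cs.parabolic T) (hc : c ∈ cs.parabolic T)
    (ha2 : orderOf a = 2) (hb2 : orderOf b = 2) (hc2 : orderOf c = 2) :
    Commute a c ∨ (a * b * c) ^ 2 = 1 := by
  by_cases hodd : ∃ i ∈ T, ∃ j ∈ T, i ≠ j ∧ Odd (orderOf (cs.simple i * cs.simple j))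
  · obtain ⟨i, hi, j, hj, hij, hodd⟩ := hodd
    obtain rfl : T = {i, j} := (h1 i j hij hodd).2 T hT (Set.pair_subset hi hj)
    rw [CoxeterSystem.parabolic, Set.image_pair] at ha hb hc
    exact .inr <| mul_mul_sq_eq_one_of_mem_closure_pair (cs.simple_mul_simple_self i)
      (cs.simple_mul_simple_self j) hodd ha hb hc ha2 hb2 hc2
  · push Not at hodd
    refine .inl <| commute_of_mem_parabolic (fun i hi j hj hij => ?_) ha hc
    exact h0 i j (orderOf_simple_mul_simple_ne_zero hT hi hj)
      (Nat.not_odd_iff_even.1 (hodd i hi j hj hij))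

lemma commute_or_mul_mul_sq_eq_one_of_mem_finite (F : Subgroup W) [Finite F] {a b c : W}
    (ha : a ∈ F) (hb : b ∈ F) (hc : c ∈ F) (ha2 : orderOf a = 2) (hb2 : orderOf b = 2)
    (hc2 : orderOf c = 2) : Commute a c ∨ (a * b * c) ^ 2 = 1 := by
  obtain ⟨u, T, hT, hF⟩ := exists_le_conjSubgroup_parabolic cs F
  obtain ⟨a, ha', rfl⟩ := hF ha
  obtain ⟨b, hb', rfl⟩ := hF hb
  obtain ⟨c, hc', rfl⟩ := hF hc
  have hinj : Function.Injective (MulAut.conj u).toMonoidHom := (MulAut.conj u).injective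
  rw [orderOf_injective _ hinj] at ha2 hb2 hc2
  refine (commute_or_mul_mul_sq_eq_one_of_mem_parabolic h0 h1 hT ha' hb' hc' ha2 hb2 hc2).imp
    (fun h => h.map _) fun h => ?_
  rw [← map_mul, ← map_mul, ← map_pow, h, map_one]

end Involutions

end TitsRepresentation

open TitsRepresentation in
theorem condition_one_transfers_general {B B' W W' : Type*} [Group W] [Group W']
    {M : CoxeterMatrix B} (cs : CoxeterSystem M W)
    {M' : CoxeterMatrix B'} (cs' : CoxeterSystem M' W')
    (h0 : ∀ i j : B, orderOf (cs.simple i * cs.simple j) ≠ 0 →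
      Even (orderOf (cs.simple i * cs.simple j)) → orderOf (cs.simple i * cs.simple j) = 2)
    (h1 : ∀ i j : B, i ≠ j → Odd (orderOf (cs.simple i * cs.simple j)) →
      cs.IsMaxSpherical {i, j})
    (φ : W' →* W) (hφ : Function.Injective φ) :
    ∀ i' j' : B', i' ≠ j' → Odd (orderOf (cs'.simple i' * cs'.simple j')) →
      cs'.IsMaxSpherical {i', j'} := by
  intro i j hij hodd
  refine ⟨isSpherical_pair hodd.pos.ne', fun U hU hsub => hsub.antisymm' fun k hk => ?_⟩
  by_contra! hkij
  obtain ⟨hki, hkj⟩ : k ≠ i ∧ k ≠ j := by simpa using hkij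
  have : Finite (cs'.parabolic U) := hU
  have : Finite ((cs'.parabolic U).map φ) :=
    (Set.toFinite (cs'.parabolic U : Set W')).image φ
  have hmem (l : B') (hl : l ∈ U) : φ (cs'.simple l) ∈ (cs'.parabolic U).map φ :=
    Subgroup.mem_map_of_mem φ (Subgroup.subset_closure ⟨l, hl, rfl⟩)
  have horder (l : B') : orderOf (φ (cs'.simple l)) = 2 := by
    rw [orderOf_injective φ hφ, orderOf_simple]
  refine not_commute_simple_of_odd_orderOf cs' hij hodd ?_
  rcases commute_or_mul_mul_sq_eq_one_of_mem_finite h0 h1 _ (hmem i (hsub (by simp))) (hmem k hk)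
    (hmem j (hsub (by simp))) (horder i) (horder k) (horder j) with hcomm | hsq
  · exact hcomm.of_map hφ
  · rw [← map_mul, ← map_mul, ← map_pow, map_eq_one_iff φ hφ] at hsq
    exact commute_simple_of_mul_mul_sq_eq_one cs' hki.symm hkj hij hsq

/-- Conditions (0)–(3) on `(W,S)` transfer through an isomorphism `φ : W → W'`:
the target system satisfies (1'): if `s' ≠ t'` and `m'(s',t')` is odd then
`{s',t'}` is a maximal spherical subset of `S'`. -/
theorem condition_one_transfers {B B' : Type*} [Fintype B] [Fintype B']
    {W W' : Type*} [Group W] [Group W']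
    {M : CoxeterMatrix B} (cs : CoxeterSystem M W)
    {M' : CoxeterMatrix B'} (cs' : CoxeterSystem M' W')
    (h0 : ∀ i j : B, orderOf (cs.simple i * cs.simple j) ≠ 0 →
      Even (orderOf (cs.simple i * cs.simple j)) → orderOf (cs.simple i * cs.simple j) = 2)
    (h1 : ∀ i j : B, i ≠ j → Odd (orderOf (cs.simple i * cs.simple j)) →
      cs.IsMaxSpherical {i, j})
    (h2 : ¬ ∃ i j k : B, i ≠ j ∧ j ≠ k ∧ i ≠ k ∧
      Odd (orderOf (cs.simple i * cs.simple j)) ∧ Odd (orderOf (cs.simple j * cs.simple k)))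
    (h3 : ∀ i j : B, i ≠ j → Odd (orderOf (cs.simple i * cs.simple j)) →
      {T : Set B | cs.IsMaxSpherical T ∧ (T ∩ {i, j}).Nonempty}.ncard ≤ 2)
    (φ : W ≃* W') :
    ∀ i' j' : B', i' ≠ j' → Odd (orderOf (cs'.simple i' * cs'.simple j')) →
      cs'.IsMaxSpherical {i', j'} :=
  condition_one_transfers_general cs cs' h0 h1 φ.symm.toMonoidHom φ.symm.injective
end

section
/- Let (W,S) be a Coxeter system satisfying: (0) for all s,t ∈ S with m(s,t) even, m(s,t) = 2; (1) for all s ≠ t ∈ S with m(s,t) odd, {s,t} is a maximal spherical subset of S; (2) there is no three-element subset {s,t,u} ⊆ S such that m(s,t) and m(t,u) are both odd; (3) for all s ≠ t ∈ S with m(s,t) odd, the number of maximal spherical subsets of S intersecting {s,t} is at most two. Let (W',S') be a Coxeter system and suppose there exists a group isomorphism φ : W → W'. Then there does not exist a three-element subset {s',t',u'} ⊆ S' such that m'(s',t') and m'(t',u') are both odd. -/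
/-!
Odd exponents are the only source of elements of odd order in `W`. By (1) and (3) an odd edge
`{s, t}` has a pendant end `t`, joined to no other generator by a finite exponent, and by (2) no two
of them share a vertex. So `W` splits visually as an amalgamated product of the dihedral group
`W_{s,t}` and the parabolic subgroup of the remaining generators, over `⟨s⟩`. Splitting off
everything, a nontrivial element of odd order inverted by an involution `r` is conjugate to a
rotation in some `W_{s,t}`, with `r` conjugate to `s`. The centralizer of such an `r` is an
elementary abelian `2`-group meeting the commutator subgroup trivially, and any two elements of odd
order inverted by `r` commute up to conjugation by an element `c` of this centralizer.

In `W'`, if `m'(s,t)` and `m'(t,u)` are odd, then `t` inverts both `st` and `tu`. Retracting `W'`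
onto the odd component of `t`, where every element is trivial or equal to `t` modulo the commutator
subgroup, forces the image of `c` to be `1` or `t`. Hence `st` and `tu` commute, which the
reflection representation excludes.
-/

namespace ConditionTwo

/-! ### Internal amalgamated products -/

section Amalgam

variable {ι G : Type*} [Group G]

/-- `IsReducedProd A C n i j p` says that `p` is a product of `n ≥ 1` syllables taken from the
subgroups `A _` but not from `C`, consecutive ones from different subgroups, the first one from
`A i` and the last one from `A j`. -/
inductive IsReducedProd (A : ι → Subgroup G) (C : Subgroup G) : ℕ → ι → ι → G → Prop
  | of {i x} : x ∈ A i → x ∉ C → IsReducedProd A C 1 i i x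
  | cons {n i j k x p} : x ∈ A i → x ∉ C → i ≠ j → IsReducedProd A C n j k p →
      IsReducedProd A C (n + 1) i k (x * p)

/-- The subgroup generated by the `A i` is their amalgamated product over the common subgroup `C`.
This is phrased through the normal form theorem: no reduced product lies in `C`. -/
structure IsAmalgam (A : ι → Subgroup G) (C : Subgroup G) : Prop where
  le (i : ι) : C ≤ A i
  notMem {n : ℕ} {i j : ι} {p : G} : IsReducedProd A C n i j p → p ∉ C

variable {A : ι → Subgroup G} {C : Subgroup G} {n : ℕ} {i j k : ι} {x c g p q : G}

namespace IsReducedProd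

theorem mul {m : ℕ} {l : ι} (hp : IsReducedProd A C m i j p) (hjk : j ≠ k)
    (hq : IsReducedProd A C n k l q) : IsReducedProd A C (m + n) i l (p * q) := by
  induction hp with
  | of hx hxC => exact Nat.add_comm n 1 ▸ .cons hx hxC hjk hq
  | cons hx hxC hne _ ih =>
    rw [mul_assoc, Nat.add_right_comm]
    exact .cons hx hxC hne (ih hjk)

theorem inv (hp : IsReducedProd A C n i j p) : IsReducedProd A C n j i p⁻¹ := by
  induction hp with
  | of hx hxC => exact .of (inv_mem hx) (mt inv_mem_iff.1 hxC)
  | cons hx hxC hne _ ih =>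
    rw [mul_inv_rev]
    exact ih.mul hne.symm (.of (inv_mem hx) (mt inv_mem_iff.1 hxC))

theorem exists_pow_succ (hp : IsReducedProd A C n i j p) (hij : i ≠ j) (m : ℕ) :
    ∃ l, IsReducedProd A C l i j (p ^ (m + 1)) := by
  induction m with
  | zero => exact ⟨n, by simpa only [zero_add, pow_one] using hp⟩
  | succ m ih =>
    obtain ⟨l, hl⟩ := ih
    exact ⟨l + n, pow_succ p (m + 1) ▸ hl.mul hij.symm hp⟩

theorem conj (hp : IsReducedProd A C n i j p) (hjk : j ≠ k) (hx : x ∈ A k) (hxC : x ∉ C) :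
    ∃ m, IsReducedProd A C m i i (p * x * p⁻¹) :=
  ⟨_, (hp.mul hjk (.of hx hxC)).mul hjk.symm hp.inv⟩

theorem eq_or_exists_snoc (hp : IsReducedProd A C n i j p) :
    (n = 1 ∧ i = j ∧ p ∈ A j ∧ p ∉ C) ∨ ∃ m k q, ∃ y ∈ A j,
      n = m + 1 ∧ y ∉ C ∧ k ≠ j ∧ IsReducedProd A C m i k q ∧ p = q * y := by
  induction hp with
  | of hx hxC => exact .inl ⟨rfl, rfl, hx, hxC⟩
  | @cons n i j k x p hx hxC hne hp ih =>
    right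
    rcases ih with ⟨rfl, rfl, hpA, hpC⟩ | ⟨m, l, q, y, hy, rfl, hyC, hlk, hq, rfl⟩
    · exact ⟨1, i, x, p, hpA, rfl, hpC, hne, .of hx hxC, rfl⟩
    · exact ⟨m + 1, l, x * q, y, hy, rfl, hyC, hlk, .cons hx hxC hne hq, (mul_assoc _ _ _).symm⟩

theorem mul_left_of_mem (hCA : ∀ i, C ≤ A i) (hp : IsReducedProd A C n i j p) (hc : c ∈ C) :
    IsReducedProd A C n i j (c * p) := by
  cases hp with
  | of hx hxC => exact .of (mul_mem (hCA _ hc) hx) (mt (C.mul_mem_cancel_left hc).1 hxC)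
  | cons hx hxC hne hp =>
    rw [← mul_assoc]
    exact .cons (mul_mem (hCA _ hc) hx) (mt (C.mul_mem_cancel_left hc).1 hxC) hne hp

theorem mul_left (hCA : ∀ i, C ≤ A i) (hp : IsReducedProd A C n j k p) (hx : x ∈ A i) :
    x * p ∈ C ∨ ∃ m l, IsReducedProd A C m l k (x * p) := by
  by_cases hxC : x ∈ C
  · exact .inr ⟨n, j, hp.mul_left_of_mem hCA hxC⟩
  obtain hij | rfl := ne_or_eq i j
  · exact .inr ⟨n + 1, i, .cons hx hxC hij hp⟩
  cases hp with
  | of hy =>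
    rw [or_iff_not_imp_left]
    exact fun hxy ↦ ⟨1, _, .of (mul_mem hx hy) hxy⟩
  | @cons m _ l _ y q hy hyC hne hq =>
    rw [← mul_assoc]
    by_cases hxy : x * y ∈ C
    · exact .inr ⟨m, l, hq.mul_left_of_mem hCA hxy⟩
    · exact .inr ⟨m + 1, i, .cons (mul_mem hx hy) hxy hne hq⟩

theorem exists_neWord (hp : IsReducedProd A C n i j p) (hCA : ∀ i, C ≤ A i)
    (f : G →* Monoid.PushoutI fun i ↦ Subgroup.inclusion (hCA i))
    (hf : ∀ i (a : A i), f a = Monoid.PushoutI.of i a) :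
    ∃ w : Monoid.CoprodI.NeWord (fun i ↦ A i) i j, Monoid.PushoutI.ofCoprodI w.prod = f p ∧
      ∀ l ∈ w.toList, (l.2 : G) ∉ C := by
  have ne_one {i x} (hx : x ∈ A i) (hxC : x ∉ C) : (⟨x, hx⟩ : A i) ≠ 1 := by
    intro h
    obtain rfl : x = 1 := Subtype.ext_iff.1 h
    exact hxC C.one_mem
  induction hp with
  | @of i x hx hxC =>
    refine ⟨.singleton _ (ne_one hx hxC), ?_, by simpa using hxC⟩
    rw [Monoid.CoprodI.NeWord.prod_singleton, Monoid.PushoutI.ofCoprodI_of, ← hf]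
  | @cons _ i j k x p hx hxC hne _ ih =>
    obtain ⟨w, hw, hwC⟩ := ih
    refine ⟨.append (.singleton _ (ne_one hx hxC)) hne w, ?_, by simpa [hxC] using hwC⟩
    rw [Monoid.CoprodI.NeWord.append_prod, map_mul, hw, map_mul,
      Monoid.CoprodI.NeWord.prod_singleton, Monoid.PushoutI.ofCoprodI_of, ← hf]

end IsReducedProd

namespace IsAmalgam

theorem of_hom_pushoutI (hCA : ∀ i, C ≤ A i)
    (f : G →* Monoid.PushoutI fun i ↦ Subgroup.inclusion (hCA i))
    (hf : ∀ i (a : A i), f a = Monoid.PushoutI.of i a) : IsAmalgam A C where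
  le := hCA
  notMem {n i j p} hp hpC := by
    obtain ⟨w, hw, hwC⟩ := hp.exists_neWord hCA f hf
    have hred : Monoid.PushoutI.Reduced (fun i ↦ Subgroup.inclusion (hCA i)) w.toWord := by
      rintro l hl ⟨c, hc⟩
      exact hwC l hl (hc ▸ c.2)
    refine w.toList_ne_nil (congrArg Monoid.CoprodI.Word.toList (hred.eq_empty_of_mem_range
      (fun i ↦ Subgroup.inclusion_injective (hCA i)) ⟨⟨p, hpC⟩, ?_⟩))
    rw [← Monoid.PushoutI.of_apply_eq_base _ i, ← hf]
    exact hw.symm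

theorem mem_or_exists_isReducedProd (hA : IsAmalgam A C) (hg : g ∈ ⨆ i, A i) :
    g ∈ C ∨ ∃ n i j, IsReducedProd A C n i j g := by
  have mul_left {i x y} (hx : x ∈ A i) (hy : y ∈ C ∨ ∃ n j k, IsReducedProd A C n j k y) :
      x * y ∈ C ∨ ∃ n j k, IsReducedProd A C n j k (x * y) := by
    rcases hy with hy | ⟨n, j, k, hy⟩
    · by_cases hxC : x ∈ C
      · exact .inl (mul_mem hxC hy)
      · exact .inr ⟨1, i, i, .of (mul_mem hx (hA.le i hy)) (mt (C.mul_mem_cancel_right hy).1 hxC)⟩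
    · rcases hy.mul_left hA.le hx with hxy | ⟨m, l, hxy⟩
      exacts [.inl hxy, .inr ⟨m, l, k, hxy⟩]
  rw [Subgroup.iSup_eq_closure] at hg
  induction hg using Subgroup.closure_induction_left with
  | one => exact .inl C.one_mem
  | mul_left x hx y _ ih =>
    obtain ⟨i, hx⟩ := Set.mem_iUnion.1 hx
    exact mul_left hx ih
  | inv_mul_cancel x hx y _ ih =>
    obtain ⟨i, hx⟩ := Set.mem_iUnion.1 hx
    exact mul_left (inv_mem hx) ih

theorem notMem_of_isReducedProd (hA : IsAmalgam A C) (hp : IsReducedProd A C n i j p)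
    (hik : i ≠ k) : p ∉ A k := by
  intro hpA
  have hp1 : IsReducedProd A C (1 + n) k j (p⁻¹ * p) :=
    .mul (.of (inv_mem hpA) (mt inv_mem_iff.1 (hA.notMem hp))) hik.symm hp
  exact hA.notMem hp1 (inv_mul_cancel p ▸ C.one_mem)

theorem conj_notMem (hA : IsAmalgam A C) (hp : IsReducedProd A C n j k p) (hki : k ≠ i)
    (hx : x ∈ A i) (hxC : x ∉ C) : p * x * p⁻¹ ∉ A i := by
  obtain hji | rfl := ne_or_eq j i
  · obtain ⟨m, hm⟩ := hp.conj hki hx hxC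
    exact hA.notMem_of_isReducedProd hm hji
  cases hp with
  | of => exact absurd rfl hki
  | @cons n _ l _ y q hy _ hne hq =>
    obtain ⟨m, hm⟩ := hq.conj hki hx hxC
    have hqx := hA.notMem_of_isReducedProd hm hne.symm
    rw [show y * q * x * (y * q)⁻¹ = y * (q * x * q⁻¹) * y⁻¹ by group]
    rwa [Subgroup.mul_mem_cancel_right _ (inv_mem hy), Subgroup.mul_mem_cancel_left _ hy]

theorem mem_of_conj_mem (hA : IsAmalgam A C) (hx : x ∈ A i)
    (hxC : ∀ a ∈ A i, a * x * a⁻¹ ∉ C) (hg : g ∈ ⨆ i, A i) (hgx : g * x * g⁻¹ ∈ A i) :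
    g ∈ A i := by
  rcases hA.mem_or_exists_isReducedProd hg with hgC | ⟨n, j, k, hp⟩
  · exact hA.le i hgC
  obtain hki | rfl := ne_or_eq k i
  · have hx' : x ∉ C := by simpa using hxC 1 (one_mem _)
    exact absurd hgx (hA.conj_notMem hp hki hx hx')
  rcases hp.eq_or_exists_snoc with ⟨-, -, hgA, -⟩ | ⟨m, l, q, y, hy, -, -, hlk, hq, rfl⟩
  · exact hgA
  · refine absurd ?_ (hA.conj_notMem hq hlk (mul_mem (mul_mem hy hx) (inv_mem hy)) (hxC y hy))
    rwa [show q * (y * x * y⁻¹) * q⁻¹ = q * y * x * (q * y)⁻¹ by group]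

theorem conj_notMem_base (hA : IsAmalgam A C) (hp : IsReducedProd A C n j k p) (hc : c ∈ C)
    (hconj : ∀ y ∈ A k, y * c * y⁻¹ ∈ C → y ∈ C) : p * c * p⁻¹ ∉ C := by
  rcases hp.eq_or_exists_snoc with ⟨-, -, hpA, hpC⟩ | ⟨m, l, q, y, hy, -, hyC, hlk, hq, rfl⟩
  · exact mt (hconj p hpA) hpC
  · obtain ⟨m, hm⟩ := hq.conj hlk (mul_mem (mul_mem hy (hA.le k hc)) (inv_mem hy))
      (mt (hconj y hy) hyC)
    rw [show q * y * c * (q * y)⁻¹ = q * (y * c * y⁻¹) * q⁻¹ by group]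
    exact hA.notMem hm

theorem mem_of_conj_mem_base (hA : IsAmalgam A C)
    (hconj : ∀ j ≠ i, ∀ y ∈ A j, ∀ c ∈ C, c ≠ 1 → y * c * y⁻¹ ∈ C → y ∈ C)
    (hc : c ∈ C) (hc1 : c ≠ 1) (hg : g ∈ ⨆ i, A i) (hgc : g * c * g⁻¹ ∈ C) : g ∈ A i := by
  rcases hA.mem_or_exists_isReducedProd hg with hgC | ⟨n, j, k, hp⟩
  · exact hA.le i hgC
  obtain hki | rfl := ne_or_eq k i
  · exact absurd hgc (hA.conj_notMem_base hp hc fun y hy ↦ hconj k hki y hy c hc hc1)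
  rcases hp.eq_or_exists_snoc with ⟨-, -, hgA, -⟩ | ⟨m, l, q, y, hy, -, -, hlk, hq, rfl⟩
  · exact hgA
  rw [show q * y * c * (q * y)⁻¹ = q * (y * c * y⁻¹) * q⁻¹ by group] at hgc
  by_cases hyc : y * c * y⁻¹ ∈ C
  · have hyc1 : y * c * y⁻¹ ≠ 1 := mt conj_eq_one_iff.1 hc1
    exact absurd hgc (hA.conj_notMem_base hq hyc fun z hz ↦ hconj l hlk z hz _ hyc hyc1)
  · obtain ⟨m, hm⟩ := hq.conj hlk (mul_mem (mul_mem hy (hA.le k hc)) (inv_mem hy)) hyc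
    exact absurd hgc (hA.notMem hm)

theorem not_isOfFinOrder (hA : IsAmalgam A C) (hp : IsReducedProd A C n i j p) (hij : i ≠ j) :
    ¬ IsOfFinOrder p := by
  rw [isOfFinOrder_iff_pow_eq_one]
  rintro ⟨m, hm, hpm⟩
  obtain ⟨l, hl⟩ := hp.exists_pow_succ hij (m - 1)
  rw [Nat.sub_add_cancel hm, hpm] at hl
  exact hA.notMem hl C.one_mem

theorem exists_conj_mem_of_isReducedProd (hA : IsAmalgam A C) (hp : IsReducedProd A C n i j p)
    (hfin : IsOfFinOrder p) : ∃ w k, w * p * w⁻¹ ∈ A k := by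
  induction n using Nat.strong_induction_on generalizing i j p with
  | h n ih =>
    obtain hij | rfl := ne_or_eq i j
    · exact absurd hfin (hA.not_isOfFinOrder hp hij)
    rcases hp.eq_or_exists_snoc with ⟨-, -, hpA, -⟩ | ⟨m, k, q, y, hy, rfl, -, hki, hq, rfl⟩
    · exact ⟨1, i, by simpa using hpA⟩
    cases hq with
    | of => exact absurd rfl hki
    | @cons m _ l _ x q hx _ hil hq =>
      have hconj : y * (x * q * y) * y⁻¹ = y * x * q := by group
      have hfin' : IsOfFinOrder (y * x * q) :=
        hconj ▸ (MulAut.conj y).toMonoidHom.isOfFinOrder hfin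
      by_cases hyx : y * x ∈ C
      · obtain ⟨w, k, hw⟩ := ih m (by lia) (hq.mul_left_of_mem hA.le hyx) hfin'
        refine ⟨w * y, k, ?_⟩
        rwa [← hconj, ← mul_assoc, ← mul_assoc, mul_assoc _ y⁻¹, ← mul_inv_rev] at hw
      · exact absurd hfin' (hA.not_isOfFinOrder (.cons (mul_mem hy hx) hyx hil hq) hki.symm)

theorem exists_conj_mem [Nonempty ι] (hA : IsAmalgam A C) (hg : g ∈ ⨆ i, A i)
    (hfin : IsOfFinOrder g) : ∃ w i, w * g * w⁻¹ ∈ A i := by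
  rcases hA.mem_or_exists_isReducedProd hg with hgC | ⟨n, i, j, hp⟩
  · obtain ⟨i⟩ := ‹Nonempty ι›
    exact ⟨1, i, by simpa using hA.le i hgC⟩
  · exact hA.exists_conj_mem_of_isReducedProd hp hfin

end IsAmalgam

end Amalgam

/-! ### Involutions and elements of odd order -/

section Group

variable {G : Type*} [Group G] {S : Set G} {a b g x z : G}

theorem mem_closure_or_mul_mem_closure (ha : a * a = 1) (hS : ∀ s ∈ S, Commute a s)
    (hg : g ∈ Subgroup.closure (insert a S)) :
    g ∈ Subgroup.closure S ∨ a * g ∈ Subgroup.closure S := by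
  have mul_left {x y} (hx : x = a ∨ x ∈ Subgroup.closure S ∧ Commute a x)
      (hy : y ∈ Subgroup.closure S ∨ a * y ∈ Subgroup.closure S) :
      x * y ∈ Subgroup.closure S ∨ a * (x * y) ∈ Subgroup.closure S := by
    rcases hx with rfl | ⟨hx, hax⟩
    · rw [← mul_assoc, ha, one_mul]
      exact hy.symm
    · rw [hax.left_comm]
      exact hy.imp (mul_mem hx) (mul_mem hx)
  induction hg using Subgroup.closure_induction_left with
  | one => exact .inl (one_mem _)
  | mul_left x hx y _ ih =>
    exact mul_left (hx.imp_right fun hx ↦ ⟨Subgroup.subset_closure hx, hS x hx⟩) ih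
  | inv_mul_cancel x hx y _ ih =>
    refine mul_left (hx.imp ?_ fun hx ↦
      ⟨inv_mem (Subgroup.subset_closure hx), (hS x hx).inv_right⟩) ih
    rintro rfl
    exact inv_eq_of_mul_eq_one_right ha

theorem eq_one_of_mul_self_of_odd (hx : x * x = 1) (hodd : Odd (orderOf x)) : x = 1 := by
  have h2 : orderOf x ∣ 2 := orderOf_dvd_of_pow_eq_one (by rw [sq, hx])
  rcases (Nat.dvd_prime Nat.prime_two).1 h2 with h | h
  · exact orderOf_eq_one_iff.1 h
  · exact absurd hodd (by rw [h]; decide)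

theorem exists_mem_zpowers_mul_self_eq (hodd : Odd (orderOf z)) :
    ∃ y ∈ Subgroup.zpowers z, y * y = z := by
  obtain ⟨k, hk⟩ := hodd
  refine ⟨z ^ (k + 1), Subgroup.npow_mem_zpowers z _, ?_⟩
  rw [← pow_add, show k + 1 + (k + 1) = orderOf z + 1 by lia, pow_succ, pow_orderOf_eq_one, one_mul]

theorem mul_eq_inv_mul_of_mem_zpowers (ha : a * a = 1) (hb : b * b = 1)
    (hz : z ∈ Subgroup.zpowers (a * b)) : a * z = z⁻¹ * a := by
  obtain ⟨n, rfl⟩ := Subgroup.mem_zpowers_iff.1 hz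
  have hab : SemiconjBy a (a * b) (a * b)⁻¹ := by
    rw [SemiconjBy, ← mul_assoc, ha, one_mul, mul_inv_rev, inv_mul_cancel_right,
      inv_eq_of_mul_eq_one_right hb]
  exact inv_zpow (a * b) n ▸ hab.zpow_right n

theorem commute_of_mem_zpowers (hx : x ∈ Subgroup.zpowers z) (hg : g ∈ Subgroup.zpowers z) :
    Commute x g := by
  obtain ⟨⟨i, rfl⟩, j, rfl⟩ := And.intro hx hg
  exact (Commute.refl z).zpow_zpow i j

theorem eq_or_eq_mul_of_mem_closure_pair (ha : a * a = 1) (hb : b * b = 1)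
    (hg : g ∈ Subgroup.closure {a, b}) : ∃ z ∈ Subgroup.zpowers (a * b), g = z ∨ g = z * a := by
  have mul_left_fst {y} : (∃ z ∈ Subgroup.zpowers (a * b), y = z ∨ y = z * a) →
      ∃ z ∈ Subgroup.zpowers (a * b), a * y = z ∨ a * y = z * a := by
    rintro ⟨z, hz, hy⟩
    have haz := mul_eq_inv_mul_of_mem_zpowers ha hb hz
    refine ⟨z⁻¹, inv_mem hz, hy.symm.imp ?_ ?_⟩ <;> rintro rfl
    · rw [← mul_assoc, haz, mul_assoc, ha, mul_one]
    · exact haz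
  have mul_left {x y} (hx : x ∈ ({a, b} : Set G)) :
      (∃ z ∈ Subgroup.zpowers (a * b), y = z ∨ y = z * a) →
      ∃ z ∈ Subgroup.zpowers (a * b), x * y = z ∨ x * y = z * a := by
    rcases hx with rfl | rfl
    · exact mul_left_fst
    rintro ⟨z, hz, hy⟩
    have hxy : x * y = a * (a * x * y) := by rw [mul_assoc, ← mul_assoc, ha, one_mul]
    rw [hxy]
    refine mul_left_fst ⟨a * x * z, mul_mem (Subgroup.mem_zpowers _) hz, hy.imp ?_ ?_⟩ <;>
      rintro rfl
    exacts [rfl, (mul_assoc _ _ _).symm]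
  induction hg using Subgroup.closure_induction_left with
  | one => exact ⟨1, one_mem _, .inl rfl⟩
  | mul_left x hx y _ ih => exact mul_left hx ih
  | inv_mul_cancel x hx y _ ih =>
    have hx' : x⁻¹ = x := by
      rcases hx with rfl | rfl
      exacts [inv_eq_of_mul_eq_one_right ha, inv_eq_of_mul_eq_one_right hb]
    rw [hx']
    exact mul_left hx ih

end Group

/-! ### Parabolic subgroups and visual splittings -/

section Coxeter

variable {B W : Type*} [Group W] {M : CoxeterMatrix B} {cs : CoxeterSystem M W}
  {U X Y : Set B} {γ : B → B} {b c : B} {g r x y : W}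

variable (cs) in
/-- The exponent `m(b, c)`, read off from the group; `0` stands for `∞`. -/
noncomputable def ord (b c : B) : ℕ :=
  orderOf (cs.simple b * cs.simple c)

theorem ord_self (b : B) : ord cs b b = 1 := by
  rw [ord, cs.simple_mul_simple_self, orderOf_one]

theorem ord_comm (b c : B) : ord cs b c = ord cs c b := by
  rw [ord, ← orderOf_inv, mul_inv_rev, cs.inv_simple, cs.inv_simple, ord]

theorem simple_mul_pow_ord (b c : B) : (cs.simple b * cs.simple c) ^ ord cs b c = 1 :=
  pow_orderOf_eq_one _

theorem commute_of_ord_eq_two (h : ord cs b c = 2) : Commute (cs.simple b) (cs.simple c) := by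
  have hbc := simple_mul_pow_ord (cs := cs) b c
  rw [h, sq, mul_eq_one_iff_eq_inv, mul_inv_rev, cs.inv_simple, cs.inv_simple] at hbc
  exact hbc

theorem exists_hom_of_pow_ord {H : Type*} [Monoid H] (f : B → H)
    (hf : ∀ b c, (f b * f c) ^ ord cs b c = 1) : ∃ F : W →* H, ∀ b, F (cs.simple b) = f b := by
  have hM : M.IsLiftable f := fun b c ↦ by
    obtain ⟨k, hk⟩ : ord cs b c ∣ M b c := orderOf_dvd_of_pow_eq_one (cs.simple_mul_simple_pow b c)
    rw [hk, pow_mul, hf, one_pow]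
  exact ⟨cs.lift ⟨f, hM⟩, fun b ↦ cs.lift_apply_simple hM b⟩

theorem simple_mem_parabolic (hb : b ∈ U) : cs.simple b ∈ cs.parabolic U :=
  Subgroup.subset_closure ⟨b, hb, rfl⟩

theorem parabolic_mono (h : X ⊆ Y) : cs.parabolic X ≤ cs.parabolic Y :=
  Subgroup.closure_mono (Set.image_mono h)

theorem parabolic_univ : cs.parabolic Set.univ = ⊤ := by
  rw [CoxeterSystem.parabolic, Set.image_univ]
  exact cs.subgroup_closure_range_simple

variable (cs U γ) in
/-- The assignment `s_b ↦ s_{γ b}` if `γ b ∈ U` and `s_b ↦ 1` otherwise respects the Coxeter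
relations and fixes the generators in `U`, so it retracts `W` onto `W_U`. -/
structure IsRetraction : Prop where
  eq_self {b : B} : b ∈ U → γ b = b
  dvd {b c : B} : γ b ∈ U → γ c ∈ U → ord cs (γ b) (γ c) ∣ ord cs b c
  even {b c : B} : γ b ∈ U → γ c ∉ U → Even (ord cs b c)

theorem IsRetraction.exists_hom {H : Type*} [Monoid H] (hγ : IsRetraction cs U γ) (f : B → H)
    (hf : ∀ b ∈ U, ∀ c ∈ U, (f b * f c) ^ ord cs b c = 1) :
    ∃ F : W →* H, (∀ b ∈ U, F (cs.simple b) = f b) ∧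
      ∀ b, F (cs.simple b) = 1 ∨ ∃ c ∈ U, F (cs.simple b) = f c := by
  classical
  have even_pow {b m} (hb : b ∈ U) (hm : Even m) : f b ^ m = 1 := by
    obtain ⟨k, rfl⟩ := hm
    have hsq := hf b hb b hb
    rw [ord_self, pow_one, ← sq] at hsq
    rw [← two_mul, pow_mul, hsq, one_pow]
  obtain ⟨F, hF⟩ := exists_hom_of_pow_ord (cs := cs) (fun b ↦ if γ b ∈ U then f (γ b) else 1) <| by
    intro b c
    by_cases hb : γ b ∈ U <;> by_cases hc : γ c ∈ U
    · obtain ⟨k, hk⟩ := hγ.dvd hb hc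
      simp only [hb, hc, if_true, hk, pow_mul, hf _ hb _ hc, one_pow]
    · simp only [hb, hc, if_true, if_false, mul_one, even_pow hb (hγ.even hb hc)]
    · simp only [hb, hc, if_true, if_false, one_mul, ord_comm b, even_pow hc (hγ.even hc hb)]
    · simp only [hb, hc, if_false, mul_one, one_pow]
  refine ⟨F, fun b hb ↦ ?_, fun b ↦ ?_⟩
  · rw [hF, hγ.eq_self hb, if_pos hb]
  · rw [hF]
    split_ifs with hb
    exacts [.inr ⟨_, hb, rfl⟩, .inl rfl]

section Family

variable {ι : Type*} {X : ι → Set B} {T : Set B}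

variable (cs) in
theorem exists_map_simple_pushoutI (hT : ∀ i, T ⊆ X i)
    (hX : ∀ i j, i ≠ j → ∀ b ∈ X i, b ∈ X j → b ∈ T) :
    ∃ f : B → Monoid.PushoutI fun i ↦ Subgroup.inclusion (parabolic_mono (cs := cs) (hT i)),
      ∀ i b (hb : b ∈ X i), f b = Monoid.PushoutI.of i ⟨cs.simple b, simple_mem_parabolic hb⟩ := by
  classical
  let φ (i : ι) := Subgroup.inclusion (parabolic_mono (cs := cs) (hT i))
  let s (i : ι) (b : B) (hb : b ∈ X i) : cs.parabolic (X i) :=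
    ⟨cs.simple b, simple_mem_parabolic hb⟩
  have of_base {i b} (hb : b ∈ T) : Monoid.PushoutI.of i (s i b (hT i hb)) =
      Monoid.PushoutI.base φ ⟨cs.simple b, simple_mem_parabolic hb⟩ :=
    Monoid.PushoutI.of_apply_eq_base φ i ⟨cs.simple b, simple_mem_parabolic hb⟩
  have of_eq {i j b} (hi : b ∈ X i) (hj : b ∈ X j) :
      Monoid.PushoutI.of (φ := φ) i (s i b hi) = Monoid.PushoutI.of j (s j b hj) := by
    obtain rfl | hij := eq_or_ne i j
    · rfl
    · have hb : b ∈ T := hX i j hij b hi hj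
      exact (of_base hb).trans (of_base hb).symm
  refine ⟨fun b ↦ if h : ∃ i, b ∈ X i then Monoid.PushoutI.of h.choose (s _ b h.choose_spec) else 1,
    fun i b hb ↦ ?_⟩
  have h : ∃ i, b ∈ X i := ⟨i, hb⟩
  exact (dif_pos h).trans (of_eq h.choose_spec hb)

/-- Generators in distinct pieces `X i`, `X j` outside `T` satisfy no relation, so `W_{⋃ X i}` has
the presentation of the amalgamated product. -/
theorem isAmalgam_parabolic (hT : ∀ i, T ⊆ X i)
    (hX : ∀ i j, i ≠ j → ∀ b ∈ X i, b ∉ T → ∀ c ∈ X j, c ∉ T → ord cs b c = 0)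
    (hγ : IsRetraction cs (⋃ i, X i) γ) :
    IsAmalgam (fun i ↦ cs.parabolic (X i)) (cs.parabolic T) := by
  obtain ⟨f, hf⟩ := exists_map_simple_pushoutI cs hT fun i j hij b hi hj ↦ by
    by_contra hb
    simpa [ord_self] using hX i j hij b hi hb b hj hb
  have f_rel {i b c} (hb : b ∈ X i) (hc : c ∈ X i) : (f b * f c) ^ ord cs b c = 1 := by
    rw [hf i b hb, hf i c hc, ← map_mul, ← map_pow]
    exact (congrArg _ (Subtype.ext (simple_mul_pow_ord b c))).trans (map_one _)
  obtain ⟨F, hF, -⟩ := hγ.exists_hom f fun b hb c hc ↦ by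
    obtain ⟨⟨i, hi⟩, j, hj⟩ := And.intro (Set.mem_iUnion.1 hb) (Set.mem_iUnion.1 hc)
    obtain rfl | hij := eq_or_ne i j
    · exact f_rel hi hj
    by_cases hbT : b ∈ T
    · exact f_rel (hT j hbT) hj
    by_cases hcT : c ∈ T
    · exact f_rel hi (hT i hcT)
    · rw [hX i j hij b hi hbT c hj hcT, pow_zero]
  have hFi (i : ι) : F.comp (cs.parabolic (X i)).subtype =
      Monoid.PushoutI.of (φ := fun i ↦ Subgroup.inclusion (parabolic_mono (hT i))) i := by
    refine MonoidHom.eq_of_eqOn_dense Subgroup.closure_closure_coe_preimage ?_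
    rintro ⟨_, _⟩ ⟨b, hb, rfl⟩
    exact (hF b (Set.mem_iUnion_of_mem i hb)).trans (hf i b hb)
  exact .of_hom_pushoutI _ F fun i ↦ DFunLike.congr_fun (hFi i)

end Family

variable (cs X Y) in
/-- A visual splitting: there is no relation between a generator in `X \ Y` and one in `Y \ X`.
Then `W_{X ∪ Y}` is the amalgamated product of `W_X` and `W_Y` over `W_{X ∩ Y}`. -/
structure IsSplitting : Prop where
  exists_isRetraction : ∃ γ, IsRetraction cs (X ∪ Y) γ
  ord_eq_zero {b c : B} : b ∈ X → b ∉ Y → c ∈ Y → c ∉ X → ord cs b c = 0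

theorem IsSplitting.symm (h : IsSplitting cs X Y) : IsSplitting cs Y X where
  exists_isRetraction := Set.union_comm X Y ▸ h.exists_isRetraction
  ord_eq_zero hb hbX hc hcY := ord_comm (cs := cs) _ _ ▸ h.ord_eq_zero hc hcY hb hbX

theorem mem_iSup_parabolic (hg : g ∈ cs.parabolic (X ∪ Y)) :
    g ∈ ⨆ i : Bool, cs.parabolic (cond i X Y) := by
  refine (Subgroup.closure_le _).2 ?_ hg
  rintro _ ⟨b, hb | hb, rfl⟩
  exacts [Subgroup.mem_iSup_of_mem true (simple_mem_parabolic hb),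
    Subgroup.mem_iSup_of_mem false (simple_mem_parabolic hb)]

namespace IsSplitting

theorem isAmalgam (h : IsSplitting cs X Y) :
    IsAmalgam (fun i : Bool ↦ cs.parabolic (cond i X Y)) (cs.parabolic (X ∩ Y)) := by
  obtain ⟨γ, hγ⟩ := h.exists_isRetraction
  refine isAmalgam_parabolic (γ := γ) ?_ ?_ (by rwa [← Set.union_eq_iUnion])
  · rintro (_ | _)
    exacts [Set.inter_subset_right, Set.inter_subset_left]
  · rintro (_ | _) (_ | _) hij b hb hbT c hc hcT
    · exact absurd rfl hij
    · rw [ord_comm]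
      exact h.ord_eq_zero hc (fun hcY ↦ hcT ⟨hc, hcY⟩) hb fun hbX ↦ hbT ⟨hbX, hb⟩
    · exact h.ord_eq_zero hb (fun hbY ↦ hbT ⟨hb, hbY⟩) hc fun hcX ↦ hcT ⟨hcX, hc⟩
    · exact absurd rfl hij

theorem exists_conj_mem (h : IsSplitting cs X Y) (hg : g ∈ cs.parabolic (X ∪ Y))
    (hfin : IsOfFinOrder g) :
    ∃ w, w * g * w⁻¹ ∈ cs.parabolic X ∨ w * g * w⁻¹ ∈ cs.parabolic Y := by
  obtain ⟨w, _ | _, hw⟩ := h.isAmalgam.exists_conj_mem (mem_iSup_parabolic hg) hfin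
  exacts [⟨w, .inr hw⟩, ⟨w, .inl hw⟩]

theorem mem_of_conj_mem (h : IsSplitting cs X Y) (hx : x ∈ cs.parabolic X)
    (hxT : ∀ a ∈ cs.parabolic X, a * x * a⁻¹ ∉ cs.parabolic (X ∩ Y))
    (hg : g ∈ cs.parabolic (X ∪ Y)) (hgx : g * x * g⁻¹ ∈ cs.parabolic X) : g ∈ cs.parabolic X :=
  h.isAmalgam.mem_of_conj_mem (i := true) hx hxT (mem_iSup_parabolic hg) hgx

theorem mem_of_conj_mem_inter (h : IsSplitting cs X Y)
    (hY : ∀ y ∈ cs.parabolic Y, ∀ x ∈ cs.parabolic (X ∩ Y), x ≠ 1 →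
      y * x * y⁻¹ ∈ cs.parabolic (X ∩ Y) → y ∈ cs.parabolic (X ∩ Y))
    (hx : x ∈ cs.parabolic (X ∩ Y)) (hx1 : x ≠ 1) (hg : g ∈ cs.parabolic (X ∪ Y))
    (hgx : g * x * g⁻¹ ∈ cs.parabolic (X ∩ Y)) : g ∈ cs.parabolic X := by
  refine h.isAmalgam.mem_of_conj_mem_base (i := true) ?_ hx hx1 (mem_iSup_parabolic hg) hgx
  rintro (_ | _) hj
  exacts [hY, absurd rfl hj]

end IsSplitting

theorem mul_self_mem_commutator (cs : CoxeterSystem M W) (w : W) : w * w ∈ commutator W := by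
  rw [← Abelianization.ker_of, MonoidHom.mem_ker, map_mul]
  induction w using cs.simple_induction_left with
  | one => rw [map_one, one_mul]
  | mul_simple_left w b ih =>
    rw [map_mul, mul_mul_mul_comm, ih, ← map_mul, cs.simple_mul_simple_self, map_one, one_mul]

theorem mem_commutator_of_odd (cs : CoxeterSystem M W) (hx : Odd (orderOf x)) :
    x ∈ commutator W := by
  obtain ⟨y, -, rfl⟩ := exists_mem_zpowers_mul_self_eq hx
  exact mul_self_mem_commutator cs y

theorem eq_one_or_eq_of_mem_parabolic_singleton (hx : x ∈ cs.parabolic {b}) :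
    x = 1 ∨ x = cs.simple b := by
  rw [CoxeterSystem.parabolic, Set.image_singleton, ← insert_empty_eq] at hx
  rcases mem_closure_or_mul_mem_closure (cs.simple_mul_simple_self b) (by simp) hx with h | h <;>
    rw [Subgroup.closure_empty, Subgroup.mem_bot] at h
  · exact .inl h
  · right
    rw [← inv_eq_of_mul_eq_one_right h, cs.inv_simple]

theorem map_eq_one_of_mem_parabolic {H : Type*} [Group H] {F : W →* H}
    (hF : ∀ b ∈ U, F (cs.simple b) = 1) (hg : g ∈ cs.parabolic U) : F g = 1 := by
  refine (Subgroup.closure_le F.ker).2 ?_ hg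
  rintro _ ⟨b, hb, rfl⟩
  exact hF b hb

theorem exists_mem_zpowers_eq_or_eq_mul (hx : x ∈ cs.parabolic {b, c}) :
    ∃ z ∈ Subgroup.zpowers (cs.simple b * cs.simple c), x = z ∨ x = z * cs.simple b := by
  rw [CoxeterSystem.parabolic, Set.image_pair] at hx
  exact eq_or_eq_mul_of_mem_closure_pair (cs.simple_mul_simple_self b)
    (cs.simple_mul_simple_self c) hx

theorem zpowers_le_parabolic_pair :
    Subgroup.zpowers (cs.simple b * cs.simple c) ≤ cs.parabolic {b, c} :=
  Subgroup.zpowers_le.2 <|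
    mul_mem (simple_mem_parabolic (.inl rfl)) (simple_mem_parabolic (.inr rfl))

theorem sdiff_singleton_union_sdiff_singleton (U : Set B) (hbc : b ≠ c) :
    U \ {c} ∪ U \ {b} = U := by
  rw [← Set.sdiff_inter, Set.singleton_inter_eq_empty.2 (Set.mem_singleton_iff.not.2 hbc.symm),
    Set.sdiff_empty]

theorem pair_union_sdiff_singleton (hb : b ∈ U) (hc : c ∈ U) : {b, c} ∪ U \ {c} = U := by
  rw [Set.insert_union, Set.singleton_union, Set.insert_sdiff_singleton, Set.insert_eq_of_mem hc,
    Set.insert_eq_of_mem hb]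

theorem pair_inter_sdiff_singleton (hb : b ∈ U) (hbc : b ≠ c) : {b, c} ∩ (U \ {c}) = {b} := by
  rw [Set.insert_inter_of_mem (Set.mem_sdiff_of_mem hb hbc),
    Set.singleton_inter_eq_empty.2 (by simp), insert_empty_eq]

theorem union_compl_pair (hb : b ∈ U) (hc : c ∉ U) : U ∪ {b, c}ᶜ = Set.univ \ {c} := by
  ext a
  obtain rfl | hab := eq_or_ne a b
  · simp [hb, ne_of_mem_of_not_mem hb hc]
  obtain rfl | hac := eq_or_ne a c
  · simp [hc]
  · simp [hab, hac]

/-! ### Base maps -/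

variable (cs) in
/-- A base map sends every generator that is pendant, i.e. whose only neighbour (generator joined
to it by a finite exponent) is its base, with an odd exponent, to that base, and fixes all other
generators. Different pendant generators have different bases, and the other neighbours of a base
commute with it and with each other. -/
structure IsBaseMap (σ : B → B) : Prop where
  map_map (b : B) : σ (σ b) = σ b
  odd_ord {t : B} : σ t ≠ t → Odd (ord cs (σ t) t)
  ord_eq {b c : B} : b ≠ c → σ b ≠ c → σ c ≠ b →
    ord cs b c = 0 ∨ ord cs b c = 2 ∧ σ b = b ∧ σ c = c
  injOn : Set.InjOn σ {t | σ t ≠ t}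
  link {t u v : B} : σ t ≠ t → u ≠ v → ord cs (σ t) u = 2 → ord cs (σ t) v = 2 → ord cs u v = 2

variable (cs) in
/-- A set of pairwise commuting generators fixed by `σ`. The parabolic subgroup it generates is an
elementary abelian `2`-group. -/
structure IsFixedClique (σ : B → B) (T : Set B) : Prop where
  eq_self {b : B} : b ∈ T → σ b = b
  pairwise : T.Pairwise fun b c ↦ ord cs b c = 2

theorem IsFixedClique.mono {σ : B → B} (h : IsFixedClique cs σ Y) (hXY : X ⊆ Y) :
    IsFixedClique cs σ X :=
  ⟨fun hb ↦ h.eq_self (hXY hb), h.pairwise.mono hXY⟩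

namespace IsBaseMap

variable {σ : B → B} {t : B}

theorem even_ord (hσ : IsBaseMap cs σ) (h : σ b ≠ σ c) : Even (ord cs b c) := by
  have hbc : σ b ≠ c := fun hb ↦ h (by rw [← hb, hσ.map_map])
  have hcb : σ c ≠ b := fun hc ↦ h (by rw [← hc, hσ.map_map])
  rcases hσ.ord_eq (ne_of_apply_ne σ h) hbc hcb with h0 | ⟨h2, -⟩
  exacts [h0 ▸ Even.zero, h2 ▸ even_two]

theorem exists_sign (hσ : IsBaseMap cs σ) (a : B) :
    ∃ ε : W →* ℤˣ, (∀ b, σ b = a → ε (cs.simple b) = -1) ∧ ∀ b, σ b ≠ a → ε (cs.simple b) = 1 := by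
  classical
  obtain ⟨ε, hε⟩ := exists_hom_of_pow_ord (cs := cs)
      (fun b ↦ if σ b = a then (-1 : ℤˣ) else 1) <| by
    intro b c
    by_cases h : σ b = σ c
    · rw [h, Int.units_mul_self, one_pow]
    · obtain ⟨k, hk⟩ := hσ.even_ord h
      rw [hk, ← two_mul, pow_mul, Int.units_sq, one_pow]
  exact ⟨ε, fun b hb ↦ (hε b).trans (if_pos hb), fun b hb ↦ (hε b).trans (if_neg hb)⟩

theorem eq_one_of_mem_parabolic_of_mem_commutator (hσ : IsBaseMap cs σ) {T : Set B}
    (hfin : T.Finite) (hT : IsFixedClique cs σ T) (hg : g ∈ cs.parabolic T)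
    (hgW : g ∈ commutator W) : g = 1 := by
  induction T, hfin using Set.Finite.induction_on with
  | empty => simpa [CoxeterSystem.parabolic] using hg
  | @insert a T ha _ ih =>
    have ne_a {b} (hb : b ∈ T) : b ≠ a := ne_of_mem_of_not_mem hb ha
    have hcomm (s) (hs : s ∈ cs.simple '' T) : Commute (cs.simple a) s := by
      obtain ⟨b, hb, rfl⟩ := hs
      exact commute_of_ord_eq_two (hT.pairwise (.inl rfl) (.inr hb) (ne_a hb).symm)
    rw [CoxeterSystem.parabolic, Set.image_insert_eq] at hg
    rcases mem_closure_or_mul_mem_closure (cs.simple_mul_simple_self a) hcomm hg with h | h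
    · exact ih (hT.mono (Set.subset_insert a T)) h
    · obtain ⟨ε, hε, hε'⟩ := hσ.exists_sign a
      have h1 : ε (cs.simple a * g) = 1 := map_eq_one_of_mem_parabolic (fun b hb ↦
        hε' b ((hT.eq_self (.inr hb)).trans_ne (ne_a hb))) h
      rw [map_mul, hε a (hT.eq_self (.inl rfl)), Abelianization.commutator_subset_ker ε hgW] at h1
      exact absurd h1 (by decide)

theorem ord_map_dvd (hσ : IsBaseMap cs σ) (hγ : ∀ b, γ b = b ∨ γ b = σ b) (b c : B) :
    ord cs (γ b) (γ c) ∣ ord cs b c := by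
  have of_map_eq {b c} (hbc : σ b = c) : ord cs (γ b) (γ c) ∣ ord cs b c := by
    have hc : γ c = c := (hγ c).elim id (·.trans (hbc ▸ hσ.map_map b))
    rcases hγ b with hb | hb
    · rw [hb, hc]
    · rw [hb, hbc, hc, ord_self]
      exact one_dvd _
  by_cases hbc : σ b = c
  · exact of_map_eq hbc
  by_cases hcb : σ c = b
  · rw [ord_comm, ord_comm b]
    exact of_map_eq hcb
  obtain rfl | hne := eq_or_ne b c
  · rw [ord_self, ord_self]
  rcases hσ.ord_eq hne hbc hcb with h | ⟨-, hb, hc⟩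
  · rw [h]
    exact dvd_zero _
  · rw [(hγ b).elim id (·.trans hb), (hγ c).elim id (·.trans hc)]

theorem isSplitting (hσ : IsBaseMap cs σ) (hXY : X ∪ Y = U) (hU : ∀ b ∈ U, σ b ∈ U)
    (h0 : ∀ b ∈ X, b ∉ Y → ∀ c ∈ Y, c ∉ X → ord cs b c = 0) : IsSplitting cs X Y := by
  classical
  subst hXY
  refine ⟨⟨fun b ↦ if b ∈ X ∪ Y then b else σ b, fun hb ↦ if_pos hb, fun _ _ ↦ ?_, ?_⟩,
    fun hb hbY hc hcX ↦ h0 _ hb hbY _ hc hcX⟩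
  · exact hσ.ord_map_dvd (γ := fun b ↦ if b ∈ X ∪ Y then b else σ b)
      (fun b ↦ ite_eq_or_eq _ _ _) _ _
  · intro b c hb hc
    refine hσ.even_ord fun hbc ↦ ?_
    split_ifs at hb hc with hbU hcU hcU
    exacts [hc hcU, hc (hbc ▸ hU b hbU), hc hcU, hc (hbc ▸ hb)]

theorem ord_eq_zero_of_ne (hσ : IsBaseMap cs σ) (ht : σ t ≠ t) (hb : b ≠ t) (hb' : b ≠ σ t) :
    ord cs t b = 0 := by
  by_cases hbt : σ b = t
  · exact absurd (hbt ▸ hσ.map_map b) ht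
  · exact (hσ.ord_eq hb.symm hb'.symm hbt).resolve_right fun h ↦ ht h.2.1

theorem isSplitting_pendant (hσ : IsBaseMap cs σ) (hU : ∀ b ∈ U, σ b ∈ U) (htU : t ∈ U)
    (ht : σ t ≠ t) : IsSplitting cs {σ t, t} (U \ {t}) := by
  refine hσ.isSplitting (pair_union_sdiff_singleton (hU t htU) htU) hU ?_
  rintro b (rfl | rfl) hb c - hc
  · exact absurd ⟨hU t htU, ht⟩ hb
  · simp only [Set.mem_insert_iff, Set.mem_singleton_iff, not_or] at hc
    exact hσ.ord_eq_zero_of_ne ht hc.2 hc.1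

theorem sdiff_singleton_mapsTo (hσ : IsBaseMap cs σ) (hU : ∀ b ∈ U, σ b ∈ U) (ht : σ t ≠ t) :
    ∀ b ∈ U \ {t}, σ b ∈ U \ {t} :=
  fun b hb ↦ ⟨hU b hb.1, fun hbt : σ b = t ↦ ht (hbt ▸ hσ.map_map b)⟩

theorem isFixedClique_or_exists_ord_eq_zero (hσ : IsBaseMap cs σ) (hU : ∀ b ∈ U, σ b = b) :
    IsFixedClique cs σ U ∨ ∃ b ∈ U, ∃ c ∈ U, b ≠ c ∧ ord cs b c = 0 := by
  by_contra! h
  exact h.1 ⟨fun hb ↦ hU _ hb, fun b hb c hc hbc ↦ ((hσ.ord_eq hbc ((hU b hb).trans_ne hbc)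
    ((hU c hc).trans_ne hbc.symm)).resolve_left (h.2 b hb c hc hbc)).1⟩

theorem isSplitting_of_ord_eq_zero (hσ : IsBaseMap cs σ) (hU : ∀ b ∈ U, σ b = b) (hbc : b ≠ c)
    (h0 : ord cs b c = 0) : IsSplitting cs (U \ {c}) (U \ {b}) := by
  refine hσ.isSplitting (sdiff_singleton_union_sdiff_singleton U hbc)
    (fun a ha ↦ (hU a ha).symm ▸ ha) ?_
  intro a ha hab d hd hdc
  obtain rfl : a = b := by_contra fun h ↦ hab ⟨ha.1, h⟩
  obtain rfl : d = c := by_contra fun h ↦ hdc ⟨hd.1, h⟩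
  exact h0

theorem exists_conj_mem_of_isOfFinOrder (hσ : IsBaseMap cs σ) (hfin : U.Finite)
    (hU : ∀ b ∈ U, σ b ∈ U) (hg : g ∈ cs.parabolic U) (hgfin : IsOfFinOrder g) :
    ∃ w, (∃ t, σ t ≠ t ∧ w * g * w⁻¹ ∈ cs.parabolic {σ t, t}) ∨
      ∃ T, IsFixedClique cs σ T ∧ w * g * w⁻¹ ∈ cs.parabolic T := by
  induction hn : U.ncard using Nat.strong_induction_on generalizing U g with | h n ih
  subst hn
  have of_smaller {a w} (ha : a ∈ U) (hmaps : ∀ b ∈ U \ {a}, σ b ∈ U \ {a})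
      (hw : w * g * w⁻¹ ∈ cs.parabolic (U \ {a})) :
      ∃ w, (∃ t, σ t ≠ t ∧ w * g * w⁻¹ ∈ cs.parabolic {σ t, t}) ∨
        ∃ T, IsFixedClique cs σ T ∧ w * g * w⁻¹ ∈ cs.parabolic T := by
    obtain ⟨v, hv⟩ := ih _ (Set.ncard_sdiff_singleton_lt_of_mem ha hfin) hfin.sdiff hmaps hw
      ((MulAut.conj w).toMonoidHom.isOfFinOrder hgfin) rfl
    exact ⟨v * w, by simpa only [mul_inv_rev, mul_assoc] using hv⟩
  by_cases hfix : ∀ b ∈ U, σ b = b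
  · have maps (a) : ∀ b ∈ U \ {a}, σ b ∈ U \ {a} := fun b hb ↦ (hfix b hb.1).symm ▸ hb
    rcases hσ.isFixedClique_or_exists_ord_eq_zero hfix with hU | ⟨b, hb, c, hc, hbc, h0⟩
    · exact ⟨1, .inr ⟨U, hU, by simpa using hg⟩⟩
    obtain ⟨w, hw | hw⟩ := (hσ.isSplitting_of_ord_eq_zero hfix hbc h0).exists_conj_mem
      (by rwa [sdiff_singleton_union_sdiff_singleton U hbc]) hgfin
    exacts [of_smaller hc (maps c) hw, of_smaller hb (maps b) hw]
  · push Not at hfix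
    obtain ⟨t, htU, ht⟩ := hfix
    obtain ⟨w, hw | hw⟩ := (hσ.isSplitting_pendant hU htU ht).exists_conj_mem
      (by rwa [pair_union_sdiff_singleton (hU t htU) htU]) hgfin
    exacts [⟨w, .inl ⟨t, ht, hw⟩⟩, of_smaller htU (hσ.sdiff_singleton_mapsTo hU ht) hw]

theorem simple_notMem_commutator (hσ : IsBaseMap cs σ) (b : B) : cs.simple b ∉ commutator W := by
  obtain ⟨ε, hε, -⟩ := hσ.exists_sign (σ b)
  intro hb
  have h1 : ε (cs.simple b) = 1 := Abelianization.commutator_subset_ker ε hb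
  exact absurd (h1.symm.trans (hε b rfl)) (by decide)

theorem odd_orderOf_of_mem_zpowers (hσ : IsBaseMap cs σ) (ht : σ t ≠ t)
    (hx : x ∈ Subgroup.zpowers (cs.simple (σ t) * cs.simple t)) : Odd (orderOf x) :=
  (hσ.odd_ord ht).of_dvd_nat (orderOf_dvd_of_mem_zpowers hx)

theorem mem_zpowers_of_mem_commutator (hσ : IsBaseMap cs σ) (ht : σ t ≠ t)
    (hx : x ∈ cs.parabolic {σ t, t}) (hxW : x ∈ commutator W) :
    x ∈ Subgroup.zpowers (cs.simple (σ t) * cs.simple t) := by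
  obtain ⟨z, hz, rfl | rfl⟩ := exists_mem_zpowers_eq_or_eq_mul hx
  · exact hz
  · have hzW : z ∈ commutator W := mem_commutator_of_odd cs (hσ.odd_orderOf_of_mem_zpowers ht hz)
    exact absurd ((Subgroup.mul_mem_cancel_left _ hzW).1 hxW) (hσ.simple_notMem_commutator _)

theorem mem_parabolic_singleton_of_commute (hσ : IsBaseMap cs σ) (ht : σ t ≠ t)
    (hx : x ∈ cs.parabolic {σ t, t}) (hcomm : Commute x (cs.simple (σ t))) :
    x ∈ cs.parabolic {σ t} := by
  have hs : cs.simple (σ t) ∈ cs.parabolic {σ t} := simple_mem_parabolic rfl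
  have eq_one {z} (hz : z ∈ Subgroup.zpowers (cs.simple (σ t) * cs.simple t))
      (hcomm : Commute z (cs.simple (σ t))) : z = 1 := by
    have hinv : z = z⁻¹ := mul_right_cancel <| hcomm.eq.trans <| mul_eq_inv_mul_of_mem_zpowers
      (cs.simple_mul_simple_self _) (cs.simple_mul_simple_self _) hz
    exact eq_one_of_mul_self_of_odd (mul_eq_one_iff_eq_inv.2 hinv)
      (hσ.odd_orderOf_of_mem_zpowers ht hz)
  obtain ⟨z, hz, rfl | rfl⟩ := exists_mem_zpowers_eq_or_eq_mul hx
  · exact eq_one hz hcomm ▸ one_mem _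
  · have hzs : Commute z (cs.simple (σ t)) := by
      simpa only [mul_assoc, cs.simple_mul_simple_self, mul_one] using
        hcomm.mul_left (Commute.refl (cs.simple (σ t)))
    rwa [eq_one hz hzs, one_mul]

theorem mem_parabolic_pair_of_conj_mem (hσ : IsBaseMap cs σ) (ht : σ t ≠ t)
    (hx : x ∈ cs.parabolic {σ t, t}) (hxW : x ∈ commutator W) (hx1 : x ≠ 1)
    (hgx : g * x * g⁻¹ ∈ cs.parabolic {σ t, t}) : g ∈ cs.parabolic {σ t, t} := by
  refine (hσ.isSplitting_pendant (fun b _ ↦ Set.mem_univ (σ b)) (Set.mem_univ t) ht).mem_of_conj_mem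
    hx (fun a _ ha ↦ ?_) ?_ hgx
  · rw [pair_inter_sdiff_singleton (Set.mem_univ _) ht] at ha
    have haW : a * x * a⁻¹ ∈ commutator W := Subgroup.Normal.conj_mem inferInstance x hxW a
    rcases eq_one_or_eq_of_mem_parabolic_singleton ha with h | h
    · exact hx1 (conj_eq_one_iff.1 h)
    · exact hσ.simple_notMem_commutator _ (h ▸ haW)
  · rw [pair_union_sdiff_singleton (Set.mem_univ _) (Set.mem_univ _), parabolic_univ]
    exact Subgroup.mem_top g

theorem exists_conj_eq_simple_of_mem_parabolic_pair (hσ : IsBaseMap cs σ) (ht : σ t ≠ t)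
    (hx : x ∈ Subgroup.zpowers (cs.simple (σ t) * cs.simple t)) (hx1 : x ≠ 1) (hr : r * r = 1)
    (hrx : r * x * r⁻¹ = x⁻¹) : ∃ v, v * x * v⁻¹ = x ∧ v * r * v⁻¹ = cs.simple (σ t) := by
  have hodd : Odd (orderOf x) := hσ.odd_orderOf_of_mem_zpowers ht hx
  have hxD : x ∈ cs.parabolic {σ t, t} := zpowers_le_parabolic_pair hx
  have hrD : r ∈ cs.parabolic {σ t, t} := hσ.mem_parabolic_pair_of_conj_mem ht hxD
    (mem_commutator_of_odd cs hodd) hx1 (hrx ▸ inv_mem hxD)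
  obtain ⟨z, hz, rfl | rfl⟩ := exists_mem_zpowers_eq_or_eq_mul hrD
  · have hz1 : r = 1 := eq_one_of_mul_self_of_odd hr (hσ.odd_orderOf_of_mem_zpowers ht hz)
    rw [hz1, one_mul, inv_one, mul_one] at hrx
    exact absurd (eq_one_of_mul_self_of_odd (mul_eq_one_iff_eq_inv.2 hrx) hodd) hx1
  · obtain ⟨v, hv, rfl⟩ := exists_mem_zpowers_mul_self_eq (hσ.odd_orderOf_of_mem_zpowers ht hz)
    replace hv := (Subgroup.zpowers_le.2 hz) hv
    have hvs : cs.simple (σ t) * v = v⁻¹ * cs.simple (σ t) := mul_eq_inv_mul_of_mem_zpowers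
      (cs.simple_mul_simple_self _) (cs.simple_mul_simple_self _) hv
    have hvx : Commute v x := commute_of_mem_zpowers hv hx
    refine ⟨v⁻¹, by rw [hvx.inv_left.eq, mul_inv_cancel_right], ?_⟩
    rw [inv_inv, mul_assoc, mul_assoc, hvs]
    group

theorem exists_conj_eq_simple [Finite B] (hσ : IsBaseMap cs σ) (hx : Odd (orderOf x)) (hx1 : x ≠ 1)
    (hr : r * r = 1) (hrx : r * x * r⁻¹ = x⁻¹) : ∃ t g, σ t ≠ t ∧
      g * x * g⁻¹ ∈ Subgroup.zpowers (cs.simple (σ t) * cs.simple t) ∧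
      g * r * g⁻¹ = cs.simple (σ t) := by
  obtain ⟨w, ⟨t, ht, hw⟩ | ⟨T, hT, hw⟩⟩ := hσ.exists_conj_mem_of_isOfFinOrder Set.finite_univ
    (fun b _ ↦ Set.mem_univ (σ b)) (parabolic_univ (cs := cs) ▸ Subgroup.mem_top x)
    (orderOf_pos_iff.1 hx.pos)
  all_goals
    have hwW : w * x * w⁻¹ ∈ commutator W :=
      Subgroup.Normal.conj_mem inferInstance x (mem_commutator_of_odd cs hx) w
  · have hwx : w * x * w⁻¹ ∈ Subgroup.zpowers (cs.simple (σ t) * cs.simple t) :=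
      hσ.mem_zpowers_of_mem_commutator ht hw hwW
    obtain ⟨v, hvx, hvr⟩ := hσ.exists_conj_eq_simple_of_mem_parabolic_pair (r := w * r * w⁻¹) ht hwx
      (by rwa [Ne, conj_eq_one_iff]) (by rw [conj_mul, hr, mul_one, mul_inv_cancel])
      (by rw [conj_mul, conj_inv, conj_mul, hrx, conj_inv])
    refine ⟨t, v * w, ht, ?_, by simpa only [mul_inv_rev, mul_assoc] using hvr⟩
    have : v * w * x * (v * w)⁻¹ = w * x * w⁻¹ := by
      simpa only [mul_inv_rev, mul_assoc] using hvx
    rwa [this]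
  · exact absurd (conj_eq_one_iff.1
      (hσ.eq_one_of_mem_parabolic_of_mem_commutator T.toFinite hT hw hwW)) hx1

theorem eq_self_of_ord_eq_two (hσ : IsBaseMap cs σ) (ht : σ t ≠ t) (h : ord cs (σ t) b = 2) :
    σ b = b := by
  by_contra hb
  have hne : σ t ≠ b := fun e ↦ by rw [e, ord_self] at h; exact absurd h (by decide)
  by_cases hσbt : σ b = σ t
  · obtain rfl := hσ.injOn hb ht hσbt
    exact absurd (h ▸ hσ.odd_ord ht) (by decide)
  · rcases hσ.ord_eq hne ((hσ.map_map t).trans_ne hne) hσbt with h0 | ⟨-, -, h'⟩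
    · rw [h0] at h
      exact absurd h (by decide)
    · exact hb h'

theorem isFixedClique_insert (hσ : IsBaseMap cs σ) (ht : σ t ≠ t) :
    IsFixedClique cs σ (insert (σ t) {b | ord cs (σ t) b = 2}) where
  eq_self := by
    rintro b (rfl | hb)
    exacts [hσ.map_map t, hσ.eq_self_of_ord_eq_two ht hb]
  pairwise := by
    rintro b (rfl | hb) c (rfl | hc) hbc
    exacts [absurd rfl hbc, hc, (ord_comm _ _).trans hb, hσ.link ht hbc hb hc]

theorem mem_parabolic_sdiff_of_commute (hσ : IsBaseMap cs σ) (ht : σ t ≠ t)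
    (hcomm : Commute g (cs.simple (σ t))) : g ∈ cs.parabolic (Set.univ \ {t}) := by
  have hs1 : cs.simple (σ t) ≠ 1 := fun h ↦ hσ.simple_notMem_commutator (σ t) (h ▸ one_mem _)
  have hcap : Set.univ \ {t} ∩ {σ t, t} = {σ t} := by
    rw [Set.inter_comm, pair_inter_sdiff_singleton (Set.mem_univ _) ht]
  have hs : cs.simple (σ t) ∈ cs.parabolic (Set.univ \ {t} ∩ {σ t, t}) :=
    hcap ▸ simple_mem_parabolic rfl
  refine (hσ.isSplitting_pendant (fun b _ ↦ Set.mem_univ (σ b)) (Set.mem_univ t)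
    ht).symm.mem_of_conj_mem_inter ?_ hs hs1 ?_ ?_
  · rw [hcap]
    intro y hy x hx hx1 hyx
    obtain rfl := (eq_one_or_eq_of_mem_parabolic_singleton hx).resolve_left hx1
    exact hσ.mem_parabolic_singleton_of_commute ht hy <| mul_inv_eq_iff_eq_mul.1 <|
      (eq_one_or_eq_of_mem_parabolic_singleton hyx).resolve_left (by rwa [conj_eq_one_iff])
  · rw [Set.union_comm, pair_union_sdiff_singleton (Set.mem_univ _) (Set.mem_univ _),
      parabolic_univ]
    exact Subgroup.mem_top g
  · rwa [hcomm.eq, mul_inv_cancel_right]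

theorem insert_union_compl_pair (hσ : IsBaseMap cs σ) (ht : σ t ≠ t) :
    insert (σ t) {b | ord cs (σ t) b = 2} ∪ {σ t, t}ᶜ = Set.univ \ {t} :=
  union_compl_pair (Set.mem_insert _ _) fun h ↦ ht ((hσ.isFixedClique_insert ht).eq_self h)

theorem isSplitting_insert (hσ : IsBaseMap cs σ) (ht : σ t ≠ t) :
    IsSplitting cs (insert (σ t) {b | ord cs (σ t) b = 2}) {σ t, t}ᶜ := by
  refine hσ.isSplitting (hσ.insert_union_compl_pair ht)
    (hσ.sdiff_singleton_mapsTo (fun b _ ↦ Set.mem_univ (σ b)) ht) ?_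
  intro b hb hbY c hc hcX
  have hbt : b ≠ t := fun h ↦ ht (h ▸ (hσ.isFixedClique_insert ht).eq_self hb)
  obtain rfl : b = σ t := (Set.notMem_compl_iff.1 hbY).resolve_right hbt
  have hσc : σ c ≠ σ t := fun h ↦ by
    obtain hct | hct := eq_or_ne (σ c) c
    · exact hc (.inl (hct.symm.trans h))
    · exact hc (.inr (hσ.injOn hct ht h))
  have hσtc : σ t ≠ c := fun h ↦ hc (.inl h.symm)
  exact (hσ.ord_eq hσtc ((hσ.map_map t).trans_ne hσtc) hσc).resolve_right fun h ↦ hcX (.inr h.1)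

theorem mem_parabolic_insert_of_commute (hσ : IsBaseMap cs σ) (ht : σ t ≠ t)
    (hcomm : Commute g (cs.simple (σ t))) :
    g ∈ cs.parabolic (insert (σ t) {b | ord cs (σ t) b = 2}) := by
  have hs : cs.simple (σ t) ∈ cs.parabolic (insert (σ t) {b | ord cs (σ t) b = 2}) :=
    simple_mem_parabolic (Set.mem_insert _ _)
  obtain ⟨ε, hε, hε'⟩ := hσ.exists_sign (σ t)
  refine (hσ.isSplitting_insert ht).mem_of_conj_mem hs (fun a _ ha ↦ ?_) ?_ ?_
  · have hfix {b} (hb : b ∈ insert (σ t) {b | ord cs (σ t) b = 2} ∩ {σ t, t}ᶜ) : σ b ≠ σ t := by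
      rw [(hσ.isFixedClique_insert ht).eq_self hb.1]
      exact fun h ↦ hb.2 (.inl h)
    have h1 : ε (a * cs.simple (σ t) * a⁻¹) = 1 :=
      map_eq_one_of_mem_parabolic (fun b hb ↦ hε' b (hfix hb)) ha
    rw [map_mul, map_inv, map_mul, mul_inv_cancel_comm, hε (σ t) (hσ.map_map t)] at h1
    exact absurd h1 (by decide)
  · rw [hσ.insert_union_compl_pair ht]
    exact hσ.mem_parabolic_sdiff_of_commute ht hcomm
  · rwa [hcomm.eq, mul_inv_cancel_right]

theorem eq_one_of_commute_simple [Finite B] (hσ : IsBaseMap cs σ) (ht : σ t ≠ t)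
    (hcomm : Commute g (cs.simple (σ t))) (hg : g ∈ commutator W) : g = 1 :=
  hσ.eq_one_of_mem_parabolic_of_mem_commutator (Set.toFinite _) (hσ.isFixedClique_insert ht)
    (hσ.mem_parabolic_insert_of_commute ht hcomm) hg

theorem eq_one_of_commute [Finite B] (hσ : IsBaseMap cs σ) (hx : Odd (orderOf x)) (hx1 : x ≠ 1)
    (hr : r * r = 1) (hrx : r * x * r⁻¹ = x⁻¹) (hcomm : Commute g r) (hg : g ∈ commutator W) :
    g = 1 := by
  obtain ⟨t, w, ht, -, hw⟩ := hσ.exists_conj_eq_simple hx hx1 hr hrx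
  have hwg : Commute (w * g * w⁻¹) (cs.simple (σ t)) := hw ▸ (Commute.conj_iff w).2 hcomm
  exact conj_eq_one_iff.1 (hσ.eq_one_of_commute_simple ht hwg
    (Subgroup.Normal.conj_mem inferInstance g hg w))

/-- Conjugate bases are equal, because the sign characters separate them. Hence the inverted
elements can be conjugated, compatibly with `r`, into the same cyclic group of rotations. -/
theorem exists_commute_conj [Finite B] (hσ : IsBaseMap cs σ) (hx : Odd (orderOf x)) (hx1 : x ≠ 1)
    (hy : Odd (orderOf y)) (hy1 : y ≠ 1) (hr : r * r = 1) (hrx : r * x * r⁻¹ = x⁻¹)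
    (hry : r * y * r⁻¹ = y⁻¹) : ∃ c, Commute c r ∧ Commute (c * x * c⁻¹) y := by
  obtain ⟨t, g, ht, hgx, hgr⟩ := hσ.exists_conj_eq_simple hx hx1 hr hrx
  obtain ⟨u, h, hu, hhy, hhr⟩ := hσ.exists_conj_eq_simple hy hy1 hr hry
  obtain rfl : t = u := by
    obtain ⟨ε, hε, hε'⟩ := hσ.exists_sign (σ t)
    have map_r {w b} (hw : w * r * w⁻¹ = cs.simple b) : ε r = ε (cs.simple b) := by
      rw [← hw, map_mul, map_inv, map_mul, mul_inv_cancel_comm]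
    refine hσ.injOn ht hu (by_contra fun hne ↦ ?_)
    have h1 : ε r = 1 :=
      (map_r hhr).trans (hε' (σ u) ((hσ.map_map u).trans_ne (Ne.symm hne)))
    exact absurd (h1.symm.trans ((map_r hgr).trans (hε (σ t) (hσ.map_map t)))) (by decide)
  have hg : SemiconjBy g r (cs.simple (σ t)) := mul_inv_eq_iff_eq_mul.1 hgr
  have hh : SemiconjBy h r (cs.simple (σ t)) := mul_inv_eq_iff_eq_mul.1 hhr
  refine ⟨h⁻¹ * g, hh.inv_symm_left.mul_left hg, (Commute.conj_iff h).1 ?_⟩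
  have hgx' : h * (h⁻¹ * g * x * (h⁻¹ * g)⁻¹) * h⁻¹ = g * x * g⁻¹ := by group
  rw [hgx']
  exact commute_of_mem_zpowers hgx hhy

end IsBaseMap

/-! ### Base maps from conditions on maximal spherical subsets -/

theorem isSpherical_pair (h : ord cs b c ≠ 0) : cs.IsSpherical {b, c} := by
  have hfin : (Subgroup.zpowers (cs.simple b * cs.simple c) : Set W).Finite :=
    finite_zpowers.2 (orderOf_ne_zero_iff.1 h)
  refine ((hfin.union (hfin.image (· * cs.simple b))).subset fun g hg ↦ ?_).to_subtype
  obtain ⟨z, hz, rfl | rfl⟩ := exists_mem_zpowers_eq_or_eq_mul hg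
  exacts [.inl hz, .inr ⟨z, hz, rfl⟩]

theorem ord_ne_zero_of_isSpherical (hU : cs.IsSpherical U) (hb : b ∈ U) (hc : c ∈ U) :
    ord cs b c ≠ 0 := by
  have : Finite (cs.parabolic U) := hU
  have hmem : cs.simple b * cs.simple c ∈ cs.parabolic U :=
    mul_mem (simple_mem_parabolic hb) (simple_mem_parabolic hc)
  rw [ord, ← Subgroup.orderOf_mk _ hmem]
  exact (orderOf_pos _).ne'

theorem exists_isMaxSpherical [Finite B] (h : ord cs b c ≠ 0) :
    ∃ T, cs.IsMaxSpherical T ∧ b ∈ T ∧ c ∈ T := by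
  obtain ⟨T, hle, hT⟩ := (Set.toFinite {T : Set B | cs.IsSpherical T}).exists_le_maximal
    (isSpherical_pair h)
  exact ⟨T, ⟨hT.1, fun U hU hTU ↦ (hT.2 hU hTU).antisymm hTU⟩, hle (.inl rfl), hle (.inr rfl)⟩

/-- Both edges extend to maximal spherical subsets; these meet `{s, t}` and differ from it, so they
coincide. -/
theorem exists_isMaxSpherical_of_ncard_le_two [Finite B] {s t u v : B}
    (hst : cs.IsMaxSpherical {s, t})
    (hcard : {T : Set B | cs.IsMaxSpherical T ∧ (T ∩ {s, t}).Nonempty}.ncard ≤ 2)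
    (hb : b ∈ ({s, t} : Set B)) (hu : u ∉ ({s, t} : Set B)) (hbu : ord cs b u ≠ 0)
    (hc : c ∈ ({s, t} : Set B)) (hv : v ∉ ({s, t} : Set B)) (hcv : ord cs c v ≠ 0) :
    ∃ T, cs.IsMaxSpherical T ∧ b ∈ T ∧ u ∈ T ∧ c ∈ T ∧ v ∈ T := by
  obtain ⟨T, hT, hbT, huT⟩ := exists_isMaxSpherical hbu
  obtain ⟨T', hT', hcT, hvT⟩ := exists_isMaxSpherical hcv
  obtain rfl : T = T' := by
    by_contra hne
    refine hcard.not_gt <| (Set.two_lt_ncard_iff (Set.toFinite _)).2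
      ⟨T, T', {s, t}, ⟨hT, b, hbT, hb⟩, ⟨hT', c, hcT, hc⟩, ⟨hst, s, .inl rfl, .inl rfl⟩, hne,
        ?_, ?_⟩
    exacts [ne_of_mem_of_not_mem' huT hu, ne_of_mem_of_not_mem' hvT hv]
  exact ⟨T, hT, hbT, huT, hcT, hvT⟩

variable (cs) in
/-- The generator `t` is joined to `s` by an odd exponent and to no other generator by a finite
one. -/
structure IsPendant (t s : B) : Prop where
  ne : t ≠ s
  odd : Odd (ord cs t s)
  ord_eq_zero {u : B} : u ≠ t → u ≠ s → ord cs t u = 0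

theorem IsPendant.eq_of_odd {t s u : B} (h : IsPendant cs t s) (hu : t ≠ u)
    (hodd : Odd (ord cs t u)) : u = s := by
  by_contra hus
  rw [h.ord_eq_zero hu.symm hus] at hodd
  exact absurd hodd (by decide)

theorem isPendant_or_isPendant [Finite B] (hbc : b ≠ c) (hodd : Odd (ord cs b c))
    (hmax : cs.IsMaxSpherical {b, c})
    (hcard : {T : Set B | cs.IsMaxSpherical T ∧ (T ∩ {b, c}).Nonempty}.ncard ≤ 2) :
    IsPendant cs b c ∨ IsPendant cs c b := by
  by_contra! h
  obtain ⟨u, hub, huc, hu⟩ : ∃ u, u ≠ b ∧ u ≠ c ∧ ord cs b u ≠ 0 := by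
    by_contra! h0
    exact h.1 ⟨hbc, hodd, @h0⟩
  obtain ⟨v, hvc, hvb, hv⟩ : ∃ v, v ≠ c ∧ v ≠ b ∧ ord cs c v ≠ 0 := by
    by_contra! h0
    exact h.2 ⟨hbc.symm, ord_comm (cs := cs) b c ▸ hodd, @h0⟩
  have hu' : u ∉ ({b, c} : Set B) := not_or_intro hub huc
  obtain ⟨T, hT, hbT, huT, hcT, -⟩ := exists_isMaxSpherical_of_ncard_le_two hmax hcard
    (.inl rfl) hu' hu (.inr rfl) (not_or_intro hvb hvc) hv
  exact hu' (hmax.2 T hT.1 (Set.pair_subset hbT hcT) ▸ huT)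

variable (cs) in
/-- The generator `t` is the end of its odd edge `{t, s}` that a base map sends to the other one. If
both ends are pendant, a well-order decides between them. -/
def IsPreferredPendant (t s : B) : Prop :=
  IsPendant cs t s ∧ (IsPendant cs s t → WellOrderingRel t s)

theorem isPreferredPendant_or (hbc : b ≠ c) (h : IsPendant cs b c ∨ IsPendant cs c b) :
    IsPreferredPendant cs b c ∨ IsPreferredPendant cs c b := by
  have htri := (trichotomous_of WellOrderingRel b c).imp_right (·.resolve_left hbc)
  unfold IsPreferredPendant
  tauto

theorem IsPreferredPendant.not_isPreferredPendant {t s u : B} (h : IsPreferredPendant cs t s) :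
    ¬ IsPreferredPendant cs s u := fun h' ↦ by
  obtain rfl : t = u := h'.1.eq_of_odd h.1.ne.symm (ord_comm (cs := cs) t s ▸ h.1.odd)
  exact asymm_of WellOrderingRel (h.2 h'.1) (h'.2 h.1)

theorem exists_map_of_unique {P : B → B → Prop} (hP : ∀ b c d, P b c → P b d → c = d) :
    ∃ σ : B → B, (∀ b c, P b c → σ b = c) ∧ ∀ b, σ b ≠ b → P b (σ b) := by
  classical
  refine ⟨fun b ↦ if h : ∃ c, P b c then h.choose else b, fun b c hbc ↦ ?_, fun b hb ↦ ?_⟩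
  · have h : ∃ c, P b c := ⟨c, hbc⟩
    exact (dif_pos h).trans (hP b _ _ h.choose_spec hbc)
  · dsimp only at hb ⊢
    split_ifs at hb ⊢ with h
    exacts [h.choose_spec, absurd rfl hb]

theorem ord_eq_two_of_link [Finite B]
    (h0 : ∀ b c, ord cs b c ≠ 0 → Even (ord cs b c) → ord cs b c = 2)
    (h1 : ∀ b c, b ≠ c → Odd (ord cs b c) → cs.IsMaxSpherical {b, c})
    (h3 : ∀ b c, b ≠ c → Odd (ord cs b c) →
      {T : Set B | cs.IsMaxSpherical T ∧ (T ∩ {b, c}).Nonempty}.ncard ≤ 2)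
    {s t u v : B} (hst : s ≠ t) (hodd : Odd (ord cs s t)) (huv : u ≠ v)
    (hu : ord cs s u = 2) (hv : ord cs s v = 2) : ord cs u v = 2 := by
  have notMem {a} (ha : ord cs s a = 2) : a ∉ ({s, t} : Set B) := by
    rintro (rfl | rfl)
    · exact absurd (ord_self (cs := cs) a ▸ ha) (by decide)
    · exact absurd (ha ▸ hodd) (by decide)
  obtain ⟨T, hT, hsT, huT, -, hvT⟩ := exists_isMaxSpherical_of_ncard_le_two (h1 s t hst hodd)
    (h3 s t hst hodd) (.inl rfl) (notMem hu) (by simp [hu]) (.inl rfl) (notMem hv) (by simp [hv])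
  rcases Nat.even_or_odd (ord cs u v) with heven | hodd'
  · exact h0 u v (ord_ne_zero_of_isSpherical hT.1 huT hvT) heven
  · have hTuv : T = {u, v} := (h1 u v huv hodd').2 T hT.1 (Set.pair_subset huT hvT)
    rcases hTuv ▸ hsT with rfl | rfl
    exacts [absurd (.inl rfl) (notMem hu), absurd (.inl rfl) (notMem hv)]

theorem exists_isBaseMap [Finite B]
    (h0 : ∀ b c, ord cs b c ≠ 0 → Even (ord cs b c) → ord cs b c = 2)
    (h1 : ∀ b c, b ≠ c → Odd (ord cs b c) → cs.IsMaxSpherical {b, c})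
    (h2 : ¬ ∃ b c d, b ≠ c ∧ c ≠ d ∧ b ≠ d ∧ Odd (ord cs b c) ∧ Odd (ord cs c d))
    (h3 : ∀ b c, b ≠ c → Odd (ord cs b c) →
      {T : Set B | cs.IsMaxSpherical T ∧ (T ∩ {b, c}).Nonempty}.ncard ≤ 2) :
    ∃ σ, IsBaseMap cs σ := by
  obtain ⟨σ, map_eq, pref⟩ := exists_map_of_unique (P := IsPreferredPendant cs)
    fun _ _ _ hc hd ↦ hd.1.eq_of_odd hc.1.ne hc.1.odd
  have odd_ord {t} (ht : σ t ≠ t) : Odd (ord cs (σ t) t) :=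
    ord_comm (cs := cs) t (σ t) ▸ (pref t ht).1.odd
  refine ⟨σ, ?map_map, odd_ord, ?ord_eq, ?injOn, ?link⟩
  case map_map =>
    intro b
    by_contra hb
    have hb' : σ b ≠ b := fun h ↦ hb (by rw [h, h])
    exact (pref b hb').not_isPreferredPendant (pref (σ b) hb)
  case ord_eq =>
    intro b c hbc hσb hσc
    rcases Nat.even_or_odd (ord cs b c) with heven | hodd
    · refine or_iff_not_imp_left.2 fun hne ↦ ⟨h0 b c hne heven, ?_, ?_⟩ <;> by_contra h
      · exact hne ((pref b h).1.ord_eq_zero hbc.symm hσb.symm)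
      · exact hne ((ord_comm b c).trans ((pref c h).1.ord_eq_zero hbc hσc.symm))
    · rcases isPreferredPendant_or hbc
        (isPendant_or_isPendant hbc hodd (h1 b c hbc hodd) (h3 b c hbc hodd)) with h | h
      exacts [absurd (map_eq b c h) hσb, absurd (map_eq c b h) hσc]
  case injOn =>
    intro t ht u hu htu
    by_contra hne
    exact h2 ⟨t, σ t, u, Ne.symm ht, htu ▸ hu, hne, (pref t ht).1.odd, htu ▸ odd_ord hu⟩
  case link =>
    intro t u v ht huv hu hv
    exact ord_eq_two_of_link h0 h1 h3 ht (odd_ord ht) huv hu hv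

end Coxeter

/-! ### The reflection representation -/

section Reflection

open Polynomial.Chebyshev Real

theorem eval_S_eq_zero {n : ℤ} {θ : ℝ} (hθ : sin θ ≠ 0) (h : (n + 1) * θ = π) :
    (S ℝ n).eval (2 * cos θ) = 0 := by
  have hS := S_two_mul_real_cos θ n
  rw [h, sin_pi] at hS
  exact (mul_eq_zero.1 hS).resolve_right hθ

theorem eval_S_add_eval_S_sub_one_eq_zero {n : ℤ} {θ : ℝ} (hθ : sin θ ≠ 0)
    (h : (2 * n + 1) * θ = 2 * π) :
    (S ℝ n).eval (2 * cos θ) + (S ℝ (n - 1)).eval (2 * cos θ) = 0 := by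
  have hn : ((n - 1 : ℤ) + 1) * θ = 2 * π - (n + 1) * θ := by
    push_cast
    linear_combination h
  have hsin : sin ((n + 1) * θ) + sin (((n - 1 : ℤ) + 1) * θ) = 0 := by
    rw [hn, sin_two_pi_sub, add_neg_cancel]
  rw [← S_two_mul_real_cos, ← S_two_mul_real_cos, ← add_mul] at hsin
  exact (mul_eq_zero.1 hsin).resolve_right hθ

section Module

variable {V : Type*} [AddCommGroup V] [Module ℝ V] {x y : V} {f g : Module.Dual ℝ V} {m : ℕ}

theorem reflection_mul_reflection_pow_eq_one (hf : f x = 2) (hg : g y = 2) (hm : 3 ≤ m)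
    (h : f y * g x = 4 * cos (π / m) ^ 2) :
    (Module.reflection hf * Module.reflection hg) ^ m = 1 := by
  set θ : ℝ := 2 * (π / m) with hθ
  have hm3 : (3 : ℝ) ≤ m := by exact_mod_cast hm
  have hmθ : m * θ = 2 * π := by rw [hθ]; field_simp
  have hsin : sin θ ≠ 0 := (sin_pos_of_pos_of_lt_pi (by positivity) (by nlinarith [pi_pos])).ne'
  have ht : 2 * cos θ = f y * g x - 2 := by rw [h, hθ, cos_two_mul]; ring
  ext z
  rw [Module.reflection_mul_reflection_pow_apply hf hg m z _ ht]
  obtain ⟨k, rfl | rfl⟩ := Nat.even_or_odd' m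
  · have hk : (S ℝ (k - 1)).eval (2 * cos θ) = 0 :=
      eval_S_eq_zero hsin (by push_cast at hmθ ⊢; linarith)
    have h₁ : ((2 * k : ℕ) - 1 : ℤ) / 2 = k - 1 := by lia
    have h₂ : ((2 * k : ℕ) - 2 : ℤ) / 2 = k - 1 := by lia
    simp only [h₁, h₂, hk, zero_mul, zero_smul, add_zero, LinearEquiv.coe_one, id]
  · have hk : (S ℝ k).eval (2 * cos θ) + (S ℝ (k - 1)).eval (2 * cos θ) = 0 :=
      eval_S_add_eval_S_sub_one_eq_zero hsin (by push_cast at hmθ ⊢; exact hmθ)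
    have h₀ : ((2 * k + 1 : ℕ) : ℤ) / 2 = k := by lia
    have h₁ : ((2 * k + 1 : ℕ) - 1 : ℤ) / 2 = k := by lia
    have h₂ : ((2 * k + 1 : ℕ) - 2 : ℤ) / 2 = k - 1 := by lia
    have h₃ : ((2 * k + 1 : ℕ) - 3 : ℤ) / 2 = k - 1 := by lia
    simp only [h₀, h₁, h₂, h₃, hk, mul_zero, zero_smul, add_zero, LinearEquiv.coe_one, id]

theorem reflection_mul_reflection_sq_eq_one (hf : f x = 2) (hg : g y = 2) (hfy : f y = 0)
    (hgx : g x = 0) : (Module.reflection hf * Module.reflection hg) ^ 2 = 1 := by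
  ext z
  simp only [sq, LinearEquiv.mul_apply, Module.reflection_apply, map_sub, map_smul, hf, hg, hfy,
    hgx, LinearEquiv.coe_one, id]
  module

end Module

variable {B W : Type*} [Group W] {M : CoxeterMatrix B} {b c : B}

variable (M b c) in
/-- The exponent `M b c`, with `∞`, encoded as `0`, replaced by `3`: a reflection representation of
the quotient in which these relations are added suffices here, and it keeps all off-diagonal
entries of `cartan` strictly between `-2` and `2`. -/
def finiteExponent : ℕ :=
  if M b c = 0 then 3 else M b c

theorem finiteExponent_comm : finiteExponent M b c = finiteExponent M c b := by
  rw [finiteExponent, finiteExponent, M.symmetric b c]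

theorem two_le_finiteExponent (hbc : b ≠ c) : 2 ≤ finiteExponent M b c := by
  have := M.off_diagonal b c hbc
  rw [finiteExponent]
  split_ifs <;> lia

theorem finiteExponent_eq_two_iff : finiteExponent M b c = 2 ↔ M b c = 2 := by
  rw [finiteExponent]
  split_ifs <;> lia

variable (M b c) in
/-- The pairing of simple roots in the reflection representation. -/
noncomputable def cartan : ℝ :=
  -2 * cos (π / finiteExponent M b c)

theorem cartan_self : cartan M b b = 2 := by
  simp [cartan, finiteExponent]

theorem cartan_comm : cartan M b c = cartan M c b := by
  rw [cartan, cartan, finiteExponent_comm]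

theorem cartan_eq_zero (h : finiteExponent M b c = 2) : cartan M b c = 0 := by
  simp [cartan, h]

theorem cartan_ne_zero (hbc : b ≠ c) (h : M b c ≠ 2) : cartan M b c ≠ 0 := by
  have hm : 2 < finiteExponent M b c :=
    (two_le_finiteExponent hbc).lt_of_ne' (mt finiteExponent_eq_two_iff.1 h)
  have hm' : (2 : ℝ) < finiteExponent M b c := by exact_mod_cast hm
  refine mul_ne_zero (by norm_num) (cos_pos_of_mem_Ioo ⟨?_, ?_⟩).ne'
  · exact (neg_lt_zero.2 pi_div_two_pos).trans (by positivity)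
  · exact div_lt_div_of_pos_left pi_pos two_pos hm'

theorem cartan_mul_self_lt_four (hbc : b ≠ c) : cartan M b c * cartan M b c < 4 := by
  have hm : (1 : ℝ) < finiteExponent M b c := by exact_mod_cast two_le_finiteExponent hbc
  have hsin : 0 < sin (π / finiteExponent M b c) :=
    sin_pos_of_pos_of_lt_pi (by positivity) (div_lt_self pi_pos hm)
  rw [cartan]
  nlinarith [sin_sq_add_cos_sq (π / finiteExponent M b c)]

variable (M b) in
/-- The reflection in the simple root `cartan M b`, acting on the space of functions on `B`. -/
noncomputable def simpleReflection : (B → ℝ) ≃ₗ[ℝ] (B → ℝ) :=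
  Module.reflection (x := cartan M b) (f := LinearMap.proj b) cartan_self

theorem simpleReflection_apply (p : B → ℝ) :
    simpleReflection M b p = p - p b • cartan M b :=
  Module.reflection_apply ..

variable (M) in
theorem isLiftable_simpleReflection : M.IsLiftable (simpleReflection M) := by
  intro b c
  obtain h0 | h0 := eq_or_ne (M b c) 0
  · rw [h0, pow_zero]
  obtain rfl | hbc := eq_or_ne b c
  · rw [M.diagonal, pow_one]
    exact mul_eq_one_iff_eq_inv.2 (Module.reflection_inv _).symm
  have hm : M b c = finiteExponent M b c := (if_neg h0).symm
  obtain h2 | h3 := (two_le_finiteExponent (M := M) hbc).eq_or_lt'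
  · rw [hm, h2]
    exact reflection_mul_reflection_sq_eq_one _ _ (cartan_eq_zero (finiteExponent_comm.trans h2))
      (cartan_eq_zero h2)
  · rw [hm]
    refine reflection_mul_reflection_pow_eq_one _ _ h3 ?_
    change cartan M c b * cartan M b c = _
    rw [cartan_comm, cartan]
    ring

theorem exists_reflectionRepresentation (cs : CoxeterSystem M W) :
    ∃ ρ : W →* ((B → ℝ) ≃ₗ[ℝ] (B → ℝ)), ∀ b p, ρ (cs.simple b) p = p - p b • cartan M b :=
  ⟨cs.lift ⟨_, isLiftable_simpleReflection M⟩, fun b p ↦ by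
    rw [cs.lift_apply_simple, simpleReflection_apply]⟩

theorem simple_injective (cs : CoxeterSystem M W) : Function.Injective cs.simple := by
  classical
  obtain ⟨ρ, hρ⟩ := exists_reflectionRepresentation cs
  intro b c h
  by_contra hbc
  have hp := hρ b (Pi.single c 1)
  rw [h, hρ] at hp
  simpa [cartan_self, hbc] using congrFun hp c

theorem not_commute_simple_mul_simple {cs : CoxeterSystem M W} {s t u : B}
    (hst : s ≠ t) (htu : t ≠ u) (hsu : s ≠ u) (hM : M t u ≠ 2) :
    ¬ Commute (cs.simple s * cs.simple t) (cs.simple t * cs.simple u) := by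
  classical
  intro h
  have hstu : cs.simple s * cs.simple u * cs.simple t =
      cs.simple t * cs.simple u * cs.simple s := by
    simpa [mul_assoc] using congrArg (· * cs.simple t) h.eq
  obtain ⟨ρ, hρ⟩ := exists_reflectionRepresentation cs
  -- Evaluating `hstu` at the basis vector of `t` forces the roots of `s` and `u` to pair to `±2`.
  have hp := congrArg (fun g ↦ ρ g (Pi.single t 1)) hstu
  simp only [map_mul, LinearEquiv.mul_apply, hρ] at hp
  have hs := congrFun hp s
  have hu := congrFun hp u
  simp only [Pi.single_eq_same, one_smul, Pi.sub_apply, Pi.smul_apply, Pi.zero_apply, smul_eq_mul,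
    Pi.single_eq_of_ne htu.symm, Pi.single_eq_of_ne hst, cartan_self, cartan_comm (b := s) (c := u),
    zero_smul, sub_zero, zero_sub] at hs hu
  have h4 : cartan M u s * cartan M u s = 4 := by
    apply mul_left_cancel₀ (cartan_ne_zero htu hM)
    linear_combination cartan M u s * hs - 2 * hu
  exact (cartan_mul_self_lt_four hsu.symm).ne h4

end Reflection

/-! ### Transfer to another Coxeter system -/

section Transfer

variable {B W : Type*} [Group W] {M : CoxeterMatrix B} {cs : CoxeterSystem M W}
  {s t u : B}

theorem IsBaseMap.map {G : Type*} [Group G] {σ : B → B} (hσ : IsBaseMap cs σ) (φ : W ≃* G) :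
    IsBaseMap (cs.map φ) σ := by
  have hord : ord (cs.map φ) = ord cs := by
    funext b c
    rw [ord, cs.map_simple, cs.map_simple, ← map_mul, MulEquiv.orderOf_eq, ord]
  exact ⟨hσ.map_map, hord ▸ hσ.odd_ord, hord ▸ hσ.ord_eq, hσ.injOn, hord ▸ hσ.link⟩

theorem simple_mul_simple_ne_one (cs : CoxeterSystem M W) (hst : s ≠ t) :
    cs.simple s * cs.simple t ≠ 1 := fun h ↦
  hst <| simple_injective cs <| (eq_inv_of_mul_eq_one_left h).trans (cs.inv_simple t)

theorem ne_two_of_odd_ord (hst : s ≠ t) (hodd : Odd (ord cs s t)) : M s t ≠ 2 := fun h ↦ by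
  have hdvd : ord cs s t ∣ 2 := h ▸ orderOf_dvd_of_pow_eq_one (cs.simple_mul_simple_pow s t)
  obtain h1 | h2 := (Nat.dvd_prime Nat.prime_two).1 hdvd
  · exact simple_mul_simple_ne_one cs hst (orderOf_eq_one_iff.1 h1)
  · exact absurd (h2 ▸ hodd) (by decide)

theorem isRetraction_id {U : Set B} (hU : ∀ b ∈ U, ∀ c, Odd (ord cs b c) → c ∈ U) :
    IsRetraction cs U id where
  eq_self _ := rfl
  dvd _ _ := dvd_rfl
  even hb hc := Nat.not_odd_iff_even.1 fun hodd ↦ hc (hU _ hb _ hodd)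

variable (cs) in
/-- The connected component of `t` in the graph of odd exponents. -/
def oddComponent (t : B) : Set B :=
  {b | Relation.ReflTransGen (fun b c ↦ Odd (ord cs b c)) t b}

theorem simple_mul_simple_mem_commutator {b : B} (hb : b ∈ oddComponent cs t) :
    cs.simple t * cs.simple b ∈ commutator W := by
  induction hb with
  | refl => exact (cs.simple_mul_simple_self t) ▸ one_mem _
  | @tail b c _ hbc ih =>
    simpa [mul_assoc] using mul_mem ih (mem_commutator_of_odd cs hbc)

theorem exists_retraction_oddComponent (cs : CoxeterSystem M W) (t : B) :
    ∃ F : W →* W, (∀ b ∈ oddComponent cs t, F (cs.simple b) = cs.simple b) ∧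
      ∀ w, F w ∈ commutator W ∨ cs.simple t * F w ∈ commutator W := by
  obtain ⟨F, hF, hF'⟩ := (isRetraction_id (cs := cs) (U := oddComponent cs t)
    fun _ hb _ hbc ↦ hb.tail hbc).exists_hom cs.simple fun b _ c _ ↦ simple_mul_pow_ord b c
  refine ⟨F, hF, fun w ↦ ?_⟩
  induction w using cs.simple_induction_left with
  | one =>
    rw [map_one]
    exact .inl (one_mem _)
  | mul_simple_left w b ih =>
    rw [map_mul]
    obtain hb | ⟨c, hc, hb⟩ := hF' b
    · rwa [hb, one_mul]
    have htc := simple_mul_simple_mem_commutator hc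
    obtain hw | hw := ih
    · right
      rw [hb, ← mul_assoc]
      exact mul_mem htc hw
    · left
      simpa [hb, mul_assoc] using mul_mem (inv_mem htc) hw

theorem not_odd_path [Finite B] {B' : Type*} {M' : CoxeterMatrix B'} {σ : B → B}
    (hσ : IsBaseMap cs σ) (cs' : CoxeterSystem M' W) {s t u : B'} (hst : s ≠ t) (htu : t ≠ u)
    (hsu : s ≠ u) (hodd_st : Odd (ord cs' s t)) : ¬ Odd (ord cs' t u) := by
  intro hodd_tu
  set r := cs'.simple t with hr_def
  set x := cs'.simple s * r with hx_def
  set y := r * cs'.simple u with hy_def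
  have hr : r * r = 1 := cs'.simple_mul_simple_self t
  have hrx : r * x * r⁻¹ = x⁻¹ := by simp [hr_def, hx_def, mul_assoc]
  have hry : r * y * r⁻¹ = y⁻¹ := by simp [hr_def, hy_def]
  have hx1 : x ≠ 1 := simple_mul_simple_ne_one cs' hst
  have hxy : ¬ Commute x y :=
    not_commute_simple_mul_simple hst htu hsu (ne_two_of_odd_ord htu hodd_tu)
  obtain ⟨c, hcr, hc⟩ := hσ.exists_commute_conj hodd_st hx1 hodd_tu
    (simple_mul_simple_ne_one cs' htu) hr hrx hry
  obtain ⟨F, hF, hFc⟩ := exists_retraction_oddComponent cs' t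
  have hFs : F (cs'.simple s) = cs'.simple s := hF s (.single (ord_comm (cs := cs') s t ▸ hodd_st))
  have hFr : F r = r := hF t .refl
  have hFu : F (cs'.simple u) = cs'.simple u := hF u (.single hodd_tu)
  have hFx : F x = x := by rw [hx_def, map_mul, hFs, hFr]
  have hFy : F y = y := by rw [hy_def, map_mul, hFr, hFu]
  have hcr' : Commute (F c) r := hFr ▸ hcr.map F
  have hc' : Commute (F c * x * (F c)⁻¹) y := by
    have hFc := hc.map F
    rwa [map_mul, map_mul, map_inv, hFx, hFy] at hFc
  obtain hd | hd := hFc c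
  · have hd1 : F c = 1 := hσ.eq_one_of_commute hodd_st hx1 hr hrx hcr' hd
    rw [hd1, one_mul, inv_one, mul_one] at hc'
    exact hxy hc'
  · have hd1 : r * F c = 1 :=
      hσ.eq_one_of_commute hodd_st hx1 hr hrx ((Commute.refl r).mul_left hcr') hd
    have hd2 : F c = r := (eq_inv_of_mul_eq_one_right hd1).trans (cs'.inv_simple t)
    rw [hd2, hrx, Commute.inv_left_iff] at hc'
    exact hxy hc'

end Transfer

end ConditionTwo

/-- Conditions (0)–(3) on `(W,S)` transfer through an isomorphism `φ : W → W'`: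
the target system satisfies (2'): there is no three-element subset `{s',t',u'} ⊆ S'`
with `m'(s',t')` and `m'(t',u')` both odd. -/
theorem condition_two_transfers {B B' : Type*} [Fintype B] [Fintype B']
    {W W' : Type*} [Group W] [Group W']
    {M : CoxeterMatrix B} (cs : CoxeterSystem M W)
    {M' : CoxeterMatrix B'} (cs' : CoxeterSystem M' W')
    (h0 : ∀ i j : B, orderOf (cs.simple i * cs.simple j) ≠ 0 →
      Even (orderOf (cs.simple i * cs.simple j)) → orderOf (cs.simple i * cs.simple j) = 2)
    (h1 : ∀ i j : B, i ≠ j → Odd (orderOf (cs.simple i * cs.simple j)) →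
      cs.IsMaxSpherical {i, j})
    (h2 : ¬ ∃ i j k : B, i ≠ j ∧ j ≠ k ∧ i ≠ k ∧
      Odd (orderOf (cs.simple i * cs.simple j)) ∧ Odd (orderOf (cs.simple j * cs.simple k)))
    (h3 : ∀ i j : B, i ≠ j → Odd (orderOf (cs.simple i * cs.simple j)) →
      {T : Set B | cs.IsMaxSpherical T ∧ (T ∩ {i, j}).Nonempty}.ncard ≤ 2)
    (φ : W ≃* W') :
    ¬ ∃ i' j' k' : B', i' ≠ j' ∧ j' ≠ k' ∧ i' ≠ k' ∧
      Odd (orderOf (cs'.simple i' * cs'.simple j')) ∧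
      Odd (orderOf (cs'.simple j' * cs'.simple k')) := by
  rintro ⟨s, t, u, hst, htu, hsu, hodd_st, hodd_tu⟩
  obtain ⟨σ, hσ⟩ := ConditionTwo.exists_isBaseMap h0 h1 h2 h3
  exact ConditionTwo.not_odd_path (hσ.map φ) cs' hst htu hsu hodd_st hodd_tu
end
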